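/- Let n be a natural number and p a prime with p ≥ n. Then there exists a one-to-one correspondence (a bijection) between the set of isomorphism classes of groups P of order p^n in which the derived subgroup has exponent dividing p (i.e. ⁅x,y⁆^p = 1 for all x, y ∈ P), and the set of isomorphism classes of nilpotent Lie algebras L over the ring R_n = (ℤ/pℤ)[X]/(X^n) whose underlying set has exactly p^n elements and which satisfy T•⁅a,b⁆ = 0 for all a, b ∈ L, where T denotes the image of X in R_n. Equivalently, the (finite) cardinalities of these two sets of isomorphism classes are equal. -/

import Mathlib

open Polynomial

/-- The ring `R_n = (ℤ/pℤ)[X]/(Xⁿ)`. -/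
noncomputable abbrev Rn (p n : ℕ) : Type :=
  Polynomial (ZMod p) ⧸ Ideal.span {(X : Polynomial (ZMod p)) ^ n}

/-- `T`, the image of `X` in `R_n`. -/
noncomputable def Tn (p n : ℕ) : Rn p n := Ideal.Quotient.mk _ X

open scoped commutatorElement in
/-- Bundled groups `P` of order `p ^ n` in which `⁅x, y⁆ ^ p = 1` for all `x, y`,
i.e. the derived subgroup has exponent dividing `p`. -/
def GoodGroup (p n : ℕ) : Type 1 :=
  { q : Σ G : Type, Group G //
      letI := q.2
      Nat.card q.1 = p ^ n ∧ ∀ x y : q.1, ⁅x, y⁆ ^ p = 1 }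

/-- Group isomorphism between two bundled groups. -/
def groupIsoRel (p n : ℕ) (q₁ q₂ : GoodGroup p n) : Prop :=
  letI := q₁.1.2; letI := q₂.1.2
  Nonempty (q₁.1.1 ≃* q₂.1.1)

/-- Bundled nilpotent Lie algebras `L` over `R_n` with exactly `p ^ n` elements in which
`T • ⁅a, b⁆ = 0` for all `a, b`. -/
def GoodLie (p n : ℕ) : Type 1 :=
  { q : Σ (L : Type) (lr : LieRing L), @LieAlgebra (Rn p n) L _ lr //
      letI := q.2.1; letI := q.2.2
      Nat.card q.1 = p ^ n ∧ LieRing.IsNilpotent q.1 ∧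
        ∀ a b : q.1, Tn p n • ⁅a, b⁆ = 0 }

/-- `R_n`-linear Lie algebra isomorphism between two bundled Lie algebras. -/
def lieIsoRel (p n : ℕ) (q₁ q₂ : GoodLie p n) : Prop :=
  letI := q₁.1.2.1; letI := q₁.1.2.2; letI := q₂.1.2.1; letI := q₂.1.2.2
  Nonempty (q₁.1.1 ≃ₗ⁅Rn p n⁆ q₂.1.1)


namespace Laz

open Finset

/-- inverse factorials -/
noncomputable def ci (k : Type*) [CommRing k] (i : ℕ) : k := Ring.inverse ((i.factorial : ℕ) : k)

def UnitsLt (k : Type*) [CommRing k] (p : ℕ) : Prop := ∀ m : ℕ, 0 < m → m < p → IsUnit (m : k)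

section coeffs
variable {k : Type*} [CommRing k] {p : ℕ}

lemma UnitsLt.fact (hk : UnitsLt k p) {i : ℕ} (hi : i < p) : IsUnit ((i.factorial : ℕ) : k) := by
  induction i with
  | zero => simp
  | succ i ih =>
    rw [Nat.factorial_succ, Nat.cast_mul]
    exact (hk _ (Nat.succ_pos _) hi).mul (ih (by omega))

lemma fact_mul_ci (hk : UnitsLt k p) {i : ℕ} (hi : i < p) :
    ((i.factorial : ℕ) : k) * ci k i = 1 := Ring.mul_inverse_cancel _ (hk.fact hi)

@[simp] lemma ci_zero : ci k 0 = 1 := by simp [ci]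
@[simp] lemma ci_one : ci k 1 = 1 := by simp [ci]

lemma ci_succ (hk : UnitsLt k p) {i : ℕ} (hi : i + 1 < p) :
    ((i : k) + 1) * ci k (i + 1) = ci k i := by
  have h1 := fact_mul_ci hk hi
  have h2 := fact_mul_ci hk (show i < p by omega)
  rw [Nat.factorial_succ] at h1
  push_cast at h1
  calc ((i : k) + 1) * ci k (i + 1) = ((i.factorial : k) * ci k i) * (((i : k) + 1) * ci k (i + 1)) := by
        rw [h2, one_mul]
    _ = ci k i * (((i : k) + 1) * (i.factorial : k) * ci k (i + 1)) := by ring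
    _ = ci k i := by rw [h1, mul_one]

lemma ci_mul_ci (hk : UnitsLt k p) {i j n : ℕ} (hij : i + j = n) (hn : n < p) :
    ci k i * ci k j = ci k n * (n.choose i : k) := by
  have h1 := fact_mul_ci hk (show i < p by omega)
  have h2 := fact_mul_ci hk (show j < p by omega)
  have h3 := fact_mul_ci hk hn
  have h4 : ((n.choose i : ℕ) : k) * (i.factorial : k) * (j.factorial : k) = (n.factorial : k) := by
    have := Nat.choose_mul_factorial_mul_factorial (show i ≤ n by omega)
    rw [show n - i = j by omega] at this
    exact_mod_cast congrArg (Nat.cast : ℕ → k) this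
  calc ci k i * ci k j = ci k i * ci k j * ((n.factorial : k) * ci k n) := by rw [h3, mul_one]
    _ = ci k n * (n.choose i : k) * ((i.factorial : k) * ci k i) * ((j.factorial : k) * ci k j) := by
        rw [← h4]; ring
    _ = _ := by rw [h1, h2]; ring

lemma sum_square {M : Type*} [AddCommMonoid M] (p : ℕ) (f : ℕ → ℕ → M)
    (h : ∀ i j, p ≤ i + j → f i j = 0) :
    ∑ i ∈ range p, ∑ j ∈ range p, f i j =
      ∑ n ∈ range p, ∑ ij ∈ antidiagonal n, f ij.1 ij.2 := by
  rw [← Finset.sum_product', Finset.sum_sigma']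
  symm
  refine Finset.sum_bij_ne_zero (fun a _ _ => a.2) ?_ ?_ ?_ ?_
  · rintro ⟨n, i, j⟩ h1 h2
    simp at h1 ⊢; omega
  · rintro ⟨n, i, j⟩ h1 _ ⟨n', i', j'⟩ h2 _ h3
    simp at h1 h2 h3 ⊢
    obtain ⟨rfl, rfl⟩ := h3
    simp; omega
  · rintro ⟨i, j⟩ h1 h2
    have : i + j < p := by
      by_contra h3
      exact h2 (h _ _ (by omega))
    exact ⟨⟨i + j, i, j⟩, by simp; omega, h2, rfl⟩
  · rintro ⟨n, i, j⟩ h1 h2; rfl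

end coeffs

section expo
variable {k : Type*} [CommRing k] {p : ℕ} {B : Type*} [Ring B] [Algebra k B]

variable (k p) in
/-- truncated exponential -/
noncomputable def ex (a : B) : B := ∑ i ∈ range p, ci k i • a ^ i

/-- adjoint operator -/
def adB (z x : B) : B := z * x - x * z

lemma ex_add (hk : UnitsLt k p) {a b : B} (hab : Commute a b)
    (h : ∀ i j, p ≤ i + j → a ^ i * b ^ j = 0) : ex k p (a + b) = ex k p a * ex k p b := by
  unfold ex
  rw [Finset.sum_mul_sum, sum_square]
  · refine Finset.sum_congr rfl fun n hn => ?_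
    rw [hab.add_pow', Finset.smul_sum]
    refine Finset.sum_congr rfl fun ij hij => ?_
    rw [Finset.HasAntidiagonal.mem_antidiagonal] at hij
    rw [mem_range] at hn
    rw [smul_mul_smul_comm, ci_mul_ci hk hij hn, mul_smul, Nat.cast_smul_eq_nsmul]
  · intro i j hij
    rw [smul_mul_smul_comm, h i j hij, smul_zero]

/-- `x z^n = ∑ C(n,i) z^j (-ad z)^i x` -/
lemma mul_pow_ad (z x : B) (n : ℕ) :
    x * z ^ n = ∑ ij ∈ antidiagonal n,
      (n.choose ij.1) • ((-1 : ℤ) ^ ij.1 • (z ^ ij.2 * (adB z)^[ij.1] x)) := by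
  let A : Module.End ℤ B := -((LinearMap.mulLeft ℤ z) - (LinearMap.mulRight ℤ z))
  have hA : ∀ (i : ℕ) (y : B), (A ^ i) y = (-1 : ℤ) ^ i • (adB z)^[i] y := by
    intro i
    induction i with
    | zero => intro y; simp
    | succ i ih =>
      intro y
      rw [pow_succ', Module.End.mul_apply, ih, Function.iterate_succ_apply', map_zsmul, pow_succ', mul_smul]
      rw [smul_comm]
      simp [A, adB]
  have hz : ∀ (i : ℕ) (y : B), ((LinearMap.mulLeft ℤ z : Module.End ℤ B) ^ i) y = z ^ i * y := by
    intro i y; rw [LinearMap.pow_mulLeft]; simp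
  have hc : Commute A (LinearMap.mulLeft ℤ z : Module.End ℤ B) := by
    apply LinearMap.ext; intro y; simp [A, mul_sub, sub_mul, mul_assoc]
  have := hc.add_pow' n
  have h2 : A + LinearMap.mulLeft ℤ z = LinearMap.mulRight ℤ z := by simp [A]
  rw [h2, LinearMap.pow_mulRight] at this
  have h3 := LinearMap.congr_fun this x
  rw [LinearMap.mulRight_apply] at h3
  rw [h3, LinearMap.sum_apply]
  refine Finset.sum_congr rfl fun ij _ => ?_
  rw [hc.pow_pow]
  rw [LinearMap.smul_apply, Module.End.mul_apply, hA, hz, mul_smul_comm]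

lemma mul_ex (hk : UnitsLt k p) {z x : B}
    (h : ∀ i j, p ≤ i + j → z ^ j * (adB z)^[i] x = 0) :
    x * ex k p z = ex k p z * ∑ i ∈ range p, ((-1) ^ i * ci k i) • (adB z)^[i] x := by
  unfold ex
  rw [Finset.sum_mul_sum, Finset.sum_comm, sum_square, Finset.mul_sum]
  · refine Finset.sum_congr rfl fun n hn => ?_
    rw [mul_smul_comm, mul_pow_ad, Finset.smul_sum]
    refine Finset.sum_congr rfl fun ij hij => ?_
    rw [Finset.HasAntidiagonal.mem_antidiagonal] at hij
    rw [mem_range] at hn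
    rw [smul_mul_smul_comm, mul_comm (ci k ij.2), mul_assoc, ci_mul_ci hk hij hn,
      ← Nat.cast_smul_eq_nsmul k, ← Int.cast_smul_eq_zsmul k, smul_smul, smul_smul]
    congr 1; push_cast; ring
  · intro i j hij
    rw [smul_mul_smul_comm, h i j hij, smul_zero]

end expo

end Laz


namespace Laz
open Finset

section filt
variable {k : Type*} [CommRing k] {p : ℕ} {B : Type*} [Ring B] [Algebra k B]

/-- filtered associative algebra with `F p = 0` -/
structure FA (k : Type*) [CommRing k] (p : ℕ) {B : Type*} [Ring B] [Algebra k B]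
    (F : ℕ → Submodule k B) : Prop where
  anti : ∀ {i j x}, i ≤ j → x ∈ F j → x ∈ F i
  mul : ∀ {i j x y}, x ∈ F i → y ∈ F j → x * y ∈ F (i + j)
  one : (1 : B) ∈ F 0
  bot : ∀ {x}, x ∈ F p → x = 0

variable {F : ℕ → Submodule k B}

lemma FA.zero_of_le (hF : FA k p F) {i : ℕ} (hi : p ≤ i) {x : B} (hx : x ∈ F i) : x = 0 :=
  hF.bot (hF.anti hi hx)

lemma FA.pow (hF : FA k p F) {a : B} (ha : a ∈ F 1) (i : ℕ) : a ^ i ∈ F i := by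
  induction i with
  | zero => simpa using hF.one
  | succ i ih => rw [pow_succ]; exact hF.mul ih ha

lemma FA.ad (hF : FA k p F) {a x : B} {j : ℕ} (ha : a ∈ F 1) (hx : x ∈ F j) (i : ℕ) :
    (adB a)^[i] x ∈ F (i + j) := by
  induction i with
  | zero => simpa using hx
  | succ i ih =>
    rw [Function.iterate_succ_apply', adB]
    apply Submodule.sub_mem
    · exact hF.anti (by omega) (hF.mul ha ih)
    · exact hF.anti (by omega) (hF.mul ih ha)

lemma FA.ex_add (hF : FA k p F) (hk : UnitsLt k p) {a b : B} (ha : a ∈ F 1) (hb : b ∈ F 1)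
    (hab : Commute a b) : ex k p (a + b) = ex k p a * ex k p b :=
  Laz.ex_add hk hab fun i j hij => hF.zero_of_le hij (hF.mul (hF.pow ha i) (hF.pow hb j))

lemma ex_zero (hp : 0 < p) : ex k p (0 : B) = 1 := by
  obtain ⟨q, rfl⟩ : ∃ q, p = q + 1 := ⟨p - 1, by omega⟩
  simp [ex, Finset.sum_range_succ']

lemma FA.ex_neg (hF : FA k p F) (hk : UnitsLt k p) (hp : 0 < p) {a : B} (ha : a ∈ F 1) :
    ex k p a * ex k p (-a) = 1 := by
  rw [← hF.ex_add hk ha (Submodule.neg_mem _ ha) (Commute.refl a).neg_right, add_neg_cancel, ex_zero hp]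

lemma FA.ex_neg' (hF : FA k p F) (hk : UnitsLt k p) (hp : 0 < p) {a : B} (ha : a ∈ F 1) :
    ex k p (-a) * ex k p a = 1 := by
  have := hF.ex_neg hk hp (Submodule.neg_mem _ ha)
  rwa [neg_neg] at this

lemma FA.mul_ex (hF : FA k p F) (hk : UnitsLt k p) {z x : B} (hz : z ∈ F 1) (hx : x ∈ F 0) :
    x * ex k p z = ex k p z * ∑ i ∈ range p, ((-1) ^ i * ci k i) • (adB z)^[i] x :=
  Laz.mul_ex hk fun i j hij => hF.zero_of_le (i := j + (i + 0)) (by omega)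
    (hF.mul (hF.pow hz j) (hF.ad hz hx i))

lemma adB_neg (z x : B) : adB (-z) x = - adB z x := by simp [adB]; abel
lemma adB_neg' (z x : B) : adB z (-x) = - adB z x := by simp [adB]; abel

lemma adB_neg_iter (z x : B) (i : ℕ) : (adB (-z))^[i] x = (-1 : k) ^ i • (adB z)^[i] x := by
  induction i with
  | zero => simp
  | succ i ih =>
    rw [Function.iterate_succ_apply', Function.iterate_succ_apply', ih, adB_neg, pow_succ, mul_smul]
    simp [adB, smul_sub]
    abel

lemma FA.conj (hF : FA k p F) (hk : UnitsLt k p) (hp : 0 < p) {z x : B} (hz : z ∈ F 1) (hx : x ∈ F 0) :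
    ex k p z * x * ex k p (-z) = ∑ i ∈ range p, ci k i • (adB z)^[i] x := by
  rw [mul_assoc, hF.mul_ex hk (Submodule.neg_mem _ hz) hx, ← mul_assoc, hF.ex_neg hk hp hz, one_mul]
  refine Finset.sum_congr rfl fun i _ => ?_
  rw [adB_neg_iter (k := k), smul_smul, mul_right_comm, ← mul_pow]
  simp

lemma FA.conj_ex (hF : FA k p F) (hk : UnitsLt k p) (hp : 0 < p) {z x : B} (hz : z ∈ F 1) (hx : x ∈ F 0) :
    ex k p z * ex k p x * ex k p (-z) = ex k p (∑ i ∈ range p, ci k i • (adB z)^[i] x) := by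
  rw [← hF.conj hk hp hz hx]
  have h : ∀ n : ℕ, (ex k p z * x * ex k p (-z)) ^ n = ex k p z * x ^ n * ex k p (-z) := by
    intro n
    induction n with
    | zero => simp [hF.ex_neg hk hp hz]
    | succ n ih =>
      rw [pow_succ, ih, pow_succ]
      calc ex k p z * x ^ n * ex k p (-z) * (ex k p z * x * ex k p (-z))
          = ex k p z * x ^ n * (ex k p (-z) * ex k p z) * x * ex k p (-z) := by noncomm_ring
        _ = _ := by rw [hF.ex_neg' hk hp hz]; noncomm_ring
  have e : ∀ w : B, ex k p w = ∑ i ∈ range p, ci k i • w ^ i := fun _ => rfl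
  rw [e (ex k p z * x * ex k p (-z)), e x, Finset.mul_sum, Finset.sum_mul]
  refine Finset.sum_congr rfl fun i _ => ?_
  rw [h]
  simp

lemma FA.ex_sub_one (hF : FA k p F) (hp : 0 < p) {a : B} (ha : a ∈ F 1) : ex k p a - 1 ∈ F 1 := by
  obtain ⟨q, rfl⟩ : ∃ q, p = q + 1 := ⟨p - 1, by omega⟩
  rw [ex, Finset.sum_range_succ']
  simp only [pow_zero, ci_zero, one_smul, add_sub_cancel_right]
  refine Submodule.sum_mem _ fun i _ => Submodule.smul_mem _ _ (hF.anti (by omega) (hF.pow ha (i+1)))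

lemma FA.ex_mem (hF : FA k p F) {a : B} (ha : a ∈ F 1) : ex k p a ∈ F 0 :=
  Submodule.sum_mem _ fun i _ => Submodule.smul_mem _ _ (hF.anti (by omega) (hF.pow ha i))

lemma FA.ex_inj (hF : FA k p F) (hp : 2 ≤ p) {a b : B} (ha : a ∈ F 1) (hb : b ∈ F 1)
    (h : ex k p a = ex k p b) : a = b := by
  have key : ∀ j, a - b ∈ F (j + 1) := by
    intro j
    induction j with
    | zero => exact Submodule.sub_mem _ ha hb
    | succ j ih =>
      have h1 : ∀ i, a ^ (i + 1) - b ^ (i + 1) ∈ F (j + 1 + i) := by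
        intro i
        induction i with
        | zero => simpa using ih
        | succ i ih2 =>
          have : a ^ (i + 1 + 1) - b ^ (i + 1 + 1) =
              (a ^ (i + 1) - b ^ (i + 1)) * a + b ^ (i + 1) * (a - b) := by
            rw [pow_succ a (i+1), pow_succ b (i+1)]; noncomm_ring
          rw [this]
          refine Submodule.add_mem _ (hF.anti (by omega) (hF.mul ih2 ha))
            (hF.anti (by omega) (hF.mul (hF.pow hb _) ih))
      obtain ⟨q, rfl⟩ : ∃ q, p = q + 2 := ⟨p - 2, by omega⟩
      have h2 : ex k (q+2) a - ex k (q+2) b = 0 := by rw [h, sub_self]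
      rw [ex, ex, ← Finset.sum_sub_distrib, Finset.sum_range_succ', Finset.sum_range_succ'] at h2
      simp only [zero_add, pow_zero, sub_self, add_zero, ci_one, one_smul, pow_one] at h2
      rw [add_comm, add_eq_zero_iff_eq_neg] at h2
      rw [h2]
      refine Submodule.neg_mem _ (Submodule.sum_mem _ fun i _ => ?_)
      rw [← smul_sub]
      exact Submodule.smul_mem _ _ (hF.anti (by omega) (h1 (i + 1)))
  exact sub_eq_zero.1 (hF.zero_of_le (Nat.le_succ p) (key p))

/-- derivation of the exponential -/
lemma FA.der_ex (hF : FA k p F) (hk : UnitsLt k p) (hp : 0 < p) (D : B →ₗ[k] B)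
    (hD : ∀ x y, D (x * y) = D x * y + x * D y) {z : B} (hz : z ∈ F 1) (hDz : D z ∈ F 1) :
    D (ex k p z) = ex k p z * ∑ i ∈ range (p - 1), ((-1) ^ i * ci k (i + 1)) • (adB z)^[i] (D z) := by
  obtain ⟨q, rfl⟩ : ∃ q, p = q + 1 := ⟨p - 1, by omega⟩
  let Lz : Module.End k B := LinearMap.mulLeft k z
  let D' : Module.End k B := D
  have hpow : ∀ (i : ℕ) (y : B), (Lz ^ i) y = z ^ i * y := by
    intro i y; simp only [Lz]; rw [LinearMap.pow_mulLeft]; simp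
  have had : ∀ i, (adB Lz)^[i + 1] D' = - LinearMap.mulLeft k ((adB z)^[i] (D z)) := by
    intro i
    induction i with
    | zero => apply LinearMap.ext; intro y; simp [adB, Lz, D', hD]
    | succ i ih =>
      rw [Function.iterate_succ_apply', ih, Function.iterate_succ_apply' (f := adB z)]
      apply LinearMap.ext; intro y
      simp [adB, Lz, sub_mul, mul_assoc]
      abel
  have h1 := Laz.mul_ex (B := Module.End k B) (z := Lz) (x := D') hk (by
    intro i j hij
    apply LinearMap.ext; intro y
    rw [Module.End.mul_apply, hpow]
    rcases i with _ | i
    · rw [hF.zero_of_le (i := j) (by omega) (hF.pow hz j)]; simp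
    · rw [had]
      simp only [LinearMap.neg_apply, LinearMap.mulLeft_apply, LinearMap.zero_apply, mul_neg, neg_eq_zero, ← mul_assoc]
      rw [hF.zero_of_le (i := j + (i + 1)) (by omega) (hF.mul (hF.pow hz j) (hF.ad hz hDz i)), zero_mul])
  have hex : ∀ y, (ex k (q+1) Lz) y = ex k (q+1) z * y := by
    intro y
    simp [ex, LinearMap.sum_apply, hpow, Finset.sum_mul]
  have h2 := LinearMap.congr_fun h1 1
  have hD1 : D 1 = 0 := by simpa using hD 1 1
  rw [Module.End.mul_apply, Module.End.mul_apply, hex, hex, mul_one, Finset.sum_range_succ', LinearMap.add_apply,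
    LinearMap.sum_apply] at h2
  simp only [had] at h2
  simp only [Function.iterate_zero, id, LinearMap.smul_apply, D', hD1, smul_zero, add_zero] at h2
  rw [h2]
  simp only [Nat.add_sub_cancel]
  congr 1
  refine Finset.sum_congr rfl fun i _ => ?_
  simp [pow_succ]

end filt
end Laz


namespace Laz
open Finset

section lie
variable {k : Type*} [CommRing k] {p : ℕ} {M : Type*} [LieRing M] [LieAlgebra k M]

/-- the bracket as a function -/
def adL (z y : M) : M := ⁅z, y⁆

/-- weighted Lie algebra -/
structure WF (k : Type*) [CommRing k] (p : ℕ) {M : Type*} [LieRing M] [LieAlgebra k M]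
    (Q : ℕ → Submodule k M) (E : M →ₗ[k] M) : Prop where
  anti : ∀ {i j x}, i ≤ j → x ∈ Q j → x ∈ Q i
  br : ∀ {i j x y}, x ∈ Q i → y ∈ Q j → ⁅x, y⁆ ∈ Q (i + j)
  bot : ∀ {x}, x ∈ Q p → x = 0
  eul : ∀ {j x}, x ∈ Q j → E x - (j : k) • x ∈ Q (j + 1)

variable {Q : ℕ → Submodule k M} {E : M →ₗ[k] M}

lemma WF.zero_of_le (hW : WF k p Q E) {i : ℕ} (hi : p ≤ i) {x : M} (hx : x ∈ Q i) : x = 0 :=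
  hW.bot (hW.anti hi hx)

lemma WF.E_mem (hW : WF k p Q E) {j x} (hx : x ∈ Q j) : E x ∈ Q j := by
  have := Submodule.add_mem _ (hW.anti (Nat.le_succ j) (hW.eul hx)) (Submodule.smul_mem _ (j : k) hx)
  simpa using this

variable (k) in
lemma mem_of_smul {Q' : Submodule k M} (hk : UnitsLt k p) {j : ℕ} (h0 : 0 < j) (hj : j < p) {x : M}
    (hx : (j : k) • x ∈ Q') : x ∈ Q' := by
  obtain ⟨u, hu⟩ := hk j h0 hj
  have := Submodule.smul_mem Q' (↑u⁻¹ : k) hx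
  rwa [← hu, smul_smul, Units.inv_mul, one_smul] at this

lemma WF.zero_of_step (hW : WF k p Q E) (hk : UnitsLt k p) {x : M} (hx : x ∈ Q 1)
    (h : ∀ j, 1 ≤ j → x ∈ Q j → E x ∈ Q (j + 1)) : x = 0 := by
  have key : ∀ j, 1 ≤ j → j ≤ p → x ∈ Q j := by
    intro j hj
    induction j, hj using Nat.le_induction with
    | base => intro _; exact hx
    | succ j hj ih =>
      intro hjp
      have h1 := ih (by omega)
      have h2 := hW.eul h1
      have h3 := h j hj h1
      have h4 := Submodule.sub_mem _ h3 h2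
      rw [sub_sub_cancel] at h4
      exact mem_of_smul k hk hj (by omega) h4
  rcases Nat.eq_zero_or_pos p with h0 | h0
  · exact hW.zero_of_le (by omega) hx
  · exact hW.bot (key p h0 le_rfl)

variable (k p) in
/-- the defect of the differential equation -/
noncomputable def defect (E : M →ₗ[k] M) (a b z : M) : M :=
  ∑ i ∈ range (p - 1), ((-1) ^ i * ci k (i + 1)) • (adL z)^[i] (E z) -
    (b + ∑ i ∈ range p, ((-1) ^ i * ci k i) • (adL z)^[i] a)

lemma WF.ad_sub (hW : WF k p Q E) {z z' y y' : M} {j : ℕ} (hz : z ∈ Q 1) (hz' : z' ∈ Q 1)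
    (hy : y ∈ Q 1) (hzz : z - z' ∈ Q j) (hyy : y - y' ∈ Q j) (i : ℕ) :
    (adL z)^[i] y - (adL z')^[i] y' ∈ Q (j + i) ∧ (adL z)^[i] y ∈ Q (1 + i) := by
  induction i with
  | zero => simpa using ⟨hyy, hy⟩
  | succ i ih =>
    rw [Function.iterate_succ_apply', Function.iterate_succ_apply']
    constructor
    · have : adL z ((adL z)^[i] y) - adL z' ((adL z')^[i] y') =
          ⁅z - z', (adL z)^[i] y⁆ + ⁅z', (adL z)^[i] y - (adL z')^[i] y'⁆ := by
        simp [adL]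
      rw [this]
      exact Submodule.add_mem _ (hW.anti (by omega) (hW.br hzz ih.2))
        (hW.anti (by omega) (hW.br hz' ih.1))
    · exact hW.anti (by omega) (hW.br hz ih.2)

lemma WF.defect_sub (hW : WF k p Q E) (hp : 2 ≤ p) {a b z z' : M} {j : ℕ} (ha : a ∈ Q 1)
    (hz : z ∈ Q 1) (hz' : z' ∈ Q 1) (hzz : z - z' ∈ Q j) :
    defect k p E a b z - defect k p E a b z' - (j : k) • (z - z') ∈ Q (j + 1) := by
  obtain ⟨q, rfl⟩ : ∃ q, p = q + 2 := ⟨p - 2, by omega⟩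
  have h1 := hW.ad_sub hz hz' (hW.E_mem hz) hzz (by rw [← map_sub]; exact hW.E_mem hzz)
  have h2 := hW.ad_sub hz hz' ha hzz (y' := a) (by simp)
  have h3 := hW.eul hzz
  unfold defect
  have e1 : ∀ z : M, ∑ i ∈ range (q + 2 - 1), ((-1) ^ i * ci k (i + 1)) • (adL z)^[i] (E z) =
      ∑ i ∈ range q, ((-1) ^ (i+1) * ci k (i + 1+1)) • (adL z)^[i+1] (E z) + E z := by
    intro z
    rw [show q + 2 - 1 = q + 1 by omega, Finset.sum_range_succ']; simp
  have e2 : ∀ z : M, ∑ i ∈ range (q + 2), ((-1) ^ i * ci k i) • (adL z)^[i] a =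
      ∑ i ∈ range (q+1), ((-1) ^ (i+1) * ci k (i+1)) • (adL z)^[i+1] a + a := by
    intro z
    rw [Finset.sum_range_succ']; simp
  rw [e1, e1, e2, e2]
  have : ∀ A A' C C' : M, A + E z - (b + (C + a)) - (A' + E z' - (b + (C' + a))) - (j : k) • (z - z')
     = (A - A') - (C - C') + (E (z - z') - (j : k) • (z - z')) := by
    intros; rw [map_sub]; abel
  rw [this, ← Finset.sum_sub_distrib, ← Finset.sum_sub_distrib]
  refine Submodule.add_mem _ (Submodule.sub_mem _ (Submodule.sum_mem _ fun i _ => ?_)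
    (Submodule.sum_mem _ fun i _ => ?_)) h3
  · rw [← smul_sub]
    exact Submodule.smul_mem _ _ (hW.anti (by omega) (h1 (i+1)).1)
  · rw [← smul_sub]
    exact Submodule.smul_mem _ _ (hW.anti (by omega) (h2 (i+1)).1)

lemma WF.unique (hW : WF k p Q E) (hk : UnitsLt k p) (hp : 2 ≤ p) {a b z z' : M} (ha : a ∈ Q 1)
    (hz : z ∈ Q 1) (hz' : z' ∈ Q 1) (h : defect k p E a b z = 0) (h' : defect k p E a b z' = 0) :
    z = z' := by
  rw [← sub_eq_zero]
  refine hW.zero_of_step hk (Submodule.sub_mem _ hz hz') fun j hj hx => ?_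
  have h1 := hW.defect_sub hp (b := b) ha hz hz' hx
  rw [h, h', sub_self, zero_sub] at h1
  have h2 := hW.eul hx
  have := Submodule.sub_mem _ h2 h1
  simpa using this

lemma iter_zero (i : ℕ) (a : M) : (adL (0 : M))^[i + 1] a = 0 := by
  rw [Function.iterate_succ_apply', adL, zero_lie]

lemma defect_zero (hp : 2 ≤ p) (a b : M) : defect k p E a b 0 = - (a + b) := by
  obtain ⟨q, rfl⟩ : ∃ q, p = q + 2 := ⟨p - 2, by omega⟩
  rw [defect, show q + 2 - 1 = q + 1 by omega, Finset.sum_range_succ', Finset.sum_range_succ']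
  simp [iter_zero]; abel

lemma WF.exists_sol (hW : WF k p Q E) (hk : UnitsLt k p) (hp : 2 ≤ p) {a b : M} (ha : a ∈ Q 1)
    (hb : b ∈ Q 1) : ∃ z ∈ Q 1, defect k p E a b z = 0 := by
  have key : ∀ j, 1 ≤ j → j ≤ p → ∃ z ∈ Q 1, defect k p E a b z ∈ Q j := by
    intro j hj
    induction j, hj using Nat.le_induction with
    | base =>
      intro _
      refine ⟨0, Submodule.zero_mem _, ?_⟩
      rw [defect_zero hp]
      exact Submodule.neg_mem _ (Submodule.add_mem _ ha hb)
    | succ j hj ih =>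
      intro hjp
      obtain ⟨z, hz, h⟩ := ih (by omega)
      obtain ⟨u, hu⟩ := hk j hj (by omega)
      set r := defect k p E a b z
      have hr1 : (↑u⁻¹ : k) • r ∈ Q j := Submodule.smul_mem _ _ h
      have hr2 : (↑u⁻¹ : k) • r ∈ Q 1 := hW.anti hj hr1
      refine ⟨z - (↑u⁻¹ : k) • r, Submodule.sub_mem _ hz hr2, ?_⟩
      have h1 := hW.defect_sub hp (b := b) ha hz (Submodule.sub_mem _ hz hr2) (j := j) (by rwa [sub_sub_cancel])
      rw [sub_sub_cancel, ← hu, smul_smul, Units.mul_inv, one_smul, sub_right_comm, sub_self, zero_sub] at h1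
      simpa using h1
  obtain ⟨z, hz, h⟩ := key p (by omega) le_rfl
  exact ⟨z, hz, hW.bot h⟩

lemma WF.first_order (hW : WF k p Q E) (hp : 2 ≤ p) {a b z : M} (ha : a ∈ Q 1)
    (hz : z ∈ Q 1) (h : defect k p E a b z = 0) : z - (a + b) ∈ Q 2 := by
  have h1 := hW.defect_sub hp (b := b) ha hz (Submodule.zero_mem _) (by simpa using hz)
  rw [h, defect_zero hp] at h1
  have := Submodule.neg_mem _ h1
  simpa using this

lemma adL_map {M' : Type*} [LieRing M'] [LieAlgebra k M'] (f : M →ₗ⁅k⁆ M') (z y : M) (i : ℕ) :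
    f ((adL z)^[i] y) = (adL (f z))^[i] (f y) := by
  induction i with
  | zero => rfl
  | succ i ih => rw [Function.iterate_succ_apply', Function.iterate_succ_apply', ← ih]; simp [adL]

lemma defect_map {M' : Type*} [LieRing M'] [LieAlgebra k M'] (f : M →ₗ⁅k⁆ M') {E' : M' →ₗ[k] M'}
    (hf : ∀ x, f (E x) = E' (f x)) (a b z : M) :
    f (defect k p E a b z) = defect k p E' (f a) (f b) (f z) := by
  simp [defect, map_sum, adL_map, hf]

variable (k M) in
/-- lower central series, as submodules -/
def Cs : ℕ → Submodule k M
  | 0 => ⊤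
  | i + 1 => Submodule.span k {x | ∃ a : M, ∃ b ∈ Cs i, ⁅a, b⁆ = x}

lemma Cs_br_step {i : ℕ} {a b : M} (hb : b ∈ Cs k M i) : ⁅a, b⁆ ∈ Cs k M (i + 1) :=
  Submodule.subset_span ⟨a, b, hb, rfl⟩

lemma Cs_succ_le (i : ℕ) : Cs k M (i + 1) ≤ Cs k M i := by
  induction i with
  | zero => exact le_top
  | succ i ih =>
    conv_lhs => rw [Cs]
    rw [Submodule.span_le]
    rintro x ⟨a, b, hb, rfl⟩
    exact Cs_br_step (ih hb)

lemma Cs_anti {i j : ℕ} (h : i ≤ j) : Cs k M j ≤ Cs k M i :=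
  antitone_nat_of_succ_le (f := Cs k M) Cs_succ_le h

lemma Cs_br (i j : ℕ) : ∀ {a b : M}, a ∈ Cs k M i → b ∈ Cs k M j → ⁅a, b⁆ ∈ Cs k M (i + j + 1) := by
  induction i generalizing j with
  | zero => intro a b _ hb; rw [zero_add]; exact Cs_br_step hb
  | succ i ih =>
    intro a b ha hb
    rw [Cs] at ha
    induction ha using Submodule.span_induction with
    | mem x hx =>
      obtain ⟨a, c, hc, rfl⟩ := hx
      rw [lie_lie]
      refine Submodule.sub_mem _ ?_ ?_
      · have := Cs_br_step (a := a) (ih j hc hb)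
        rwa [show i + 1 + j + 1 = i + j + 1 + 1 by omega]
      · have := ih (j+1) hc (Cs_br_step (a := a) hb)
        rwa [show i + 1 + j + 1 = i + (j + 1) + 1 by omega]
    | zero => simp
    | add x y _ _ hx hy => rw [add_lie]; exact Submodule.add_mem _ hx hy
    | smul c x _ hx => rw [smul_lie]; exact Submodule.smul_mem _ _ hx

lemma Cs_map {M' : Type*} [LieRing M'] [LieAlgebra k M'] (f : M →ₗ⁅k⁆ M') (i : ℕ) :
    ∀ {x}, x ∈ Cs k M i → f x ∈ Cs k M' i := by
  induction i with
  | zero => intro x _; trivial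
  | succ i ih =>
    intro x hx
    rw [Cs] at hx
    induction hx using Submodule.span_induction with
    | mem x hx =>
      obtain ⟨a, c, hc, rfl⟩ := hx
      rw [LieHom.map_lie]; exact Cs_br_step (ih hc)
    | zero => simp
    | add x y _ _ hx hy => rw [map_add]; exact Submodule.add_mem _ hx hy
    | smul c x _ hx => rw [map_smul]; exact Submodule.smul_mem _ _ hx

/-- `Cs` is the smallest -/
lemma Cs_le_of {Q : ℕ → Submodule k M} (h0 : Q 0 = ⊤)
    (hQ : ∀ (i : ℕ) (a b : M), b ∈ Q i → ⁅a, b⁆ ∈ Q (i + 1)) (i : ℕ) : Cs k M i ≤ Q i := by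
  induction i with
  | zero => rw [h0]; exact le_top
  | succ i ih =>
    rw [Cs, Submodule.span_le]
    rintro x ⟨a, b, hb, rfl⟩
    exact hQ _ _ _ (ih hb)

end lie
end Laz


namespace Laz
open Finset

section gen
variable {k : Type*} [CommRing k] {p : ℕ} {V W : Type*} [AddCommGroup V] [Module k V]
  [AddCommGroup W] [Module k W] {xt : ℕ → V →ₗ[k] W} {S : ℕ → Submodule k V} {E : W →ₗ[k] W}

/-- span of `X^i ⊗ S i`, `i ≥ j` -/
def Fil (xt : ℕ → V →ₗ[k] W) (S : ℕ → Submodule k V) (j : ℕ) : Submodule k W :=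
  Submodule.span k {w | ∃ (i : ℕ) (a : V), j ≤ i ∧ a ∈ S i ∧ xt i a = w}

lemma Fil_gen {i j : ℕ} {a : V} (h : j ≤ i) (ha : a ∈ S i) : xt i a ∈ Fil xt S j :=
  Submodule.subset_span ⟨i, a, h, ha, rfl⟩

lemma Fil_le {j : ℕ} {U : Submodule k W}
    (h : ∀ i a, j ≤ i → a ∈ S i → xt i a ∈ U) : Fil xt S j ≤ U := by
  rw [Fil, Submodule.span_le]
  rintro _ ⟨n, a, hn, ha, rfl⟩
  exact h n a hn ha

lemma Fil_anti {i j : ℕ} (h : i ≤ j) : Fil xt S j ≤ Fil xt S i :=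
  Fil_le fun _ _ hn ha => Fil_gen (h.trans hn) ha

lemma Fil_bot {j : ℕ} (h : ∀ i, j ≤ i → S i = ⊥) : Fil xt S j = ⊥ := by
  rw [eq_bot_iff]
  refine Fil_le fun i a hi ha => ?_
  rw [h i hi, Submodule.mem_bot] at ha
  simp [ha]

lemma Fil_eul (hE : ∀ i a, E (xt i a) = (i : k) • xt i a) {j : ℕ} {w : W} (hw : w ∈ Fil xt S j) :
    E w - (j : k) • w ∈ Fil xt S (j + 1) := by
  have : Fil xt S j ≤ (Fil xt S (j + 1)).comap (E - (j : k) • LinearMap.id) := by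
    refine Fil_le fun i a hi ha => ?_
    rw [Submodule.mem_comap, LinearMap.sub_apply, hE, LinearMap.smul_apply, LinearMap.id_apply, ← sub_smul]
    rcases hi.eq_or_lt with rfl | hi
    · simp
    · exact Submodule.smul_mem _ _ (Fil_gen hi ha)
  simpa using this hw

lemma filt_zero {U : Type*} [AddCommGroup U] [Module k U] {Q : ℕ → Submodule k U} {E : U →ₗ[k] U}
    (anti : ∀ {i j x}, i ≤ j → x ∈ Q j → x ∈ Q i) (bot : ∀ {x}, x ∈ Q p → x = 0)
    (eul : ∀ {j x}, x ∈ Q j → E x - (j : k) • x ∈ Q (j + 1)) (hk : UnitsLt k p) {x : U} (hx : x ∈ Q 1)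
    (h : ∀ j, 1 ≤ j → x ∈ Q j → E x ∈ Q (j + 1)) : x = 0 := by
  have key : ∀ j, 1 ≤ j → j ≤ p → x ∈ Q j := by
    intro j hj
    induction j, hj using Nat.le_induction with
    | base => intro _; exact hx
    | succ j hj ih =>
      intro hjp
      have h1 := ih (by omega)
      have h2 := eul h1
      have h3 := h j hj h1
      have h4 := Submodule.sub_mem _ h3 h2
      rw [sub_sub_cancel] at h4
      obtain ⟨u, hu⟩ := hk j hj (by omega)
      have := Submodule.smul_mem (Q (j+1)) (↑u⁻¹ : k) h4
      rwa [← hu, smul_smul, Units.inv_mul, one_smul] at this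
  rcases Nat.eq_zero_or_pos p with h0 | h0
  · exact bot (anti (by omega) hx)
  · exact bot (key p h0 le_rfl)

end gen

/-- Lie polynomials -/
def PL (L : Type*) [Zero L] : Type _ := ℕ →₀ L

section pl
variable {L : Type*} [LieRing L]

noncomputable instance PL.acg : AddCommGroup (PL L) := inferInstanceAs (AddCommGroup (ℕ →₀ L))

/-- bracket of polynomials -/
noncomputable def plBr (f g : ℕ →₀ L) : ℕ →₀ L :=
  f.sum fun i a => g.sum fun j b => Finsupp.single (i + j) ⁅a, b⁆

lemma plBr_add_left (f f' g : ℕ →₀ L) : plBr (f + f') g = plBr f g + plBr f' g := by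
  classical
  unfold plBr
  rw [Finsupp.sum_add_index']
  · intro i; simp
  · intro i a b; simp [Finsupp.sum_add]

lemma plBr_add_right (f g g' : ℕ →₀ L) : plBr f (g + g') = plBr f g + plBr f g' := by
  classical
  unfold plBr
  rw [← Finsupp.sum_add]
  congr 1; ext1 i; ext1 a
  rw [Finsupp.sum_add_index']
  · intro i; simp
  · intro i a b; simp

lemma plBr_single (i j : ℕ) (a b : L) :
    plBr (Finsupp.single i a) (Finsupp.single j b) = Finsupp.single (i + j) ⁅a, b⁆ := by
  unfold plBr
  rw [Finsupp.sum_single_index, Finsupp.sum_single_index] <;> simp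

lemma plBr_zero_left (g : ℕ →₀ L) : plBr 0 g = 0 := by simp [plBr]
lemma plBr_zero_right (g : ℕ →₀ L) : plBr g 0 = 0 := by simp [plBr]

lemma plBr_skew (f g : ℕ →₀ L) : plBr f g + plBr g f = 0 := by
  induction f using Finsupp.induction_linear with
  | zero => simp [plBr_zero_left, plBr_zero_right]
  | add f f' h h' =>
    rw [plBr_add_left, plBr_add_right, add_add_add_comm, h, h', add_zero]
  | single i a =>
    induction g using Finsupp.induction_linear with
    | zero => simp [plBr_zero_left, plBr_zero_right]
    | add f f' h h' =>
      rw [plBr_add_left, plBr_add_right, add_add_add_comm, h, h', add_zero]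
    | single j b =>
      rw [plBr_single, plBr_single, add_comm j i, ← Finsupp.single_add, ← lie_skew a b, neg_add_cancel, Finsupp.single_zero]

lemma plBr_self (f : ℕ →₀ L) : plBr f f = 0 := by
  induction f using Finsupp.induction_linear with
  | zero => simp [plBr_zero_left]
  | add f f' h h' =>
    rw [plBr_add_left, plBr_add_right, plBr_add_right, h, h', zero_add, add_zero, plBr_skew]
  | single i a => rw [plBr_single]; simp

lemma plBr_leib (f g h : ℕ →₀ L) : plBr f (plBr g h) = plBr (plBr f g) h + plBr g (plBr f h) := by
  induction f using Finsupp.induction_linear with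
  | zero => simp [plBr_zero_left, plBr_zero_right]
  | add f f' h1 h2 => simp only [plBr_add_left, plBr_add_right, h1, h2]; abel
  | single i a =>
    induction g using Finsupp.induction_linear with
    | zero => simp [plBr_zero_left, plBr_zero_right]
    | add f f' h1 h2 => simp only [plBr_add_left, plBr_add_right, h1, h2]; abel
    | single j b =>
      induction h using Finsupp.induction_linear with
      | zero => simp [plBr_zero_right]
      | add f f' h1 h2 => simp only [plBr_add_right, h1, h2]; abel
      | single l c =>
        simp only [plBr_single]
        rw [show j + (i + l) = i + (j + l) by omega, show i + j + l = i + (j + l) by omega,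
          ← Finsupp.single_add, leibniz_lie]

noncomputable instance PL.lieRing : LieRing (PL L) where
  toAddCommGroup := PL.acg
  bracket f g := plBr f g
  add_lie := plBr_add_left
  lie_add := plBr_add_right
  lie_self := plBr_self
  leibniz_lie := plBr_leib

end pl

section pl2
variable {k : Type*} [CommRing k] {p : ℕ} {L : Type*} [LieRing L] [LieAlgebra k L]

noncomputable instance PL.mod : Module k (PL L) := inferInstanceAs (Module k (ℕ →₀ L))

lemma plBr_smul (c : k) (f g : ℕ →₀ L) : plBr f (c • g) = c • plBr f g := by
  induction f using Finsupp.induction_linear with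
  | zero => simp [plBr_zero_left]
  | add f f' h1 h2 => simp only [plBr_add_left, h1, h2, smul_add]
  | single i a =>
    induction g using Finsupp.induction_linear with
    | zero => simp [plBr_zero_right]
    | add f f' h1 h2 => simp only [plBr_add_right, h1, h2, smul_add]
    | single j b => simp [plBr_single]

noncomputable instance PL.lieAlg : LieAlgebra k (PL L) where
  toModule := PL.mod
  lie_smul := plBr_smul

variable (k) in
/-- monomials -/
noncomputable def xl (i : ℕ) : L →ₗ[k] PL L := Finsupp.lsingle i

lemma xl_br (i j : ℕ) (a b : L) : ⁅xl k i a, xl k j b⁆ = xl k (i + j) ⁅a, b⁆ := plBr_single i j a b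

variable (k) in
@[elab_as_elim] lemma PL.ind {P : PL L → Prop} (f : PL L) (h0 : P 0) (ha : ∀ f g, P f → P g → P (f + g))
    (hs : ∀ i a, P (xl k i a)) : P f :=
  Finsupp.induction_linear (M := L) (ι := ℕ) f h0 ha hs

variable (k) in
/-- linear maps out -/
noncomputable def plLift {U : Type*} [AddCommGroup U] [Module k U] (φ : ℕ → L →ₗ[k] U) : PL L →ₗ[k] U :=
  Finsupp.lsum k φ

lemma plLift_xl {U : Type*} [AddCommGroup U] [Module k U] (φ : ℕ → L →ₗ[k] U) (i : ℕ) (a : L) :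
    plLift k φ (xl k i a) = φ i a := Finsupp.lsum_single _ _ _ _

variable (k L) in
/-- Euler operator -/
noncomputable def Er : PL L →ₗ[k] PL L := plLift k fun i => (i : k) • xl k i

lemma Er_xl (i : ℕ) (a : L) : Er k L (xl k i a) = (i : k) • xl k i a := by
  rw [Er, plLift_xl]; rfl

variable (k L) in
/-- evaluation, as linear map -/
noncomputable def evL (m : k) : PL L →ₗ[k] L := plLift k fun i => m ^ i • LinearMap.id

lemma evL_xl (m : k) (i : ℕ) (a : L) : evL k L m (xl k i a) = m ^ i • a := by
  rw [evL, plLift_xl]; rfl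

lemma lin_lie {M : Type*} [LieRing M] [LieAlgebra k M] (F : PL L →ₗ[k] M)
    (h : ∀ i j a b, F ⁅xl k i a, xl k j b⁆ = ⁅F (xl k i a), F (xl k j b)⁆) (x y : PL L) :
    F ⁅x, y⁆ = ⁅F x, F y⁆ := by
  refine PL.ind k x (by simp) (fun f g hf hg => by rw [add_lie, map_add, hf, hg, map_add, add_lie]) fun i a => ?_
  refine PL.ind k y (by simp) (fun f g hf hg => by rw [lie_add, map_add, hf, hg, map_add, lie_add]) fun j b => ?_
  exact h i j a b

variable (k L) in
/-- evaluation, as Lie map -/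
noncomputable def evH (m : k) : PL L →ₗ⁅k⁆ L :=
  { evL k L m with
    map_lie' := by
      intro x y
      refine lin_lie (evL k L m) (fun i j a b => ?_) x y
      rw [xl_br, evL_xl, evL_xl, evL_xl, lie_smul, smul_lie, smul_smul, pow_add, mul_comm] }

lemma evH_xl (m : k) (i : ℕ) (a : L) : evH k L m (xl k i a) = m ^ i • a := evL_xl m i a

variable (L) in
/-- scaling -/
noncomputable def scH (m : k) : PL L →ₗ⁅k⁆ PL L :=
  { plLift k (fun i => m ^ i • xl k i) with
    map_lie' := by
      intro x y
      refine lin_lie (plLift k (fun i => m ^ i • xl k i)) (fun i j a b => ?_) x y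
      rw [xl_br]
      simp only [plLift_xl, LinearMap.smul_apply]
      rw [lie_smul, smul_lie, smul_smul, pow_add, mul_comm, xl_br] }

lemma scH_xl (m : k) (i : ℕ) (a : L) : scH L m (xl k i a) = m ^ i • xl k i a :=
  plLift_xl (fun i => m ^ i • xl k i) i a

/-- functoriality -/
noncomputable def mapH {L' : Type*} [LieRing L'] [LieAlgebra k L'] (f : L →ₗ⁅k⁆ L') : PL L →ₗ⁅k⁆ PL L' :=
  { plLift k (fun i => (xl k i).comp f.toLinearMap) with
    map_lie' := by
      intro x y
      refine lin_lie (plLift k (fun i => (xl k i).comp f.toLinearMap)) (fun i j a b => ?_) x y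
      rw [xl_br]
      simp only [plLift_xl, LinearMap.comp_apply, xl_br, LieHom.coe_toLinearMap, LieHom.map_lie] }

lemma mapH_xl {L' : Type*} [LieRing L'] [LieAlgebra k L'] (f : L →ₗ⁅k⁆ L') (i : ℕ) (a : L) :
    mapH f (xl k i a) = xl k i (f a) := plLift_xl (fun i => (xl k i).comp f.toLinearMap) i a

lemma Er_br (x y : PL L) : Er k L ⁅x, y⁆ = ⁅Er k L x, y⁆ + ⁅x, Er k L y⁆ := by
  refine PL.ind k x (by simp) (fun f g hf hg => by simp only [add_lie, map_add, hf, hg]; abel) fun i a => ?_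
  refine PL.ind k y (by simp) (fun f g hf hg => by simp only [lie_add, map_add, hf, hg]; abel) fun j b => ?_
  rw [xl_br, Er_xl, Er_xl, Er_xl, lie_smul, smul_lie, xl_br, ← add_smul, Nat.cast_add]

lemma lin_ext {U : Type*} [AddCommGroup U] [Module k U] {f g : PL L →ₗ[k] U}
    (h : ∀ i a, f (xl k i a) = g (xl k i a)) (x : PL L) : f x = g x := by
  exact PL.ind k x (by simp) (fun x y hx hy => by rw [map_add, map_add, hx, hy]) h

variable (k L) in
/-- graded pieces -/
def Sg (i : ℕ) : Submodule k L := if i = 0 then ⊥ else Cs k L (i - 1)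

lemma mem_Sg {i : ℕ} {a : L} : a ∈ Sg k L (i + 1) ↔ a ∈ Cs k L i := by simp [Sg]
lemma Sg_zero {a : L} : a ∈ Sg k L 0 ↔ a = 0 := by simp [Sg]

lemma Sg_br {i j : ℕ} {a b : L} (ha : a ∈ Sg k L i) (hb : b ∈ Sg k L j) : ⁅a, b⁆ ∈ Sg k L (i + j) := by
  rcases i with _ | i
  · rw [Sg_zero] at ha; simp [ha]
  rcases j with _ | j
  · rw [Sg_zero] at hb; simp [hb]
  rw [mem_Sg] at ha hb
  rw [show i + 1 + (j + 1) = (i + j + 1) + 1 by omega, mem_Sg]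
  exact Cs_br _ _ ha hb

lemma Sg_map {L' : Type*} [LieRing L'] [LieAlgebra k L'] (f : L →ₗ⁅k⁆ L') {i : ℕ} {a : L}
    (ha : a ∈ Sg k L i) : f a ∈ Sg k L' i := by
  rcases i with _ | i
  · rw [Sg_zero] at *; simp [ha]
  · rw [mem_Sg] at *; exact Cs_map f i ha

lemma Sg_bot (hp : 1 ≤ p) (hC : Cs k L (p - 1) = ⊥) {i : ℕ} (hi : p ≤ i) : Sg k L i = ⊥ := by
  rw [eq_bot_iff]
  intro a ha
  obtain ⟨i, rfl⟩ : ∃ q, i = q + 1 := ⟨i - 1, by omega⟩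
  rw [mem_Sg] at ha
  have := Cs_anti (show p - 1 ≤ i by omega) ha
  rwa [hC] at this

variable (k L) in
/-- the filtration -/
noncomputable abbrev Rq (j : ℕ) : Submodule k (PL L) := Fil (xl k) (Sg k L) j

lemma Rq_br {i j : ℕ} {x y : PL L} (hx : x ∈ Rq k L i) (hy : y ∈ Rq k L j) :
    ⁅x, y⁆ ∈ Rq k L (i + j) := by
  induction hx using Submodule.span_induction with
  | mem x hx =>
    obtain ⟨m, a, hm, ha, rfl⟩ := hx
    induction hy using Submodule.span_induction with
    | mem y hy =>
      obtain ⟨n, b, hn, hb, rfl⟩ := hy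
      rw [xl_br]
      exact Fil_gen (by omega) (Sg_br ha hb)
    | zero => rw [lie_zero]; exact Submodule.zero_mem _
    | add x y _ _ hx hy => rw [lie_add]; exact Submodule.add_mem _ hx hy
    | smul c x _ hx => rw [lie_smul]; exact Submodule.smul_mem _ _ hx
  | zero => rw [zero_lie]; exact Submodule.zero_mem _
  | add x y _ _ hx hy => rw [add_lie]; exact Submodule.add_mem _ hx hy
  | smul c x _ hx => rw [smul_lie]; exact Submodule.smul_mem _ _ hx

lemma rees_WF (hp : 1 ≤ p) (hC : Cs k L (p - 1) = ⊥) : WF k p (Rq k L) (Er k L) where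
  anti h hx := Fil_anti h hx
  br := Rq_br
  bot hx := by
    have := Fil_bot (j := p) (xt := xl k) (S := Sg k L) fun i hi => Sg_bot hp hC hi
    rw [Rq, this] at hx
    simpa using hx
  eul hx := Fil_eul Er_xl hx

lemma xl_one_mem (a : L) : xl k 1 a ∈ Rq k L 1 := Fil_gen le_rfl (by rw [mem_Sg]; trivial)

end pl2
end Laz


namespace Laz
open Finset

section vand
variable {k : Type*} [CommRing k] {p : ℕ}

lemma exists_vand (hk : UnitsLt k p) (hp : 2 ≤ p) : ∃ d : ℕ → k, ∀ j, j < p →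
    ∑ m ∈ range p, d m * (m : k) ^ j = if j = 1 then 1 else 0 := by
  let v : Fin p → k := fun i => (i : ℕ)
  have hu : IsUnit (Matrix.vandermonde v).det := by
    rw [Matrix.det_vandermonde, IsUnit.prod_univ_iff]
    intro i
    rw [IsUnit.prod_iff]
    intro j hj
    rw [Finset.mem_Ioi] at hj
    have hj' : (i : ℕ) < j := hj
    have := hk (j - i) (by omega) (by omega)
    rwa [Nat.cast_sub hj'.le] at this
  let e : Fin p → k := fun j => if (j : ℕ) = 1 then 1 else 0
  let d : Fin p → k := Matrix.vecMul e (Matrix.vandermonde v)⁻¹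
  have h1 : Matrix.vecMul d (Matrix.vandermonde v) = e := by
    simp only [d]
    rw [Matrix.vecMul_vecMul, Matrix.nonsing_inv_mul _ hu, Matrix.vecMul_one]
  refine ⟨fun m => if h : m < p then d ⟨m, h⟩ else 0, fun j hj => ?_⟩
  have h2 := congrFun h1 ⟨j, hj⟩
  simp only [e] at h2
  rw [← h2, Finset.sum_range]
  simp only [Matrix.vecMul, dotProduct, Matrix.vandermonde_apply, v]
  refine Finset.sum_congr rfl fun m _ => ?_
  simp

end vand

section star
variable {k : Type*} [CommRing k] {p : ℕ} {L : Type*} [LieRing L] [LieAlgebra k L]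

open Classical in
variable (k p) in
/-- solution of the differential equation -/
noncomputable def zsol (x y : L) : PL L :=
  if h : ∃ z ∈ Rq k L 1, defect k p (Er k L) (xl k 1 x) (xl k 1 y) z = 0 then h.choose else 0

lemma zsol_spec (hk : UnitsLt k p) (hp : 2 ≤ p) (hC : Cs k L (p - 1) = ⊥) (x y : L) :
    zsol k p x y ∈ Rq k L 1 ∧ defect k p (Er k L) (xl k 1 x) (xl k 1 y) (zsol k p x y) = 0 := by
  have h := (rees_WF (by omega) hC).exists_sol hk hp (xl_one_mem x) (xl_one_mem y)
  rw [zsol, dif_pos h]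
  exact h.choose_spec

lemma zsol_unique (hk : UnitsLt k p) (hp : 2 ≤ p) (hC : Cs k L (p - 1) = ⊥) {x y : L} {z : PL L}
    (hz : z ∈ Rq k L 1) (h : defect k p (Er k L) (xl k 1 x) (xl k 1 y) z = 0) : zsol k p x y = z :=
  (rees_WF (by omega) hC).unique hk hp (xl_one_mem x) (zsol_spec hk hp hC x y).1 hz
    (zsol_spec hk hp hC x y).2 h

variable (k p) in
/-- the BCH product -/
noncomputable def star (x y : L) : L := evH k L 1 (zsol k p x y)

lemma mapH_mem {L' : Type*} [LieRing L'] [LieAlgebra k L'] (f : L →ₗ⁅k⁆ L') {j : ℕ} {z : PL L}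
    (hz : z ∈ Rq k L j) : mapH f z ∈ Rq k L' j := by
  have : Rq k L j ≤ (Rq k L' j).comap (mapH f).toLinearMap := by
    refine Fil_le fun i a hi ha => ?_
    rw [Submodule.mem_comap, LieHom.coe_toLinearMap, mapH_xl]
    exact Fil_gen hi (Sg_map f ha)
  exact this hz

lemma zsol_map {L' : Type*} [LieRing L'] [LieAlgebra k L'] (hk : UnitsLt k p) (hp : 2 ≤ p)
    (hC : Cs k L (p - 1) = ⊥) (hC' : Cs k L' (p - 1) = ⊥) (f : L →ₗ⁅k⁆ L') (x y : L) :
    zsol k p (f x) (f y) = mapH f (zsol k p x y) := by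
  have h := zsol_spec hk hp hC x y
  refine zsol_unique hk hp hC' (mapH_mem f h.1) ?_
  rw [← mapH_xl, ← mapH_xl, ← defect_map (E := Er k L), h.2, map_zero]
  intro x
  refine lin_ext (f := (mapH f).toLinearMap.comp (Er k L)) (g := (Er k L').comp (mapH f).toLinearMap)
    (fun i a => ?_) x
  simp [Er_xl, mapH_xl]

lemma star_map {L' : Type*} [LieRing L'] [LieAlgebra k L'] (hk : UnitsLt k p) (hp : 2 ≤ p)
    (hC : Cs k L (p - 1) = ⊥) (hC' : Cs k L' (p - 1) = ⊥) (f : L →ₗ⁅k⁆ L') (x y : L) :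
    f (star k p x y) = star k p (f x) (f y) := by
  rw [star, star, zsol_map hk hp hC hC']
  refine lin_ext (f := f.toLinearMap.comp (evH k L 1).toLinearMap)
    (g := (evH k L' 1).toLinearMap.comp (mapH f).toLinearMap) (fun i a => ?_) _
  simp [evH_xl, mapH_xl]

lemma zsol_smul (hk : UnitsLt k p) (hp : 2 ≤ p) (hC : Cs k L (p - 1) = ⊥) (m : k) (x y : L) :
    zsol k p (m • x) (m • y) = scH L m (zsol k p x y) := by
  have h := zsol_spec hk hp hC x y
  refine zsol_unique hk hp hC ?_ ?_
  · have : Rq k L 1 ≤ (Rq k L 1).comap (scH L m).toLinearMap := by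
      refine Fil_le fun i a hi ha => ?_
      rw [Submodule.mem_comap, LieHom.coe_toLinearMap, scH_xl]
      exact Submodule.smul_mem _ _ (Fil_gen hi ha)
    exact this h.1
  · have e : ∀ x : L, xl k 1 (m • x) = scH L m (xl k 1 x) := by
      intro x; rw [scH_xl, pow_one, map_smul]
    rw [e, e, ← defect_map (E := Er k L), h.2, map_zero]
    intro x
    refine lin_ext (f := (scH L m).toLinearMap.comp (Er k L)) (g := (Er k L).comp (scH L m).toLinearMap)
      (fun i a => ?_) x
    simp only [LinearMap.comp_apply, LieHom.coe_toLinearMap, Er_xl, scH_xl, map_smul]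
    rw [smul_comm]

lemma star_smul (hk : UnitsLt k p) (hp : 2 ≤ p) (hC : Cs k L (p - 1) = ⊥) (m : k) (x y : L) :
    star k p (m • x) (m • y) = evH k L m (zsol k p x y) := by
  rw [star, zsol_smul hk hp hC]
  refine lin_ext (f := (evH k L 1).toLinearMap.comp (scH L m).toLinearMap)
    (g := (evH k L m).toLinearMap) (fun i a => ?_) _
  simp [evH_xl, scH_xl]

lemma zsol_first (hk : UnitsLt k p) (hp : 2 ≤ p) (hC : Cs k L (p - 1) = ⊥) (x y : L) :
    zsol k p x y - xl k 1 (x + y) ∈ Rq k L 2 := by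
  have h := zsol_spec hk hp hC x y
  rw [map_add]
  exact (rees_WF (by omega) hC).first_order hp (xl_one_mem x) h.1 h.2

lemma star_sub_mem (hk : UnitsLt k p) (hp : 2 ≤ p) (hC : Cs k L (p - 1) = ⊥) (x y : L) :
    star k p x y - (x + y) ∈ Cs k L 1 := by
  have h := zsol_first hk hp hC x y
  have h2 : Rq k L 2 ≤ (Cs k L 1).comap (evH k L 1).toLinearMap := by
    refine Fil_le fun i a hi ha => ?_
    rw [Submodule.mem_comap, LieHom.coe_toLinearMap, evH_xl]
    obtain ⟨i, rfl⟩ : ∃ q, i = q + 1 := ⟨i - 1, by omega⟩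
    rw [mem_Sg] at ha
    exact Submodule.smul_mem _ _ (Cs_anti (by omega) ha)
  have := h2 h
  rw [Submodule.mem_comap, LieHom.coe_toLinearMap, map_sub, evH_xl] at this
  simpa [star] using this

lemma star_vand (hk : UnitsLt k p) (hp : 2 ≤ p) (hC : Cs k L (p - 1) = ⊥) {d : ℕ → k}
    (hd : ∀ j, j < p → ∑ m ∈ range p, d m * (m : k) ^ j = if j = 1 then 1 else 0) (x y : L) :
    ∑ m ∈ range p, d m • star k p ((m : k) • x) ((m : k) • y) = x + y := by
  let T : PL L →ₗ[k] L := ∑ m ∈ range p, d m • (evH k L (m : k)).toLinearMap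
  have hT : ∀ i a, i < p → T (xl k i a) = (if i = 1 then 1 else 0 : k) • a := by
    intro i a hi
    rw [← hd i hi]
    simp [T, LinearMap.sum_apply, evH_xl, Finset.sum_smul, mul_smul]
  have h := zsol_first hk hp hC x y
  have h2 : Rq k L 2 ≤ LinearMap.ker T := by
    refine Fil_le fun i a hi ha => ?_
    rw [LinearMap.mem_ker]
    by_cases hip : i < p
    · rw [hT i a hip, if_neg (by omega), zero_smul]
    · rw [Sg_bot (by omega) hC (not_lt.1 hip), Submodule.mem_bot] at ha
      rw [ha, map_zero, map_zero]
  have h3 := h2 h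
  rw [LinearMap.mem_ker, map_sub, hT 1 _ (by omega), if_pos rfl, one_smul, sub_eq_zero] at h3
  rw [← h3]
  simp [T, LinearMap.sum_apply, star_smul hk hp hC]

end star

section rep
variable {k : Type*} [CommRing k] {p : ℕ} {L : Type*} [LieRing L] [LieAlgebra k L]
  {B : Type*} [Ring B] [Algebra k B]

variable (k) in
/-- monomials in `B[X]` -/
noncomputable def xb (i : ℕ) : B →ₗ[k] B[X] where
  toFun b := monomial i b
  map_add' := by simp
  map_smul' c b := (Polynomial.smul_monomial c i b).symm

lemma xb_apply (i : ℕ) (b : B) : xb k i b = monomial i b := rfl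

variable (k B) in
/-- Euler operator in `B[X]` -/
noncomputable def Eb : B[X] →ₗ[k] B[X] where
  toFun q := X * derivative q
  map_add' := by simp [mul_add]
  map_smul' c b := by simp [derivative_smul]

lemma Eb_apply (q : B[X]) : Eb k B q = X * derivative q := rfl

lemma Eb_xb (i : ℕ) (a : B) : Eb k B (xb k i a) = (i : k) • xb k i a := by
  rw [xb_apply, Eb_apply, derivative_monomial, X_mul_monomial, smul_monomial]
  rcases i with _ | i
  · simp
  · congr 1
    simp only [Nat.add_sub_cancel, Nat.cast_smul_eq_nsmul, nsmul_eq_mul]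
    exact (Nat.cast_commute _ _).symm.eq

lemma Eb_mul (x y : B[X]) : Eb k B (x * y) = Eb k B x * y + x * Eb k B y := by
  rw [Eb_apply, Eb_apply, Eb_apply, derivative_mul, mul_add, mul_assoc, ← mul_assoc X x, X_mul (p := x), mul_assoc x X]

set_option maxHeartbeats 800000 in
lemma FA.poly {F : ℕ → Submodule k B} (hF : FA k p F) : FA k p (Fil (xb k) F) where
  anti h hx := Fil_anti h hx
  mul {i j x y} hx hy := by
    have h1 : Fil (xb k) F i ≤ (Fil (xb k) F (i + j)).comap (LinearMap.mulRight k y) := by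
      refine Fil_le fun m a hm ha => ?_
      have h2 : Fil (xb k) F j ≤ (Fil (xb k) F (i + j)).comap (LinearMap.mulLeft k (xb k m a)) := by
        refine Fil_le fun n b hn hb => ?_
        rw [Submodule.mem_comap, LinearMap.mulLeft_apply, xb_apply, xb_apply, monomial_mul_monomial,
          ← xb_apply (k := k)]
        have h3 : i + j ≤ m + n := by omega
        have h4 : a * b ∈ F (m + n) := hF.mul ha hb
        exact Fil_gen h3 h4
      exact h2 hy
    exact h1 hx
  one := by
    have h1 : (1 : B) ∈ F 0 := hF.one
    have h : xb k 0 (1 : B) ∈ Fil (xb k) F 0 := Fil_gen (Nat.le_refl 0) h1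
    rw [xb_apply] at h
    exact h
  bot hx := by
    have := Fil_bot (j := p) (xt := xb k) (S := F) fun i hi => by
      rw [eq_bot_iff]; intro x hx; simpa using hF.zero_of_le hi hx
    rw [this] at hx
    simpa using hx

lemma ex_map {B' : Type*} [Ring B'] [Algebra k B'] (f : B →ₐ[k] B') (x : B) :
    f (ex k p x) = ex k p (f x) := by simp [ex]

variable (k B) in
/-- evaluation at one -/
noncomputable def evB : B[X] →ₐ[k] B :=
  AlgHom.mk (eval₂RingHom' (RingHom.id B) 1 (fun _ => Commute.one_right _)) (by
    intro r; simp [eval₂RingHom'])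

lemma evB_xb (i : ℕ) (b : B) : evB k B (xb k i b) = b := by
  simp [evB, xb_apply, eval₂RingHom', eval₂_monomial]

lemma FA.ode {F : ℕ → Submodule k B} (hF : FA k p F) (hk : UnitsLt k p) (hp : 0 < p) (E : B →ₗ[k] B)
    (hE : ∀ j x, x ∈ F j → E x - (j : k) • x ∈ F (j + 1)) {z A A' : B} (hz : z ∈ F 1)
    (hAm : A ∈ F 1) (hA'm : A' ∈ F 1)
    (hg : E (ex k p z) = A * ex k p z + ex k p z * A')
    (hh : E (ex k p A * ex k p A') = A * (ex k p A * ex k p A') + (ex k p A * ex k p A') * A') :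
    ex k p z = ex k p A * ex k p A' := by
  rw [← sub_eq_zero]
  refine filt_zero (Q := F) (E := E) (p := p) hF.anti hF.bot (fun {j x} => hE j x) hk ?_ ?_
  · have h1 := hF.ex_sub_one (k := k) hp hz
    have h2 := hF.ex_sub_one (k := k) hp hAm
    have h3 := hF.ex_sub_one (k := k) hp hA'm
    have h4 := hF.ex_mem hAm
    have : ex k p z - ex k p A * ex k p A' =
      (ex k p z - 1) - (ex k p A * (ex k p A' - 1) + (ex k p A - 1)) := by noncomm_ring
    rw [this]
    exact Submodule.sub_mem _ h1 (Submodule.add_mem _ (hF.anti (by omega) (hF.mul h4 h3)) h2)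
  · intro j hj hd
    rw [map_sub, hg, hh]
    have : A * ex k p z + ex k p z * A' -
        (A * (ex k p A * ex k p A') + ex k p A * ex k p A' * A') =
        A * (ex k p z - ex k p A * ex k p A') + (ex k p z - ex k p A * ex k p A') * A' := by
      noncomm_ring
    rw [this]
    exact Submodule.add_mem _ (hF.anti (by omega) (hF.mul hAm hd)) (hF.mul hd hA'm)

set_option maxHeartbeats 2000000 in
/-- main lemma on representations -/
lemma rep_star (hk : UnitsLt k p) (hp : 2 ≤ p) (hC : Cs k L (p - 1) = ⊥)
    {F : ℕ → Submodule k B} (hF : FA k p F) (ρ : L →ₗ[k] B)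
    (hρl : ∀ x y, ρ ⁅x, y⁆ = adB (ρ x) (ρ y)) (hρ : ∀ x, ρ x ∈ F 1) (a b : L) :
    ex k p (ρ (star k p a b)) = ex k p (ρ a) * ex k p (ρ b) := by
  have hρC : ∀ i x, x ∈ Cs k L i → ρ x ∈ F (i + 1) := by
    intro i x hx
    have := Cs_le_of (k := k) (M := L) (Q := fun i => (F (i + 1)).comap ρ)
      (by ext x; simpa using hρ x) (by
        intro i a b hb
        simp only [Submodule.mem_comap] at hb ⊢
        rw [hρl, adB]
        exact Submodule.sub_mem _ (hF.anti (by omega) (hF.mul (hρ a) hb))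
          (hF.anti (by omega) (hF.mul hb (hρ a)))) i hx
    exact this
  have hFp := hF.poly
  let R : PL L →ₗ[k] B[X] := plLift k fun i => (xb k i).comp ρ
  have R_xl : ∀ i a, R (xl k i a) = xb k i (ρ a) := fun i a => plLift_xl _ i a
  have R_lie : ∀ x y, R ⁅x, y⁆ = adB (R x) (R y) := by
    intro x y
    refine PL.ind k x (by simp [adB]) (fun f g hf hg => by
      rw [add_lie, map_add, map_add, hf, hg]; simp only [adB]; noncomm_ring) fun i a => ?_
    refine PL.ind k y (by simp [adB]) (fun f g hf hg => by
      rw [lie_add, map_add, map_add, hf, hg]; simp only [adB]; noncomm_ring) fun j b => ?_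
    rw [xl_br, R_xl, R_xl, R_xl, adB, xb_apply, xb_apply, xb_apply, monomial_mul_monomial,
          monomial_mul_monomial, add_comm j i, ← map_sub, hρl, adB]
  have R_ad : ∀ z y i, R ((adL z)^[i] y) = (adB (R z))^[i] (R y) := by
    intro z y i
    induction i with
    | zero => rfl
    | succ i ih => rw [Function.iterate_succ_apply', Function.iterate_succ_apply', ← ih, adL, R_lie]
  have R_E : ∀ z, R (Er k L z) = Eb k B (R z) :=
    lin_ext (f := R.comp (Er k L)) (g := (Eb k B).comp R) fun i a => by simp [Er_xl, R_xl, Eb_xb]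
  have R_mem : ∀ j z, z ∈ Rq k L j → R z ∈ Fil (xb k) F j := by
    intro j z hz
    have : Rq k L j ≤ (Fil (xb k) F j).comap R := by
      refine Fil_le fun i a hi ha => ?_
      rw [Submodule.mem_comap, R_xl]
      rcases i with _ | i
      · rw [Sg_zero] at ha; simp [ha]
      · exact Fil_gen hi (hρC _ _ (mem_Sg.1 ha))
    exact this hz
  obtain ⟨hz, hz0⟩ := zsol_spec hk hp hC a b
  set z := zsol k p a b with hzdef
  have hRz := R_mem 1 z hz
  set A := xb k 1 (ρ a) with hA
  set A' := xb k 1 (ρ b) with hA'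
  have hAm : A ∈ Fil (xb k) F 1 := Fil_gen le_rfl (hρ a)
  have hA'm : A' ∈ Fil (xb k) F 1 := Fil_gen le_rfl (hρ b)
  have hEA : ∀ x, Eb k B (xb k 1 (ρ x)) = xb k 1 (ρ x) := fun x => by rw [Eb_xb]; simp
  have hE0 : ∀ {q}, q ∈ Fil (xb k) F 1 → Eb k B q ∈ Fil (xb k) F 1 := by
    intro q hq
    have := Submodule.add_mem _ (hFp.anti (Nat.le_succ 1) (Fil_eul Eb_xb hq))
      (Submodule.smul_mem _ ((1 : ℕ) : k) hq)
    simpa using this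
  -- derivative of g
  have hg : Eb k B (ex k p (R z)) = A * ex k p (R z) + ex k p (R z) * A' := by
    rw [hFp.der_ex hk (by omega) (Eb k B) Eb_mul hRz (hE0 hRz), hFp.mul_ex hk hRz (hFp.anti (Nat.zero_le 1) hAm),
      ← mul_add]
    congr 1
    rw [defect, sub_eq_zero] at hz0
    have := congrArg R hz0
    simp only [map_add, map_sum, map_smul, R_ad, R_E, R_xl] at this
    rw [this, add_comm]
  have hexA : ∀ x, Eb k B (ex k p (xb k 1 (ρ x))) = ex k p (xb k 1 (ρ x)) * xb k 1 (ρ x) := by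
    intro x
    have hm : xb k 1 (ρ x) ∈ Fil (xb k) F 1 := Fil_gen le_rfl (hρ x)
    rw [hFp.der_ex hk (by omega) (Eb k B) Eb_mul hm (hE0 hm), hEA]
    congr 1
    obtain ⟨q, rfl⟩ : ∃ q, p = q + 2 := ⟨p - 2, by omega⟩
    rw [show q + 2 - 1 = q + 1 by omega, Finset.sum_range_succ']
    have : ∀ i, (adB (xb k 1 (ρ x)))^[i + 1] (xb k 1 (ρ x)) = 0 := by
      intro i
      induction i with
      | zero => simp [adB]
      | succ i ih => rw [Function.iterate_succ_apply', ih]; simp [adB]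
    simp [this]
  have hcomm : ∀ x : B[X], ex k p x * x = x * ex k p x := by
    intro x
    simp only [ex, Finset.sum_mul, Finset.mul_sum, smul_mul_assoc, mul_smul_comm, ← pow_succ, ← pow_succ']
  have hh : Eb k B (ex k p A * ex k p A') = A * (ex k p A * ex k p A') + (ex k p A * ex k p A') * A' := by
    rw [Eb_mul, hexA, hexA, hcomm]; noncomm_ring
  have hEe : ∀ j x, x ∈ Fil (xb k) F j → Eb k B x - (j : k) • x ∈ Fil (xb k) F (j + 1) :=
    fun j x hx => Fil_eul Eb_xb hx
  have key := hFp.ode hk (by omega) (Eb k B) hEe hRz hAm hA'm hg hh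
  have h5 := congrArg (evB k B) key
  rw [map_mul, ex_map, ex_map, ex_map, hA, hA', evB_xb, evB_xb] at h5
  rw [← h5]
  congr 1
  rw [star, ← hzdef]
  refine lin_ext (f := ρ.comp (evH k L 1).toLinearMap)
    (g := (evB k B).toLinearMap.comp R) (fun i a => ?_) z
  simp [evH_xl, R_xl, evB_xb]

end rep
end Laz


namespace Laz
open Finset

section faith
variable {k : Type*} [CommRing k] {p : ℕ} {M : Type*} [LieRing M] [LieAlgebra k M]

/-- the representation on `M × k` -/
def rhoM (E : M →ₗ[k] M) : M →ₗ[k] Module.End k (M × k) where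
  toFun w :=
    { toFun := fun v => (⁅w, v.1⁆ + v.2 • E w, 0)
      map_add' := fun v v' => by
        refine Prod.ext ?_ (by simp)
        simp only [Prod.fst_add, Prod.snd_add, lie_add, add_smul]; abel
      map_smul' := fun c v => by
        refine Prod.ext ?_ (by simp)
        simp only [Prod.smul_fst, Prod.smul_snd, lie_smul, smul_add, smul_eq_mul, mul_smul, RingHom.id_apply] }
  map_add' w w' := by
    refine LinearMap.ext fun v => Prod.ext ?_ (by simp)
    simp only [LinearMap.coe_mk, AddHom.coe_mk, add_lie, map_add, smul_add, LinearMap.add_apply, Prod.fst_add]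
    abel
  map_smul' c w := by
    refine LinearMap.ext fun v => Prod.ext ?_ (by simp)
    simp only [LinearMap.coe_mk, AddHom.coe_mk, smul_lie, map_smul, smul_add, LinearMap.smul_apply,
      Prod.smul_fst, RingHom.id_apply]
    rw [smul_comm]

lemma rhoM_apply (E : M →ₗ[k] M) (w : M) (v : M × k) : rhoM E w v = (⁅w, v.1⁆ + v.2 • E w, 0) := rfl

lemma rhoM_lie (E : M →ₗ[k] M) (hE : ∀ x y, E ⁅x, y⁆ = ⁅E x, y⁆ + ⁅x, E y⁆) (x y : M) :
    rhoM E ⁅x, y⁆ = adB (rhoM E x) (rhoM E y) := by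
  refine LinearMap.ext fun v => ?_
  rw [adB, LinearMap.sub_apply, Module.End.mul_apply, Module.End.mul_apply]
  refine Prod.ext ?_ (by simp [rhoM_apply])
  simp only [rhoM_apply, Prod.fst_sub, zero_smul, add_zero, lie_add, lie_smul, hE, smul_add, lie_lie]
  rw [← lie_skew (E x) y]
  simp only [smul_neg]
  abel

/-- filtration on the module -/
def Qh (Q : ℕ → Submodule k M) (i : ℕ) : Submodule k (M × k) :=
  if i = 0 then ⊤ else (Q i).prod ⊥

/-- filtration on the endomorphisms -/
def Fh (Q : ℕ → Submodule k M) (j : ℕ) : Submodule k (Module.End k (M × k)) where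
  carrier := {f | ∀ i v, v ∈ Qh Q i → f v ∈ Qh Q (i + j)}
  add_mem' hf hg i v hv := Submodule.add_mem _ (hf i v hv) (hg i v hv)
  zero_mem' i v _ := Submodule.zero_mem _
  smul_mem' c f hf i v hv := Submodule.smul_mem _ _ (hf i v hv)

variable {Q : ℕ → Submodule k M} {E : M →ₗ[k] M}

lemma WF.Qh_anti (hW : WF k p Q E) {i j : ℕ} (h : i ≤ j) {v : M × k} (hv : v ∈ Qh Q j) : v ∈ Qh Q i := by
  unfold Qh at *
  split_ifs with h0
  · trivial
  · rw [if_neg (by omega)] at hv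
    rw [Submodule.mem_prod] at *
    exact ⟨hW.anti h hv.1, hv.2⟩

lemma WF.FA (hW : WF k p Q E) (hp : 0 < p) : FA k p (Fh Q) where
  anti {i j f} h hf l v hv := hW.Qh_anti (by omega) (hf l v hv)
  mul {i j f g} hf hg l v hv := by
    have := hf _ _ (hg l v hv)
    rwa [show l + (i + j) = l + j + i by omega]
  one i v hv := hv
  bot {f} hf := by
    refine LinearMap.ext fun v => ?_
    have := hf 0 v (by simp [Qh])
    rw [Qh, if_neg (by omega), Submodule.mem_prod, zero_add] at this
    exact Prod.ext (hW.bot this.1) (by simpa using this.2)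

lemma WF.rho_mem (hW : WF k p Q E) (h1 : Q 1 = ⊤) (w : M) : rhoM E w ∈ Fh Q 1 := by
  intro i v hv
  have hw : w ∈ Q 1 := by rw [h1]; trivial
  rw [rhoM_apply, Qh, if_neg (by omega), Submodule.mem_prod]
  refine ⟨?_, by simp⟩
  unfold Qh at hv
  split_ifs at hv with h0
  · subst h0
    simp only [zero_add, h1]; trivial
  · rw [Submodule.mem_prod] at hv
    have : v.2 = 0 := by simpa using hv.2
    rw [this, zero_smul, add_zero, add_comm i 1]
    exact hW.br hw hv.1

lemma WF.rho_inj (hW : WF k p Q E) (hk : UnitsLt k p) (h1 : Q 1 = ⊤) {w w' : M}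
    (h : rhoM E w = rhoM E w') : w = w' := by
  have h2 : E (w - w') = 0 := by
    have := congrArg (fun f => (f (0, 1)).1) h
    simp only [rhoM_apply, lie_zero, one_smul, zero_add] at this
    rw [map_sub, this, sub_self]
  rw [← sub_eq_zero]
  refine hW.zero_of_step hk (by rw [h1]; trivial) fun j _ _ => ?_
  rw [h2]; exact Submodule.zero_mem _

lemma WF.Cs_bot (hW : WF k p Q E) (h1 : Q 1 = ⊤) (hp : 1 ≤ p) : Cs k M (p - 1) = ⊥ := by
  rw [eq_bot_iff]
  have := Cs_le_of (k := k) (M := M) (Q := fun i => Q (i + 1)) (by simpa using h1)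
    (fun i a b hb => by
      have ha : a ∈ Q 1 := by rw [h1]; trivial
      have := hW.br ha hb
      rwa [add_comm 1 (i + 1)] at this) (p - 1)
  refine this.trans ?_
  intro x hx
  simp only [show p - 1 + 1 = p by omega] at hx
  simpa using hW.bot hx

lemma WF.star_assoc (hW : WF k p Q E) (hE : ∀ x y, E ⁅x, y⁆ = ⁅E x, y⁆ + ⁅x, E y⁆)
    (hk : UnitsLt k p) (hp : 2 ≤ p) (h1 : Q 1 = ⊤) (x y z : M) :
    star k p (star k p x y) z = star k p x (star k p y z) := by
  have hF := hW.FA (by omega)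
  have hm := hW.rho_mem h1
  have hr := rep_star hk hp (hW.Cs_bot h1 (by omega)) hF (rhoM E) (rhoM_lie E hE) hm
  refine hW.rho_inj hk h1 (hF.ex_inj hp (hm _) (hm _) ?_)
  rw [hr, hr, hr, hr, mul_assoc]

lemma WF.star_comm (hW : WF k p Q E) (hE : ∀ x y, E ⁅x, y⁆ = ⁅E x, y⁆ + ⁅x, E y⁆)
    (hk : UnitsLt k p) (hp : 2 ≤ p) (h1 : Q 1 = ⊤) (x y : M) (hxy : ⁅x, y⁆ = 0) :
    star k p x y = x + y := by
  have hF := hW.FA (by omega)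
  have hm := hW.rho_mem h1
  have hr := rep_star hk hp (hW.Cs_bot h1 (by omega)) hF (rhoM E) (rhoM_lie E hE) hm
  refine hW.rho_inj hk h1 (hF.ex_inj hp (hm _) (hm _) ?_)
  rw [hr, map_add, hF.ex_add hk (hm _) (hm _)]
  have := rhoM_lie E hE x y
  rw [hxy, map_zero, adB] at this
  exact (sub_eq_zero.1 this.symm)

lemma WF.star_conj (hW : WF k p Q E) (hE : ∀ x y, E ⁅x, y⁆ = ⁅E x, y⁆ + ⁅x, E y⁆)
    (hk : UnitsLt k p) (hp : 2 ≤ p) (h1 : Q 1 = ⊤) (x y : M) :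
    star k p (star k p x y) (-x) = ∑ i ∈ range p, ci k i • (adL x)^[i] y := by
  have hF := hW.FA (by omega)
  have hm := hW.rho_mem h1
  have hr := rep_star hk hp (hW.Cs_bot h1 (by omega)) hF (rhoM E) (rhoM_lie E hE) hm
  refine hW.rho_inj hk h1 (hF.ex_inj hp (hm _) (hm _) ?_)
  have had : ∀ i, rhoM E ((adL x)^[i] y) = (adB (rhoM E x))^[i] (rhoM E y) := by
    intro i
    induction i with
    | zero => rfl
    | succ i ih => rw [Function.iterate_succ_apply', Function.iterate_succ_apply', ← ih, adL, rhoM_lie E hE]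
  rw [hr, hr, map_neg, hF.conj_ex hk (by omega) (hm _) (hF.anti (by omega) (hm _))]
  simp only [map_sum, map_smul, had]

end faith

section transfer
variable {k : Type*} [CommRing k] {p : ℕ} {L : Type*} [LieRing L] [LieAlgebra k L]

variable (k L) in
/-- the nilpotent part of the Rees algebra -/
noncomputable def NL : LieSubalgebra k (PL L) :=
  { Rq k L 1 with
    lie_mem' := fun {x y} hx hy => Fil_anti (by omega) (Rq_br hx hy) }

lemma mem_NL {x : PL L} : x ∈ NL k L ↔ x ∈ Rq k L 1 := Iff.rfl

variable (k L) in
/-- restricted Euler operator -/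
noncomputable def ENL : NL k L →ₗ[k] NL k L :=
  LinearMap.codRestrict (NL k L).toSubmodule ((Er k L).comp (NL k L).toSubmodule.subtype) (by
    rintro ⟨x, hx⟩
    have hx : x ∈ Rq k L 1 := hx
    have := Submodule.add_mem _ (Fil_anti (Nat.le_succ 1) (Fil_eul Er_xl hx))
      (Submodule.smul_mem _ ((1 : ℕ) : k) hx)
    rw [sub_add_cancel] at this
    exact this)

lemma ENL_coe (x : NL k L) : (ENL k L x : PL L) = Er k L x := rfl

lemma NL_WF (hp : 1 ≤ p) (hC : Cs k L (p - 1) = ⊥) :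
    WF k p (fun j => (Rq k L j).comap (NL k L).toSubmodule.subtype) (ENL k L) := by
  have h := rees_WF (k := k) (L := L) hp hC
  exact
  { anti := fun hij hx => h.anti hij hx
    br := fun {i j x y} hx hy => h.br (x := (x : PL L)) (y := (y : PL L)) hx hy
    bot := fun {x} hx => Subtype.ext (h.bot hx)
    eul := fun {j x} hx => h.eul (x := (x : PL L)) hx }

lemma NL_der (x y : NL k L) : ENL k L ⁅x, y⁆ = ⁅ENL k L x, y⁆ + ⁅x, ENL k L y⁆ :=
  Subtype.ext (Er_br (x : PL L) (y : PL L))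

lemma NL_one : (Rq k L 1).comap (NL k L).toSubmodule.subtype = ⊤ := by
  ext x; simp only [Submodule.mem_comap, Submodule.mem_top, iff_true]; exact x.2

variable (k L) in
/-- projection -/
noncomputable def piL : NL k L →ₗ⁅k⁆ L := (evH k L 1).comp (NL k L).incl

variable (k) in
/-- section -/
noncomputable def siL (x : L) : NL k L := ⟨xl k 1 x, xl_one_mem x⟩

lemma piL_siL (x : L) : piL k L (siL k x) = x := by
  have : evH k L 1 (xl k 1 x) = x := by rw [evH_xl]; simp
  exact this

lemma siL_lie {x y : L} (h : ⁅x, y⁆ = 0) : ⁅siL k x, siL k y⁆ = 0 := by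
  refine Subtype.ext ?_
  have := xl_br (k := k) 1 1 x y
  rw [h, map_zero] at this
  exact this

variable (hk : UnitsLt k p) (hp : 2 ≤ p) (hC : Cs k L (p - 1) = ⊥)

include hk hp hC
lemma star_assoc (x y z : L) : star k p (star k p x y) z = star k p x (star k p y z) := by
  have hW := NL_WF (k := k) (L := L) (by omega) hC
  have := congrArg (piL k L) (hW.star_assoc NL_der hk hp NL_one (siL k x) (siL k y) (siL k z))
  simpa only [star_map hk hp (hW.Cs_bot NL_one (by omega)) hC, piL_siL] using this

lemma star_comm {x y : L} (h : ⁅x, y⁆ = 0) : star k p x y = x + y := by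
  have hW := NL_WF (k := k) (L := L) (by omega) hC
  have := congrArg (piL k L) (hW.star_comm NL_der hk hp NL_one (siL k x) (siL k y) (siL_lie h))
  simpa only [star_map hk hp (hW.Cs_bot NL_one (by omega)) hC, piL_siL, map_add] using this

lemma star_conj (x y : L) : star k p (star k p x y) (-x) = ∑ i ∈ range p, ci k i • (adL x)^[i] y := by
  have hW := NL_WF (k := k) (L := L) (by omega) hC
  have := congrArg (piL k L) (hW.star_conj NL_der hk hp NL_one (siL k x) (siL k y))
  simpa only [star_map hk hp (hW.Cs_bot NL_one (by omega)) hC, piL_siL, map_neg, map_sum, map_smul,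
    adL_map] using this

end transfer
end Laz


namespace Laz
open Finset

section basics
variable {k : Type*} [CommRing k] {p : ℕ} {L : Type*} [LieRing L] [LieAlgebra k L]
  (hk : UnitsLt k p) (hp : 2 ≤ p) (hC : Cs k L (p - 1) = ⊥)

lemma adL_lin (c : k) (x y : L) (i : ℕ) : (adL (c • x))^[i] y = c ^ i • (adL x)^[i] y := by
  induction i with
  | zero => simp
  | succ i ih =>
    rw [Function.iterate_succ_apply', Function.iterate_succ_apply', ih, adL, adL, smul_lie, lie_smul, smul_smul,
      pow_succ']

include hk hp hC
lemma star_zero_right (x : L) : star k p x 0 = x := by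
  rw [star_comm hk hp hC (lie_zero x), add_zero]

lemma star_zero_left (x : L) : star k p 0 x = x := by
  rw [star_comm hk hp hC (zero_lie x), zero_add]

lemma star_neg_right (x : L) : star k p x (-x) = 0 := by
  rw [star_comm hk hp hC (by simp), add_neg_cancel]

lemma star_neg_left (x : L) : star k p (-x) x = 0 := by
  rw [star_comm hk hp hC (by simp), neg_add_cancel]

lemma star_smul_smul (a b : k) (x : L) : star k p (a • x) (b • x) = (a + b) • x := by
  rw [star_comm hk hp hC (by simp), add_smul]

lemma star_eq_zero {x y : L} (h : star k p x y = 0) : y = -x := by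
  rw [← star_zero_left hk hp hC y, ← star_neg_left hk hp hC x, star_assoc hk hp hC, h,
    star_zero_right hk hp hC]

lemma conj_smul (c : k) (x y : L) : star k p (star k p (c • x) y) (-(c • x)) =
    ∑ i ∈ range p, (c ^ i * ci k i) • (adL x)^[i] y := by
  rw [star_conj hk hp hC]
  refine Finset.sum_congr rfl fun i _ => ?_
  rw [adL_lin, smul_smul, mul_comm]

lemma bracket_vand {d : ℕ → k}
    (hd : ∀ j, j < p → ∑ m ∈ range p, d m * (m : k) ^ j = if j = 1 then 1 else 0) (x y : L) :
    ∑ m ∈ range p, d m • star k p (star k p ((m : k) • x) y) (-((m : k) • x)) = ⁅x, y⁆ := by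
  simp only [conj_smul hk hp hC, Finset.smul_sum, smul_smul]
  rw [Finset.sum_comm]
  have : ∀ i ∈ range p, ∑ m ∈ range p, (d m * ((m : k) ^ i * ci k i)) • (adL x)^[i] y =
      if i = 1 then ⁅x, y⁆ else 0 := by
    intro i hi
    rw [← Finset.sum_smul]
    simp only [← mul_assoc]
    rw [← Finset.sum_mul, hd i (Finset.mem_range.1 hi)]
    split_ifs with h
    · subst h; simp [ci_one, adL]
    · simp
  rw [Finset.sum_congr rfl this]
  simp; omega

lemma star_commute {x y : L} (h : star k p x y = star k p y x) : ⁅x, y⁆ = 0 := by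
  have hm : ∀ m : ℕ, star k p ((m : k) • x) y = star k p y ((m : k) • x) := by
    intro m
    induction m with
    | zero => simp [star_zero_left hk hp hC, star_zero_right hk hp hC]
    | succ m ih =>
      have e : ((m + 1 : ℕ) : k) • x = star k p ((m : k) • x) x := by
        have := star_smul_smul hk hp hC (m : k) 1 x
        rw [one_smul] at this
        rw [this]; push_cast; rfl
      rw [e, star_assoc hk hp hC, h, ← star_assoc hk hp hC, ih, star_assoc hk hp hC]
  obtain ⟨d, hd⟩ := exists_vand hk hp
  rw [← bracket_vand hk hp hC hd x y]
  simp only [hm, star_assoc hk hp hC, star_neg_right hk hp hC, star_zero_right hk hp hC]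
  have := hd 0 (by omega)
  simp only [pow_zero, mul_one] at this
  rw [← Finset.sum_smul, this]; simp

end basics

section full
variable {k : Type*} [CommRing k] {p : ℕ} (hk : UnitsLt k p) (hp : 2 ≤ p)
  (hs : Function.Surjective (Nat.cast : ℕ → k))

section one
variable {L : Type*} [LieRing L] [LieAlgebra k L] {L' : Type*} [LieRing L'] [LieAlgebra k L']
  (hC : Cs k L (p - 1) = ⊥) (hC' : Cs k L' (p - 1) = ⊥) {f : L → L'}
  (hf : ∀ x y, f (star k p x y) = star k p (f x) (f y))

include hk hp hC hC' hf
lemma full_zero : f 0 = 0 := by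
  have := hf 0 0
  rw [star_zero_left hk hp hC, star_comm hk hp hC' (by simp)] at this
  simpa using this

lemma full_neg (x : L) : f (-x) = - f x := by
  refine star_eq_zero hk hp hC' ?_
  rw [← hf, star_neg_right hk hp hC, full_zero hk hp hC hC' hf]

lemma full_nat (m : ℕ) (x : L) : f ((m : k) • x) = (m : k) • f x := by
  induction m with
  | zero => simp [full_zero hk hp hC hC' hf]
  | succ m ih =>
    have h1 := star_smul_smul hk hp hC (m : k) 1 x
    have h2 := star_smul_smul hk hp hC' (m : k) 1 (f x)
    rw [one_smul] at h1 h2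
    push_cast
    rw [← h1, hf, ih, h2]

include hs in
lemma full_smul (c : k) (x : L) : f (c • x) = c • f x := by
  obtain ⟨m, rfl⟩ := hs c
  exact full_nat hk hp hC hC' hf m x

include hs in
lemma full_lie (ha : ∀ x y, f (x + y) = f x + f y) (x y : L) : f ⁅x, y⁆ = ⁅f x, f y⁆ := by
  let F : L →ₗ[k] L' :=
    { toFun := f, map_add' := ha, map_smul' := full_smul hk hp hs hC hC' hf }
  have hF : ∀ x, F x = f x := fun _ => rfl
  obtain ⟨d, hd⟩ := exists_vand hk hp
  rw [← bracket_vand hk hp hC hd x y, ← bracket_vand hk hp hC' hd, ← hF]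
  rw [map_sum]
  simp only [map_smul]
  simp only [hF, hf, full_neg hk hp hC hC' hf, full_smul hk hp hs hC hC' hf]

end one

variable (k) in
/-- subalgebra generated by `s` and the derived algebra -/
def HS {L : Type*} [LieRing L] [LieAlgebra k L] (s : L) : LieSubalgebra k L :=
  { Submodule.span k {s} ⊔ Cs k L 1 with
    lie_mem' := fun {x y} _ _ => Submodule.mem_sup_right (Cs_br_step (i := 0) trivial) }

lemma mem_HS {L : Type*} [LieRing L] [LieAlgebra k L] {s x : L} :
    x ∈ HS k s ↔ ∃ a : k, ∃ u ∈ Cs k L 1, a • s + u = x := by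
  change x ∈ Submodule.span k {s} ⊔ Cs k L 1 ↔ _
  rw [Submodule.mem_sup]
  constructor
  · rintro ⟨y, hy, z, hz, rfl⟩
    obtain ⟨a, rfl⟩ := Submodule.mem_span_singleton.1 hy
    exact ⟨a, z, hz, rfl⟩
  · rintro ⟨a, u, hu, rfl⟩
    exact ⟨_, Submodule.mem_span_singleton.2 ⟨a, rfl⟩, u, hu, rfl⟩

lemma HS_Cs {L : Type*} [LieRing L] [LieAlgebra k L] (s : L) (i : ℕ) :
    ∀ x ∈ Cs k (HS k s) (i + 1), (x : L) ∈ Cs k L (i + 2) := by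
  induction i with
  | zero =>
    intro x hx
    have : Cs k (HS k s) 1 ≤ (Cs k L 2).comap (HS k s).toSubmodule.subtype := by
      rw [Cs, Submodule.span_le]
      rintro _ ⟨⟨a, ha⟩, ⟨b, hb⟩, -, rfl⟩
      change ⁅a, b⁆ ∈ Cs k L 2
      obtain ⟨r, u, hu, rfl⟩ := mem_HS.1 ha
      obtain ⟨r', u', hu', rfl⟩ := mem_HS.1 hb
      have h1 : ⁅s, u'⁆ ∈ Cs k L 2 := Cs_br_step hu'
      have h2 : ⁅u, s⁆ ∈ Cs k L 2 := by
        rw [← lie_skew]; exact Submodule.neg_mem _ (Cs_br_step hu)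
      have h3 : ⁅u, u'⁆ ∈ Cs k L 2 := Cs_br_step hu'
      simp only [lie_add, add_lie, lie_smul, smul_lie, lie_self, smul_zero, zero_add]
      exact Submodule.add_mem _ (Submodule.smul_mem _ _ h2)
        (Submodule.add_mem _ (Submodule.smul_mem _ _ h1) h3)
    exact this hx
  | succ i ih =>
    intro x hx
    have : Cs k (HS k s) (i + 1 + 1) ≤ (Cs k L (i + 1 + 2)).comap (HS k s).toSubmodule.subtype := by
      conv_lhs => rw [Cs]
      rw [Submodule.span_le]
      rintro _ ⟨a, b, hb, rfl⟩
      exact Cs_br_step (ih b hb)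
    exact this hx

include hk hp hs in
lemma full_add {L' : Type*} [LieRing L'] [LieAlgebra k L'] (hC' : Cs k L' (p - 1) = ⊥) (c : ℕ) :
    ∀ {L : Type*} [LieRing L] [LieAlgebra k L] (_ : Cs k L (p - 1) = ⊥) (_ : Cs k L c = ⊥) (f : L → L')
      (_ : ∀ x y, f (star k p x y) = star k p (f x) (f y)) (x y : L), f (x + y) = f x + f y := by
  induction c with
  | zero =>
    intro L _ _ hC hc f hf x y
    have h0 : ∀ z : L, z = 0 := fun z => by
      have : z ∈ Cs k L 0 := trivial
      rw [hc] at this; simpa using this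
    rw [h0 x, h0 y]; simp [full_zero hk hp hC hC' hf]
  | succ c ih =>
    intro L _ _ hC hc f hf x y
    rcases Nat.eq_zero_or_pos c with rfl | hc0
    · have h0 : ∀ x y : L, ⁅x, y⁆ = 0 := fun x y => by
        have : ⁅x, y⁆ ∈ Cs k L 1 := Cs_br_step trivial
        rw [hc] at this; simpa using this
      have e : star k p (f x) (f y) = star k p (f y) (f x) := by
        rw [← hf, ← hf, star_comm hk hp hC (h0 _ _), star_comm hk hp hC (h0 _ _), add_comm]
      rw [← star_comm hk hp hC (h0 x y), hf, star_comm hk hp hC' (star_commute hk hp hC' e)]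
    · obtain ⟨d, hd⟩ := exists_vand hk hp
      have hi : ∀ z ∈ HS k (x + y), z ∈ HS k (x + y) := fun _ h => h
      have hmem : ∀ m : k, star k p (m • x) (m • y) ∈ HS k (x + y) := by
        intro m
        refine mem_HS.2 ⟨m, _, star_sub_mem hk hp hC (m • x) (m • y), ?_⟩
        rw [smul_add]; abel
      have hsm : x + y ∈ HS k (x + y) := mem_HS.2 ⟨1, 0, Submodule.zero_mem _, by simp⟩
      have hHc : ∀ i, 0 < i → Cs k L (i + 1) = ⊥ → Cs k (HS k (x + y)) i = ⊥ := by
        intro i hi h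
        rw [eq_bot_iff]
        intro z hz
        obtain ⟨i, rfl⟩ : ∃ q, i = q + 1 := ⟨i - 1, by omega⟩
        have := HS_Cs _ _ z hz
        rw [h] at this
        rw [Submodule.mem_bot] at this ⊢
        exact Subtype.ext this
      have hHp : Cs k (HS k (x + y)) (p - 1) = ⊥ := by
        rw [eq_bot_iff]
        intro z hz
        have := Cs_map (HS k (x + y)).incl _ hz
        rw [hC] at this
        rw [Submodule.mem_bot] at this ⊢
        exact Subtype.ext this
      have hfH : ∀ u v : HS k (x + y), f ((star k p u v : HS k (x + y)) : L) =
          star k p (f (u : L)) (f (v : L)) := by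
        intro u v
        rw [← hf]
        congr 1
        exact star_map hk hp hHp hC (HS k (x + y)).incl u v
      have hadd := ih hHp (hHc c hc0 hc) (fun z => f (z : L)) hfH
      let F : HS k (x + y) →ₗ[k] L' :=
        { toFun := fun z => f (z : L), map_add' := hadd, map_smul' := fun c z => full_smul hk hp hs hC hC' hf c (z : L) }
      have hv := star_vand hk hp hC hd x y
      have hv' : ∑ m ∈ range p, d m • (⟨_, hmem (m : k)⟩ : HS k (x + y)) = ⟨x + y, hsm⟩ := by
        refine Subtype.ext ?_
        have := map_sum (HS k (x + y)).toSubmodule.subtype (fun m => d m • (⟨_, hmem (m : k)⟩ : HS k (x + y))) (range p)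
        exact this.trans hv
      have := congrArg F hv'
      rw [map_sum] at this
      simp only [map_smul] at this
      have e : ∀ z, F z = f (z : L) := fun _ => rfl
      simp only [e, hf, full_smul hk hp hs hC hC' hf] at this
      rw [← this, star_vand hk hp hC' hd]

include hk hp hs in
/-- star homomorphisms are Lie homomorphisms -/
lemma full_hom {L : Type*} [LieRing L] [LieAlgebra k L] {L' : Type*} [LieRing L'] [LieAlgebra k L']
    (hC : Cs k L (p - 1) = ⊥) (hC' : Cs k L' (p - 1) = ⊥) (f : L → L')
    (hf : ∀ x y, f (star k p x y) = star k p (f x) (f y)) : ∃ F : L →ₗ⁅k⁆ L', ∀ x, F x = f x := by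
  have ha := full_add hk hp hs hC' _ hC hC f hf
  exact ⟨{ toFun := f, map_add' := ha, map_smul' := full_smul hk hp hs hC hC' hf,
           map_lie' := full_lie hk hp hs hC hC' hf ha _ _ }, fun _ => rfl⟩

end full
end Laz


namespace Laz
open Finset

section chain
variable {k : Type*} [CommRing k] {p : ℕ}

lemma card_sub_dvd {K : Type*} [AddCommGroup K] [Module k K] {A B : Submodule k K} (h : A ≤ B) :
    Nat.card A ∣ Nat.card B := AddSubgroup.card_dvd_of_le (H := A.toAddSubgroup) (K := B.toAddSubgroup) h

lemma eq_of_card {K : Type*} [AddCommGroup K] [Module k K] [Finite K] {A B : Submodule k K} (h : A ≤ B)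
    (hc : Nat.card A = Nat.card B) : A = B := by
  have := Set.eq_of_subset_of_ncard_le (s := (A : Set K)) (t := (B : Set K)) h
    (by rw [← Nat.card_coe_set_eq, ← Nat.card_coe_set_eq]; exact hc.ge) (Set.toFinite _)
  exact SetLike.coe_injective this

lemma chain_bot (hp : p.Prime) {K : Type*} [AddCommGroup K] [Module k K] [Finite K] {e : ℕ}
    (A : ℕ → Submodule k K) (hA0 : Nat.card (A 0) ∣ p ^ e) (anti : ∀ i, A (i + 1) ≤ A i)
    (h : ∀ i, A (i + 1) = A i → A i = ⊥) : A e = ⊥ := by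
  have key : ∀ i ≤ e, Nat.card (A i) ∣ p ^ (e - i) := by
    intro i
    induction i with
    | zero => intro _; simpa using hA0
    | succ i ih =>
      intro hi
      have h1 := ih (by omega)
      have h2 := card_sub_dvd (anti i)
      by_cases hc : Nat.card (A (i + 1)) = Nat.card (A i)
      · have h3 := eq_of_card (anti i) hc
        rw [h3, h i h3]; simp
      · obtain ⟨a, ha, ha'⟩ := (Nat.dvd_prime_pow hp).1 h1
        rw [ha'] at h2 hc
        obtain ⟨b, hb, hb'⟩ := (Nat.dvd_prime_pow hp).1 h2
        rw [hb'] at hc ⊢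
        refine pow_dvd_pow p ?_
        have : b ≠ a := fun h => hc (by rw [h])
        omega
  have := key e le_rfl
  rw [Nat.sub_self, pow_zero, Nat.dvd_one] at this
  have h2 : Nat.card (⊥ : Submodule k K) = Nat.card (A e) := by rw [this]; simp
  exact (eq_of_card bot_le h2).symm

lemma Cs_stable {L : Type*} [LieRing L] [LieAlgebra k L] {i : ℕ} (h : Cs k L (i + 1) = Cs k L i) (j : ℕ) :
    Cs k L (i + j) = Cs k L i := by
  induction j with
  | zero => rfl
  | succ j ih =>
    rw [← add_assoc, Cs, ih]
    rw [Cs] at h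
    exact h

/-- nilpotent Lie algebras of small order have class `< p` -/
lemma nilp_class (hp : p.Prime) {L : Type*} [LieRing L] [LieAlgebra k L] {m : ℕ} (hm : m ≤ p)
    (hL : Nat.card L = p ^ m) (hnil : ∃ c, Cs k L c = ⊥) (hs : Function.Surjective (Int.cast : ℤ → k)) :
    Cs k L (p - 1) = ⊥ := by
  obtain ⟨c, hc⟩ := hnil
  have hp2 := hp.two_le
  have : Finite L := Nat.finite_of_card_ne_zero (by rw [hL]; exact pow_ne_zero _ hp.ne_zero)
  have hst : ∀ i, Cs k L (i + 1) = Cs k L i → Cs k L i = ⊥ := by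
    intro i hi
    rw [← Cs_stable hi c, eq_bot_iff, ← hc]
    exact Cs_anti (by omega)
  by_cases h1 : Cs k L 1 = ⊥
  · rw [eq_bot_iff, ← h1]; exact Cs_anti (by omega)
  have hdvd : Nat.card (Cs k L 1) ∣ p ^ (m - 2) := by
    have hq := (Cs k L 1).card_eq_card_quotient_mul_card
    rw [hL] at hq
    obtain ⟨a, ha, ha'⟩ := (Nat.dvd_prime_pow hp).1 (Dvd.intro _ hq.symm)
    obtain ⟨b, hb, hb'⟩ := (Nat.dvd_prime_pow hp).1 (Dvd.intro_left _ hq.symm)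
    rw [ha', hb', ← pow_add] at hq
    have hab := Nat.pow_right_injective hp.two_le hq
    have hab : m = a + b := by first | exact hab | (rw [add_comm]; exact hab)
    rw [ha']
    refine pow_dvd_pow p ?_
    clear hq
    by_contra hlt
    have hb1 : b ≤ 1 := by omega
    -- quotient is cyclic
    have hcyc : IsAddCyclic (L ⧸ Cs k L 1) := by
      rcases Nat.lt_or_ge b 1 with h | h
      · have : b = 0 := by omega
        subst this
        have : Subsingleton (L ⧸ Cs k L 1) := (Nat.card_eq_one_iff_unique.1 (by simpa using hb')).1
        infer_instance
      · have : b = 1 := by omega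
        subst this
        have : Fact p.Prime := ⟨hp⟩
        exact isAddCyclic_of_prime_card (p := p) (by simpa using hb')
    obtain ⟨g, hg⟩ := hcyc
    obtain ⟨s, rfl⟩ := Submodule.Quotient.mk_surjective _ g
    have htop : ∀ x : L, x ∈ HS k s := by
      intro x
      obtain ⟨z, hz⟩ := hg (Submodule.Quotient.mk x)
      refine mem_HS.2 ⟨(z : k), x - (z : k) • s, ?_, by abel⟩
      rw [← Submodule.Quotient.mk_eq_zero, Submodule.Quotient.mk_sub, Int.cast_smul_eq_zsmul, sub_eq_zero]
      exact hz.symm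
    apply h1
    apply hst
    refine le_antisymm (Cs_succ_le _) ?_
    conv_lhs => rw [Cs]
    rw [Submodule.span_le]
    rintro _ ⟨a, b, -, rfl⟩
    exact HS_Cs s 0 ⁅(⟨a, htop a⟩ : HS k s), (⟨b, htop b⟩ : HS k s)⁆ (Cs_br_step trivial)
  have := chain_bot (k := k) hp (fun i => Cs k L (i + 1)) (e := m - 2) hdvd (fun i => Cs_succ_le _)
    (fun i hi => hst _ hi)
  rw [eq_bot_iff, ← this]
  exact Cs_anti (by omega)

lemma Cs_surj {M M' : Type*} [LieRing M] [LieAlgebra k M] [LieRing M'] [LieAlgebra k M'] (f : M →ₗ⁅k⁆ M')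
    (hf : Function.Surjective f) (i : ℕ) : Cs k M' i ≤ (Cs k M i).map f.toLinearMap := by
  refine Cs_le_of (Q := fun i => (Cs k M i).map f.toLinearMap) ?_ ?_ i
  · rw [eq_top_iff]; intro x _
    obtain ⟨y, rfl⟩ := hf x
    exact ⟨y, trivial, rfl⟩
  · rintro i a _ ⟨b, hb, rfl⟩
    obtain ⟨a, rfl⟩ := hf a
    exact ⟨⁅a, b⁆, Cs_br_step hb, f.map_lie a b⟩

lemma Cs_bot_surj {M M' : Type*} [LieRing M] [LieAlgebra k M] [LieRing M'] [LieAlgebra k M'] (f : M →ₗ⁅k⁆ M')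
    (hf : Function.Surjective f) {i : ℕ} (h : Cs k M i = ⊥) : Cs k M' i = ⊥ := by
  have := Cs_surj f hf i
  rw [h, Submodule.map_bot] at this
  exact eq_bot_iff.2 this

end chain

section explog
variable {k : Type*} [CommRing k] {p : ℕ} {B : Type*} [Ring B] [Algebra k B] {F : ℕ → Submodule k B}

lemma FA.ex_sub_two (hF : FA k p F) (hp : 2 ≤ p) {w : B} {j : ℕ} (hj : 1 ≤ j) (hw : w ∈ F j) :
    ex k p w - 1 - w ∈ F (j + 1) := by
  obtain ⟨q, rfl⟩ : ∃ q, p = q + 2 := ⟨p - 2, by omega⟩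
  rw [ex, Finset.sum_range_succ', Finset.sum_range_succ']
  simp only [ci_zero, ci_one, pow_zero, one_smul, zero_add, pow_one]
  rw [add_sub_cancel_right, add_sub_cancel_right]
  refine Submodule.sum_mem _ fun i _ => Submodule.smul_mem _ _ ?_
  rw [pow_succ, pow_succ, mul_assoc]
  have h1 : w ∈ F 1 := hF.anti hj hw
  exact hF.anti (by omega) (hF.mul (hF.pow h1 i) (hF.mul h1 hw))

lemma ex_commute {a b : B} (h : Commute a b) : Commute (ex k p a) b := by
  unfold ex
  refine Commute.sum_left _ _ _ fun i _ => ?_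
  exact (h.pow_left i).smul_left _

lemma FA.log (hF : FA k p F) (hk : UnitsLt k p) (hp : 2 ≤ p) {u : B} (hu : u ∈ F 1) :
    ∃ d ∈ F 1, ex k p d = 1 + u := by
  have key : ∀ j, ∃ d ∈ F 1, Commute d u ∧ ex k p d - (1 + u) ∈ F (j + 1) := by
    intro j
    induction j with
    | zero =>
      refine ⟨0, Submodule.zero_mem _, Commute.zero_left _, ?_⟩
      rw [ex_zero (by omega)]
      have : (1 : B) - (1 + u) = -u := by abel
      rw [this]; exact Submodule.neg_mem _ hu
    | succ j ih =>
      obtain ⟨d, hd, hc, h⟩ := ih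
      set w := 1 + u - ex k p d with hw
      have hwm : w ∈ F (j + 1) := by
        have := Submodule.neg_mem _ h
        rwa [neg_sub] at this
      have hw1 : w ∈ F 1 := hF.anti (by omega) hwm
      have hdw : Commute d w := by
        rw [hw]
        exact ((Commute.one_right d).add_right hc).sub_right (ex_commute (Commute.refl d)).symm
      have huw : Commute w u := by
        rw [hw]
        exact ((Commute.one_left u).add_left (Commute.refl u)).sub_left (ex_commute hc)
      refine ⟨d + w, Submodule.add_mem _ hd hw1, hc.add_left huw, ?_⟩
      rw [hF.ex_add hk hd hw1 hdw]
      have e : ex k p d * ex k p w - (1 + u) = ex k p d * (ex k p w - 1 - w) + (ex k p d - 1) * w := by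
        have : (1 + u) = w + ex k p d := by rw [hw]; abel
        rw [this]; noncomm_ring
      rw [e]
      refine Submodule.add_mem _ (hF.anti (by omega) (hF.mul (hF.ex_mem hd) (hF.ex_sub_two hp (by omega) hwm))) ?_
      have := hF.mul (hF.ex_sub_one (k := k) (by omega) hd) hwm
      rwa [add_comm 1 (j + 1)] at this
  obtain ⟨d, hd, -, h⟩ := key p
  exact ⟨d, hd, sub_eq_zero.1 (hF.zero_of_le (by omega) h)⟩

lemma FA.ex_nat (hF : FA k p F) (hk : UnitsLt k p) (hp : 2 ≤ p) {d : B} (hd : d ∈ F 1) (m : ℕ) :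
    ex k p ((m : k) • d) = ex k p d ^ m := by
  induction m with
  | zero => simp [ex_zero (show 0 < p by omega)]
  | succ m ih =>
    rw [Nat.cast_succ, add_smul, one_smul, hF.ex_add hk (Submodule.smul_mem _ _ hd) hd
      ((Commute.refl d).smul_left _), ih, pow_succ]

end explog

section Afil
variable {k : Type*} [CommRing k] {p : ℕ} {K : Type*} [LieRing K] [LieAlgebra k K]
  {P : Type*} [Group P] (act : P → K →ₗ⁅k⁆ K)

/-- the filtration by augmentation powers -/
def Af : ℕ → Submodule k K
  | 0 => ⊤
  | i + 1 => Submodule.span k {x | ∃ g : P, ∃ a ∈ Af i, act g a - a = x}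

variable {act}

lemma Af_step {i : ℕ} (g : P) {a : K} (ha : a ∈ Af act i) : act g a - a ∈ Af act (i + 1) :=
  Submodule.subset_span ⟨g, a, ha, rfl⟩

variable (hone : ∀ a, act 1 a = a) (hmul : ∀ g h a, act (g * h) a = act g (act h a))

lemma Af_anti' (i : ℕ) : Af act (i + 1) ≤ Af act i := by
  induction i with
  | zero => exact le_top
  | succ i ih =>
    conv_lhs => rw [Af]
    rw [Submodule.span_le]
    rintro _ ⟨g, a, ha, rfl⟩
    exact Af_step g (ih ha)

lemma Af_anti {i j : ℕ} (h : i ≤ j) : Af act j ≤ Af act i :=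
  antitone_nat_of_succ_le (f := Af act) Af_anti' h

lemma Af_inv {i : ℕ} (g : P) {a : K} (ha : a ∈ Af act i) : act g a ∈ Af act i := by
  have := Submodule.add_mem _ (Af_anti' i (Af_step g ha)) ha
  rwa [sub_add_cancel] at this

include hone hmul in
lemma Af_br (hk : UnitsLt k p) (hp : 2 ≤ p) (hC : Cs k K (p - 1) = ⊥)
    (hinn : ∀ a, ∃ g : P, ∀ b, act g b = star k p (star k p a b) (-a)) (i : ℕ) :
    ∀ {j : ℕ} {a b : K}, a ∈ Af act i → b ∈ Af act j → ⁅a, b⁆ ∈ Af act (i + j + 1) := by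
  induction i with
  | zero =>
    intro j a b _ hb
    obtain ⟨d, hd⟩ := exists_vand hk hp
    rw [← bracket_vand hk hp hC hd a b]
    have h0 := hd 0 (by omega)
    simp only [pow_zero, mul_one] at h0
    have e : ∑ m ∈ range p, d m • star k p (star k p ((m : k) • a) b) (-((m : k) • a)) =
        ∑ m ∈ range p, d m • (star k p (star k p ((m : k) • a) b) (-((m : k) • a)) - b) := by
      simp only [smul_sub, Finset.sum_sub_distrib, ← Finset.sum_smul, h0]
      simp
    rw [e]
    refine Submodule.sum_mem _ fun m _ => Submodule.smul_mem _ _ ?_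
    obtain ⟨g, hg⟩ := hinn ((m : k) • a)
    rw [← hg, zero_add]
    exact Af_step g hb
  | succ i ih =>
    intro j a b ha hb
    rw [Af] at ha
    induction ha using Submodule.span_induction with
    | zero => simp
    | add x y _ _ hx hy => rw [add_lie]; exact Submodule.add_mem _ hx hy
    | smul c x _ hx => rw [smul_lie]; exact Submodule.smul_mem _ _ hx
    | mem x hx =>
      obtain ⟨g, a, ha, rfl⟩ := hx
      have e : ⁅act g a - a, b⁆ = (act g ⁅a, act g⁻¹ b⁆ - ⁅a, act g⁻¹ b⁆) + ⁅a, act g⁻¹ b - b⁆ := by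
        rw [LieHom.map_lie, ← hmul, mul_inv_cancel, hone, sub_lie, lie_sub]; abel
      rw [e]
      refine Submodule.add_mem _ ?_ ?_
      · have := Af_step g (ih ha (Af_inv g⁻¹ hb))
        rwa [show i + 1 + j + 1 = i + j + 1 + 1 by omega]
      · have := ih ha (Af_step g⁻¹ hb)
        rwa [show i + 1 + j + 1 = i + (j + 1) + 1 by omega]

open scoped commutatorElement in
include hone hmul in
lemma Af_bot (hpp : p.Prime) {m e : ℕ} (hK : Nat.card K = p ^ m) (hP : Nat.card P = p ^ e)
    (hs : Function.Surjective (Int.cast : ℤ → k)) : Af act m = ⊥ := by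
  have : Finite K := Nat.finite_of_card_ne_zero (by rw [hK]; exact pow_ne_zero _ hpp.ne_zero)
  have : Finite P := Nat.finite_of_card_ne_zero (by rw [hP]; exact pow_ne_zero _ hpp.ne_zero)
  refine chain_bot hpp (Af act) ?_ Af_anti' ?_
  · rw [Af, ← hK]; simp
  intro i hi
  -- semidirect product
  let eqv : P → MulAut (Multiplicative K) := fun g =>
    { toFun := fun a => Multiplicative.ofAdd (act g a.toAdd)
      invFun := fun a => Multiplicative.ofAdd (act g⁻¹ a.toAdd)
      left_inv := fun a => by
        change Multiplicative.ofAdd (act g⁻¹ (act g a.toAdd)) = a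
        rw [← hmul, inv_mul_cancel, hone]; rfl
      right_inv := fun a => by
        change Multiplicative.ofAdd (act g (act g⁻¹ a.toAdd)) = a
        rw [← hmul, mul_inv_cancel, hone]; rfl
      map_mul' := fun a b => by
        change Multiplicative.ofAdd (act g (a.toAdd + b.toAdd)) = _
        rw [map_add]; rfl }
  let φ : P →* MulAut (Multiplicative K) :=
    { toFun := eqv
      map_one' := by
        refine MulEquiv.ext fun a => ?_
        change Multiplicative.ofAdd (act 1 a.toAdd) = a
        rw [hone]; rfl
      map_mul' := fun g h => by
        refine MulEquiv.ext fun a => ?_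
        change Multiplicative.ofAdd (act (g * h) a.toAdd) = Multiplicative.ofAdd (act g (act h a.toAdd))
        rw [hmul] }
  have : Fact p.Prime := ⟨hpp⟩
  have hG : IsPGroup p (Multiplicative K ⋊[φ] P) := by
    refine IsPGroup.of_card (n := m + e) ?_
    rw [SemidirectProduct.card, pow_add, ← hK, ← hP]; rfl
  have : Finite (Multiplicative K ⋊[φ] P) := by
    refine Nat.finite_of_card_ne_zero ?_
    rw [SemidirectProduct.card]
    exact mul_ne_zero Nat.card_pos.ne' Nat.card_pos.ne'
  obtain ⟨c, hc⟩ := Subgroup.nilpotent_iff_lowerCentralSeries.1 hG.isNilpotent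
  have key : ∀ n, ∀ a ∈ Af act i, (SemidirectProduct.inl (Multiplicative.ofAdd a) : Multiplicative K ⋊[φ] P) ∈
      Subgroup.lowerCentralSeries (⊤ : Subgroup (Multiplicative K ⋊[φ] P)) n := by
    intro n
    induction n with
    | zero => intro a _; trivial
    | succ n ih =>
      intro a ha
      rw [← hi, Af] at ha
      induction ha using Submodule.span_induction with
      | zero => rw [ofAdd_zero, map_one]; exact Subgroup.one_mem _
      | add x y _ _ hx hy => rw [ofAdd_add, map_mul]; exact Subgroup.mul_mem _ hx hy
      | smul c x _ hx =>
        obtain ⟨z, rfl⟩ := hs c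
        rw [Int.cast_smul_eq_zsmul, ofAdd_zsmul, map_zpow]
        exact Subgroup.zpow_mem _ hx z
      | mem x hx =>
        obtain ⟨g, a, ha, rfl⟩ := hx
        have h1 := ih a ha
        have e : (SemidirectProduct.inl (Multiplicative.ofAdd (act g a - a)) : Multiplicative K ⋊[φ] P) =
            ⁅(SemidirectProduct.inr g : Multiplicative K ⋊[φ] P), (SemidirectProduct.inl (Multiplicative.ofAdd a) : Multiplicative K ⋊[φ] P)⁆ := by
          rw [commutatorElement_def, ← map_inv, ← SemidirectProduct.inl_aut, ← map_inv, ← map_mul, sub_eq_add_neg]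
          rfl
        rw [e, ← commutatorElement_inv]
        exact Subgroup.inv_mem _ (Subgroup.commutator_mem_commutator h1
          (Subgroup.mem_top (SemidirectProduct.inr g : Multiplicative K ⋊[φ] P)))
  rw [eq_bot_iff]
  intro a ha
  have := key c a ha
  rw [hc, Subgroup.mem_bot] at this
  have := SemidirectProduct.inl_injective (this.trans (map_one SemidirectProduct.inl).symm)
  exact this

end Afil
end Laz


namespace Laz
open Finset

section der
variable {k : Type*} [CommRing k] {p : ℕ} {K : Type*} [LieRing K] [LieAlgebra k K]

/-- filtration on endomorphisms -/
def FE (A : ℕ → Submodule k K) (j : ℕ) : Submodule k (Module.End k K) where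
  carrier := {f | ∀ i a, a ∈ A i → f a ∈ A (i + j)}
  add_mem' hf hg i v hv := Submodule.add_mem _ (hf i v hv) (hg i v hv)
  zero_mem' i v _ := Submodule.zero_mem _
  smul_mem' c f hf i v hv := Submodule.smul_mem _ _ (hf i v hv)

/-- ad as linear endomorphism -/
def adE (k : Type*) [CommRing k] {K : Type*} [LieRing K] [LieAlgebra k K] (u : K) : Module.End k K where
  toFun b := ⁅u, b⁆
  map_add' := lie_add u
  map_smul' c b := by simp

lemma adE_pow (u : K) (i : ℕ) (b : K) : (adE k u ^ i) b = (adL u)^[i] b := by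
  rw [Module.End.pow_apply]; rfl

lemma ex_apply (f : Module.End k K) (b : K) : ex k p f b = ∑ i ∈ range p, ci k i • (f ^ i) b := by
  simp [ex, LinearMap.sum_apply]

variable {A : ℕ → Submodule k K}

lemma FE_FA (hanti : ∀ {i j : ℕ}, i ≤ j → A j ≤ A i) (h0 : A 0 = ⊤) (hbot : A p = ⊥) : FA k p (FE A) where
  anti {i j f} h hf l v hv := hanti (by omega) (hf l v hv)
  mul {i j f g} hf hg l v hv := by
    have := hf _ _ (hg l v hv)
    rwa [show l + (i + j) = l + j + i by omega]
  one i v hv := hv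
  bot {f} hf := by
    refine LinearMap.ext fun v => ?_
    have := hf 0 v (by rw [h0]; trivial)
    rw [zero_add, hbot] at this
    simpa using this

lemma exists_der (hk : UnitsLt k p) (hp : 2 ≤ p)
    (hanti : ∀ {i j : ℕ}, i ≤ j → A j ≤ A i) (h0 : A 0 = ⊤) (hbot : A p = ⊥)
    (hbr : ∀ {i j : ℕ} {a b : K}, a ∈ A i → b ∈ A j → ⁅a, b⁆ ∈ A (i + j + 1))
    (σ : K →ₗ⁅k⁆ K) (hσ : ∀ i a, a ∈ A i → σ a - a ∈ A (i + 1)) (u : K) (hu : σ u = u)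
    (hup : ∀ b, σ^[p] b = ∑ i ∈ range p, ci k i • (adL u)^[i] b) :
    ∃ D : Module.End k K, D ∈ FE A 1 ∧ (∀ (m : ℕ) b, ∑ i ∈ range p, ((m : k) ^ i * ci k i) • (D ^ i) b = σ^[m] b) ∧
      (∀ a b, D ⁅a, b⁆ = ⁅D a, b⁆ + ⁅a, D b⁆) ∧ D u = 0 ∧ ∀ b, (p : k) • D b = ⁅u, b⁆ := by
  have hF := FE_FA (k := k) (p := p) hanti h0 hbot
  have hσ1 : (σ.toLinearMap - 1 : Module.End k K) ∈ FE A 1 := fun i a ha => hσ i a ha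
  obtain ⟨D, hD, hexD⟩ := hF.log hk hp hσ1
  rw [add_sub_cancel] at hexD
  have hm : ∀ (m : ℕ) b, ∑ i ∈ range p, ((m : k) ^ i * ci k i) • (D ^ i) b = σ^[m] b := by
    intro m b
    have h1 := hF.ex_nat hk hp hD m
    rw [hexD] at h1
    have h2 := congrArg (fun f => f b) h1
    simp only [ex_apply, _root_.smul_pow, LinearMap.smul_apply, smul_smul] at h2
    rw [Module.End.pow_apply] at h2
    rw [← LieHom.coe_toLinearMap, ← h2]
    exact Finset.sum_congr rfl fun i _ => by rw [mul_comm]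
  obtain ⟨d, hd⟩ := exists_vand hk hp
  have hDv : ∀ b, D b = ∑ m ∈ range p, d m • σ^[m] b := by
    intro b
    simp only [← hm, Finset.smul_sum, smul_smul, ← mul_assoc]
    rw [Finset.sum_comm]
    have : ∀ i ∈ range p, ∑ m ∈ range p, (d m * (m : k) ^ i * ci k i) • (D ^ i) b =
        if i = 1 then D b else 0 := by
      intro i hi
      rw [← Finset.sum_smul, ← Finset.sum_mul, hd i (Finset.mem_range.1 hi)]
      split_ifs with h
      · subst h; simp [ci_one]
      · simp
    rw [Finset.sum_congr rfl this]
    simp; omega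
  have hDA : ∀ i b, (D ^ i) b ∈ A i := by
    intro i b
    have := hF.pow hD i 0 b (by rw [h0]; trivial)
    rwa [zero_add] at this
  have hσl : ∀ (m : ℕ) a b, σ^[m] ⁅a, b⁆ = ⁅σ^[m] a, σ^[m] b⁆ := by
    intro m a b
    induction m with
    | zero => rfl
    | succ m ih => simp only [Function.iterate_succ_apply', ih, LieHom.map_lie]
  refine ⟨D, hD, hm, ?_, ?_, ?_⟩
  · intro a b
    rw [hDv]
    simp only [hσl]
    have h1 : ∀ m : ℕ, ⁅σ^[m] a, σ^[m] b⁆ = ∑ i ∈ range p, ∑ j ∈ range p,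
        ((m : k) ^ (i + j) * (ci k i * ci k j)) • ⁅(D ^ i) a, (D ^ j) b⁆ := by
      intro m
      rw [← hm, ← hm, sum_lie]
      refine Finset.sum_congr rfl fun i _ => ?_
      rw [lie_sum]
      refine Finset.sum_congr rfl fun j _ => ?_
      rw [smul_lie, lie_smul, smul_smul]
      congr 1; ring
    simp only [h1, Finset.smul_sum, smul_smul, ← mul_assoc]
    rw [Finset.sum_comm]
    have h2 : ∀ i ∈ range p, ∑ m ∈ range p, ∑ j ∈ range p,
        (d m * (m : k) ^ (i + j) * ci k i * ci k j) • ⁅(D ^ i) a, (D ^ j) b⁆ =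
        ∑ j ∈ range p, if i + j = 1 then ⁅(D ^ i) a, (D ^ j) b⁆ else 0 := by
      intro i hi
      rw [Finset.sum_comm]
      refine Finset.sum_congr rfl fun j hj => ?_
      by_cases hij : i + j < p
      · rw [← Finset.sum_smul, ← Finset.sum_mul, ← Finset.sum_mul, hd _ hij]
        split_ifs with h
        · have : (i = 0 ∧ j = 1) ∨ (i = 1 ∧ j = 0) := by omega
          rcases this with ⟨rfl, rfl⟩ | ⟨rfl, rfl⟩ <;> simp [ci_one, ci_zero]
        · simp
      · have : ⁅(D ^ i) a, (D ^ j) b⁆ = 0 := by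
          have := hanti (show p ≤ i + j + 1 by omega) (hbr (hDA i a) (hDA j b))
          rw [hbot] at this; simpa using this
        simp [this]
    rw [Finset.sum_congr rfl h2]
    obtain ⟨q, rfl⟩ : ∃ q, p = q + 2 := ⟨p - 2, by omega⟩
    rw [Finset.sum_range_succ', Finset.sum_range_succ']
    rw [Finset.sum_eq_zero, zero_add]
    · have e1 : (∑ j ∈ range (q + 1 + 1), if 0 + 1 + j = 1 then ⁅(D ^ (0 + 1)) a, (D ^ j) b⁆ else 0) = ⁅D a, b⁆ := by
        rw [Finset.sum_eq_single 0]
        · simp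
        · intro j _ hj; rw [if_neg (by omega)]
        · simp
      have e2 : (∑ j ∈ range (q + 1 + 1), if 0 + j = 1 then ⁅(D ^ 0) a, (D ^ j) b⁆ else 0) = ⁅a, D b⁆ := by
        rw [Finset.sum_eq_single 1]
        · simp
        · intro j _ hj; rw [if_neg (by omega)]
        · simp
      exact congrArg₂ (· + ·) e1 e2
    · intro i _
      refine Finset.sum_eq_zero fun j _ => ?_
      rw [if_neg (by omega)]
  · rw [hDv]
    have : ∀ m, σ^[m] u = u := fun m => Function.iterate_fixed hu m
    simp only [this]
    have := hd 0 (by omega)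
    simp only [pow_zero, mul_one] at this
    rw [← Finset.sum_smul, this]; simp
  · have hadm : adE k u ∈ FE A 1 := by
      intro i b hb
      have := hbr (i := 0) (by rw [h0]; trivial : u ∈ A 0) hb
      rw [zero_add] at this
      exact this
    have : (p : k) • D = adE k u := by
      refine hF.ex_inj hp (Submodule.smul_mem _ _ hD) hadm ?_
      refine LinearMap.ext fun b => ?_
      rw [ex_apply, ex_apply]
      simp only [adE_pow]
      rw [← hup, ← hm]
      refine Finset.sum_congr rfl fun i _ => ?_
      rw [_root_.smul_pow, LinearMap.smul_apply, smul_smul, mul_comm]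
    intro b
    rw [← LinearMap.smul_apply, this]; rfl

end der

section sx
variable {k : Type*} [CommRing k] {K : Type*} [LieRing K] [LieAlgebra k K]

/-- extension by a derivation -/
def SX (D : Module.End k K) (_hD : ∀ a b, D ⁅a, b⁆ = ⁅D a, b⁆ + ⁅a, D b⁆) : Type _ := K × k

variable {D : Module.End k K} {hD : ∀ a b, D ⁅a, b⁆ = ⁅D a, b⁆ + ⁅a, D b⁆}

instance : AddCommGroup (SX D hD) := inferInstanceAs (AddCommGroup (K × k))
instance : Module k (SX D hD) := inferInstanceAs (Module k (K × k))

lemma SX.add_fst (x y : SX D hD) : (x + y).1 = x.1 + y.1 := rfl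
lemma SX.add_snd (x y : SX D hD) : (x + y).2 = x.2 + y.2 := rfl
lemma SX.sub_fst (x y : SX D hD) : (x - y).1 = x.1 - y.1 := rfl
lemma SX.sub_snd (x y : SX D hD) : (x - y).2 = x.2 - y.2 := rfl
lemma SX.neg_fst (x : SX D hD) : (-x).1 = -x.1 := rfl
lemma SX.neg_snd (x : SX D hD) : (-x).2 = -x.2 := rfl
lemma SX.zero_fst : (0 : SX D hD).1 = 0 := rfl
lemma SX.zero_snd : (0 : SX D hD).2 = 0 := rfl
lemma SX.smul_fst (c : k) (x : SX D hD) : (c • x).1 = c • x.1 := rfl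
lemma SX.smul_snd (c : k) (x : SX D hD) : (c • x).2 = c * x.2 := rfl

instance : Bracket (SX D hD) (SX D hD) :=
  ⟨fun x y => ((⁅x.1, y.1⁆ + x.2 • D y.1 - y.2 • D x.1, 0) : K × k)⟩

lemma SX.br_fst (x y : SX D hD) : (⁅x, y⁆).1 = ⁅x.1, y.1⁆ + x.2 • D y.1 - y.2 • D x.1 := rfl
lemma SX.br_snd (x y : SX D hD) : (⁅x, y⁆).2 = 0 := rfl

lemma SX.ext {x y : SX D hD} (h : x.1 = y.1) (h' : x.2 = y.2) : x = y := Prod.ext h h'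

instance : LieRing (SX D hD) where
  add_lie x y z := SX.ext (by
    simp only [SX.br_fst, SX.add_fst, SX.add_snd, add_lie, map_add, add_smul, smul_add]; abel)
    (by simp [SX.br_snd, SX.add_snd])
  lie_add x y z := SX.ext (by
    simp only [SX.br_fst, SX.add_fst, SX.add_snd, lie_add, map_add, add_smul, smul_add]; abel)
    (by simp [SX.br_snd, SX.add_snd])
  lie_self x := SX.ext (by simp [SX.br_fst, SX.zero_fst]) rfl
  leibniz_lie x y z := SX.ext (by
    simp only [SX.br_fst, SX.add_fst, SX.br_snd, lie_add, add_lie, lie_sub, sub_lie, lie_smul, smul_lie,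
      map_add, map_sub, map_smul, hD, zero_smul]
    rw [leibniz_lie x.1 y.1 z.1, ← lie_skew (D x.1) y.1]
    module)
    (by simp [SX.br_snd, SX.add_snd])

instance : LieAlgebra k (SX D hD) where
  lie_smul c x y := SX.ext (by
    simp only [SX.br_fst, SX.smul_fst, SX.smul_snd, lie_smul, map_smul]; module) (by simp [SX.br_snd, SX.smul_snd])

variable (D hD) in
/-- inclusion -/
def inK : K →ₗ⁅k⁆ SX D hD where
  toFun a := ((a, 0) : K × k)
  map_add' a b := SX.ext rfl (add_zero (0 : k)).symm
  map_smul' c a := SX.ext rfl (mul_zero c).symm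
  map_lie' {a b} := SX.ext (show ⁅a, b⁆ = ⁅a, b⁆ + (0 : k) • D b - (0 : k) • D a by simp) rfl

lemma inK_fst (a : K) : (inK D hD a).1 = a := rfl
lemma inK_snd (a : K) : (inK D hD a).2 = 0 := rfl

variable (D hD) in
/-- the new generator -/
def TX : SX D hD := ((0, 1) : K × k)

lemma TX_fst : (TX D hD).1 = 0 := rfl
lemma TX_snd : (TX D hD).2 = 1 := rfl

lemma TX_inK (a : K) : ⁅TX D hD, inK D hD a⁆ = inK D hD (D a) :=
  SX.ext (by simp [SX.br_fst, TX_fst, TX_snd, inK_fst, inK_snd]) rfl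

lemma eq_inK {s : SX D hD} (h : s.2 = 0) : s = inK D hD s.1 := SX.ext rfl h

lemma SX_decomp (s : SX D hD) : s = inK D hD s.1 + s.2 • TX D hD :=
  SX.ext (by simp [SX.add_fst, SX.smul_fst, inK_fst, TX_fst]) (by simp [SX.add_snd, SX.smul_snd, inK_snd, TX_snd])

lemma SX_Cs {A : ℕ → Submodule k K} (h0 : A 0 = ⊤)
    (hbr : ∀ {i j : ℕ} {a b : K}, a ∈ A i → b ∈ A j → ⁅a, b⁆ ∈ A (i + j + 1)) (hDA : D ∈ FE A 1) (i : ℕ) :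
    ∀ s ∈ Cs k (SX D hD) (i + 1), s.1 ∈ A (i + 1) ∧ s.2 = 0 := by
  have gen : ∀ i (x y : SX D hD), y.1 ∈ A i → (i = 0 ∨ y.2 = 0) → (⁅x, y⁆).1 ∈ A (i + 1) := by
    intro i x y hy hi
    rw [SX.br_fst]
    have h1 : ⁅x.1, y.1⁆ ∈ A (i + 1) := by
      have := hbr (i := 0) (by rw [h0]; trivial : x.1 ∈ A 0) hy
      rwa [zero_add] at this
    refine Submodule.sub_mem _ (Submodule.add_mem _ h1 (Submodule.smul_mem _ _ (hDA _ _ hy))) ?_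
    rcases hi with rfl | hi
    · exact Submodule.smul_mem _ _ (hDA 0 _ (by rw [h0]; trivial))
    · rw [hi, zero_smul]; exact Submodule.zero_mem _
  have clos : ∀ i, ∀ s ∈ Submodule.span k {x : SX D hD | ∃ a : SX D hD, ∃ b ∈ Cs k (SX D hD) i, ⁅a, b⁆ = x},
      (∀ b ∈ Cs k (SX D hD) i, b.1 ∈ A i ∧ (i = 0 ∨ b.2 = 0)) → s.1 ∈ A (i + 1) ∧ s.2 = 0 := by
    intro i s hs hb
    induction hs using Submodule.span_induction with
    | zero => exact ⟨Submodule.zero_mem _, rfl⟩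
    | add x y _ _ hx hy =>
      exact ⟨Submodule.add_mem _ hx.1 hy.1, by rw [SX.add_snd, hx.2, hy.2, add_zero]⟩
    | smul c x _ hx => exact ⟨Submodule.smul_mem _ _ hx.1, by rw [SX.smul_snd, hx.2, mul_zero]⟩
    | mem x hx =>
      obtain ⟨a, b, hb', rfl⟩ := hx
      exact ⟨gen i a b (hb b hb').1 (hb b hb').2, rfl⟩
  induction i with
  | zero =>
    intro s hs
    rw [Cs] at hs
    exact clos 0 s hs fun b _ => ⟨by rw [h0]; trivial, Or.inl rfl⟩
  | succ i ih =>
    intro s hs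
    rw [Cs] at hs
    exact clos (i + 1) s hs fun b hb => ⟨(ih b hb).1, Or.inr (ih b hb).2⟩

end sx
end Laz


namespace Laz
open Finset

section starhom
variable {k : Type*} [CommRing k] {p : ℕ} (hk : UnitsLt k p) (hp : 2 ≤ p) {L : Type*} [LieRing L] [LieAlgebra k L]
  (hC : Cs k L (p - 1) = ⊥)
include hk hp hC

/-- the group of a nilpotent Lie algebra -/
@[reducible] noncomputable def starGroup : Group L :=
  letI : Mul L := ⟨star k p⟩
  letI : One L := ⟨0⟩
  letI : Inv L := ⟨fun x => -x⟩
  Group.ofLeftAxioms (star_assoc hk hp hC) (star_zero_left hk hp hC) (star_neg_left hk hp hC)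

lemma star_cancel_right {a b c : L} (h : star k p a c = star k p b c) : a = b :=
  letI := starGroup hk hp hC
  mul_right_cancel (G := L) (a := a) (b := c) (c := b) h

variable {P : Type*} [Group P] {φ : L → P} (hφ : ∀ a b, φ (star k p a b) = φ a * φ b)
include hφ

lemma sh_zero : φ 0 = 1 := by
  have := hφ 0 0
  rw [star_zero_left hk hp hC] at this
  exact (left_eq_mul.1 this)

lemma sh_neg (a : L) : φ (-a) = (φ a)⁻¹ := by
  have := hφ (-a) a
  rw [star_neg_left hk hp hC, sh_zero hk hp hC hφ] at this
  exact eq_inv_of_mul_eq_one_left this.symm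

lemma sh_nat (j : ℕ) (a : L) : φ ((j : k) • a) = φ a ^ j := by
  induction j with
  | zero => simp [sh_zero hk hp hC hφ]
  | succ j ih =>
    have : ((j + 1 : ℕ) : k) • a = star k p ((j : k) • a) ((1 : k) • a) := by
      rw [star_smul_smul hk hp hC]; push_cast; rfl
    rw [this, hφ, ih, one_smul, pow_succ]

end starhom

/-- groups coming from Lie algebras -/
def HasLaz (k : Type) [CommRing k] (p : ℕ) (P : Type) [Group P] : Prop :=
  ∃ (L : Type) (_ : LieRing L) (_ : LieAlgebra k L), Cs k L (p - 1) = ⊥ ∧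
    ∃ φ : L → P, Function.Bijective φ ∧ ∀ a b, φ (star k p a b) = φ a * φ b

section ext
variable {k : Type} [CommRing k] {p : ℕ} {K : Type} [LieRing K] [LieAlgebra k K]

lemma TX_iter {D : Module.End k K} {hD : ∀ a b, D ⁅a, b⁆ = ⁅D a, b⁆ + ⁅a, D b⁆} (i : ℕ) (a : K) :
    (adL (TX D hD))^[i] (inK D hD a) = inK D hD ((D ^ i) a) := by
  induction i with
  | zero => rfl
  | succ i ih =>
    rw [Function.iterate_succ_apply', ih, adL, TX_inK, pow_succ']; rfl

theorem ext_laz (hk : UnitsLt k p) (hp : 2 ≤ p) (hs : Function.Surjective (Nat.cast : ℕ → k))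
    {A : ℕ → Submodule k K}
    (hanti : ∀ {i j : ℕ}, i ≤ j → A j ≤ A i) (h0 : A 0 = ⊤) (hbot : A (p - 1) = ⊥)
    (hbr : ∀ {i j : ℕ} {a b : K}, a ∈ A i → b ∈ A j → ⁅a, b⁆ ∈ A (i + j + 1))
    (hC : Cs k K (p - 1) = ⊥)
    {P : Type} [Group P] (φ : K → P) (hφi : Function.Injective φ)
    (hφ : ∀ a b, φ (star k p a b) = φ a * φ b)
    (x : P) (σ : K →ₗ⁅k⁆ K) (hσ : ∀ i a, a ∈ A i → σ a - a ∈ A (i + 1))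
    (hσx : ∀ a, φ (σ a) = x * φ a * x⁻¹) (u : K) (hu : φ u = x ^ p)
    (hgen : ∀ g, ∃ a, ∃ i : ℕ, g = φ a * x ^ i)
    (hdvd : ∀ (i : ℕ) a, x ^ i = φ a → p ∣ i)
    (hchar : ∀ i j : ℕ, (i : k) = (j : k) → x ^ i = x ^ j) : HasLaz k p P := by
  have hσu : σ u = u := by
    apply hφi
    rw [hσx, hu, ← pow_succ', pow_succ, mul_inv_cancel_right]
  have hσm : ∀ (m : ℕ) a, φ (σ^[m] a) = x ^ m * φ a * (x ^ m)⁻¹ := by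
    intro m a
    induction m with
    | zero => simp
    | succ m ih => rw [Function.iterate_succ_apply', hσx, ih, pow_succ']; group
  have hup : ∀ b, σ^[p] b = ∑ i ∈ range p, ci k i • (adL u)^[i] b := by
    intro b
    rw [← star_conj hk hp hC]
    apply hφi
    rw [hσm, hφ, hφ, hu, sh_neg hk hp hC hφ, hu]
  obtain ⟨D, hDA, hDm, hDd, hDu, hDp⟩ := exists_der hk hp hanti h0
    (eq_bot_iff.2 (hbot ▸ hanti (by omega))) hbr σ hσ u hσu hup
  have hSC : Cs k (SX D hDd) (p - 1) = ⊥ := by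
    rw [eq_bot_iff]
    intro s hs
    obtain ⟨q, hq⟩ : ∃ q, p - 1 = q + 1 := ⟨p - 2, by omega⟩
    rw [hq] at hs
    have := SX_Cs h0 hbr hDA q s hs
    rw [← hq, hbot] at this
    exact SX.ext this.1 this.2
  set T := TX D hDd with hT
  set ι := inK D hDd with hι
  have snd_star : ∀ s s' : SX D hDd, (star k p s s').2 = s.2 + s'.2 := by
    intro s s'
    have := (SX_Cs h0 hbr hDA 0 _ (star_sub_mem hk hp hSC s s')).2
    rw [SX.sub_snd, SX.add_snd, sub_eq_zero] at this
    exact this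
  have hιs : ∀ a b, ι (star k p a b) = star k p (ι a) (ι b) := star_map hk hp hC hSC ι
  have hconj : ∀ (m : ℕ) b, star k p ((m : k) • T) (ι b) = star k p (ι (σ^[m] b)) ((m : k) • T) := by
    intro m b
    have h := conj_smul hk hp hSC (m : k) T (ι b)
    have h' : ∑ i ∈ range p, ((m : k) ^ i * ci k i) • (adL T)^[i] (ι b) = ι (σ^[m] b) := by
      rw [← hDm, map_sum]
      exact Finset.sum_congr rfl fun i _ => by rw [hT, hι, TX_iter, map_smul]
    rw [h'] at h
    rw [← h, star_assoc hk hp hSC, star_neg_left hk hp hSC, star_zero_right hk hp hSC]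
  have hdec : ∀ s : SX D hDd, ∃ a, ∃ i : ℕ, s = star k p (ι a) ((i : k) • T) := by
    intro s
    obtain ⟨i, hi⟩ := hs s.2
    have h2 : (star k p s (-((i : k) • T))).2 = 0 := by
      rw [snd_star, SX.neg_snd, SX.smul_snd, hT, TX_snd, hi]; ring
    refine ⟨(star k p s (-((i : k) • T))).1, i, ?_⟩
    rw [hι, ← eq_inK h2, star_assoc hk hp hSC, star_neg_left hk hp hSC, star_zero_right hk hp hSC]
  have huniq : ∀ a b (i j : ℕ), star k p (ι a) ((i : k) • T) = star k p (ι b) ((j : k) • T) →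
      (i : k) = j ∧ a = b := by
    intro a b i j h
    have h2 := congrArg (fun s : SX D hDd => s.2) h
    simp only [snd_star, SX.smul_snd, hT, hι, inK_snd, TX_snd, mul_one, zero_add] at h2
    rw [h2] at h
    refine ⟨h2, ?_⟩
    have h3 := star_cancel_right hk hp hSC h
    have h4 := congrArg (fun s : SX D hDd => s.1) h3
    exact h4
  obtain ⟨ψ, hψ⟩ : ∃ ψ : SX D hDd → P, ∀ a (i : ℕ), ψ (star k p (ι a) ((i : k) • T)) = φ a * x ^ i := by
    choose fa fi hf using hdec
    refine ⟨fun s => φ (fa s) * x ^ (fi s), fun a i => ?_⟩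
    obtain ⟨h1, h2⟩ := huniq _ _ _ _ (hf (star k p (ι a) ((i : k) • T)))
    simp only
    rw [← h2, hchar _ _ h1]
  have hψm : ∀ s s', ψ (star k p s s') = ψ s * ψ s' := by
    intro s s'
    obtain ⟨a, i, rfl⟩ := hdec s
    obtain ⟨b, j, rfl⟩ := hdec s'
    have : star k p (star k p (ι a) ((i : k) • T)) (star k p (ι b) ((j : k) • T)) =
        star k p (ι (star k p a (σ^[i] b))) (((i + j : ℕ) : k) • T) := by
      rw [star_assoc hk hp hSC, ← star_assoc hk hp hSC ((i : k) • T), hconj, star_assoc hk hp hSC (ι (σ^[i] b)),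
        star_smul_smul hk hp hSC, hιs, star_assoc hk hp hSC]
      push_cast; rfl
    rw [this, hψ, hψ, hψ, hφ, hσm, pow_add]; group
  have hψs : Function.Surjective ψ := by
    intro g
    obtain ⟨a, i, rfl⟩ := hgen g
    exact ⟨_, hψ a i⟩
  -- the central element
  set c : SX D hDd := ι (-u) + (p : k) • T with hc
  have hcent : ∀ s : SX D hDd, ⁅c, s⁆ = 0 := by
    intro s
    refine SX.ext ?_ rfl
    rw [SX.br_fst]
    simp [hc, SX.add_fst, SX.add_snd, SX.smul_fst, SX.smul_snd, hι, hT, inK_fst, inK_snd, TX_fst, TX_snd,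
      SX.zero_fst, SX.neg_fst, SX.neg_snd, hDu, hDp]
    rw [← lie_skew u s.1, add_neg_cancel]
  have hcj : ∀ j : ℕ, (j : k) • c = star k p (ι (-((j : k) • u))) (((p * j : ℕ) : k) • T) := by
    intro j
    rw [star_comm hk hp hSC]
    · rw [hc, smul_add, map_neg, map_neg, map_smul, smul_neg, smul_smul]; push_cast; rw [mul_comm]
    · rw [map_neg, map_smul, lie_smul, neg_lie, smul_lie, ← lie_skew, hT, hι, TX_inK, hDu]; simp
  have hψc : ∀ j : ℕ, ψ ((j : k) • c) = 1 := by
    intro j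
    rw [hcj, hψ, sh_neg hk hp hC hφ, sh_nat hk hp hC hφ, hu, pow_mul, inv_mul_cancel]
  have hker : ∀ s, ψ s = 1 → ∃ j : ℕ, s = (j : k) • c := by
    intro s h
    obtain ⟨a, i, rfl⟩ := hdec s
    rw [hψ] at h
    have h1 : x ^ i = φ (-a) := by
      rw [sh_neg hk hp hC hφ]; exact eq_inv_of_mul_eq_one_right h
    obtain ⟨j, rfl⟩ := hdvd i _ h1
    refine ⟨j, ?_⟩
    rw [pow_mul, ← hu, ← sh_nat hk hp hC hφ] at h1
    rw [hcj, hφi h1, neg_neg]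
  have hadd : ∀ s (r : k), star k p s (r • c) = s + r • c := by
    intro s r
    refine star_comm hk hp hSC ?_
    rw [lie_smul, ← lie_skew, hcent]; simp
  have hadd' : ∀ s (r : k), star k p (r • c) s = r • c + s := by
    intro s r
    refine star_comm hk hp hSC ?_
    rw [smul_lie, hcent]; simp
  let I : LieIdeal k (SX D hDd) :=
    { Submodule.span k {c} with
      lie_mem := by
        intro s m hm
        obtain ⟨r, rfl⟩ := Submodule.mem_span_singleton.1 hm
        rw [lie_smul, ← lie_skew, hcent]
        simp }
  let π : SX D hDd →ₗ⁅k⁆ (SX D hDd ⧸ I) :=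
    { (LieSubmodule.Quotient.mk' I : SX D hDd →ₗ⁅k, SX D hDd⁆ SX D hDd ⧸ I).toLinearMap with
      map_lie' := fun {a b} => rfl }
  have hπs : Function.Surjective π := LieSubmodule.Quotient.surjective_mk' I
  have hπe : ∀ s s', π s = π s' ↔ ∃ r : k, s = r • c + s' := by
    intro s s'
    have : π s = π s' ↔ s - s' ∈ Submodule.span k {c} := by
      exact Submodule.Quotient.eq _
    rw [this, Submodule.mem_span_singleton]
    exact exists_congr fun r => by rw [eq_comm, sub_eq_iff_eq_add]
  have hQC : Cs k (SX D hDd ⧸ I) (p - 1) = ⊥ := Cs_bot_surj π hπs hSC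
  have hwd : ∀ s s', π s = π s' → ψ s = ψ s' := by
    intro s s' h
    obtain ⟨r, rfl⟩ := (hπe _ _).1 h
    obtain ⟨j, rfl⟩ := hs r
    rw [← hadd', hψm, hψc, one_mul]
  obtain ⟨φ', hφ'⟩ : ∃ φ' : (SX D hDd ⧸ I) → P, ∀ s, φ' (π s) = ψ s :=
    ⟨fun q => ψ (Function.surjInv hπs q), fun s => hwd _ _ (Function.surjInv_eq hπs _)⟩
  refine ⟨SX D hDd ⧸ I, inferInstance, inferInstance, hQC, φ', ⟨?_, ?_⟩, ?_⟩
  · intro q q' h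
    obtain ⟨s, rfl⟩ := hπs q
    obtain ⟨s', rfl⟩ := hπs q'
    rw [hφ', hφ'] at h
    have h1 : ψ (star k p s (-s')) = 1 := by
      rw [hψm, sh_neg hk hp hSC hψm, h, mul_inv_cancel]
    obtain ⟨j, hj⟩ := hker _ h1
    rw [hπe]
    refine ⟨j, ?_⟩
    rw [← hadd', ← hj, star_assoc hk hp hSC, star_neg_left hk hp hSC, star_zero_right hk hp hSC]
  · intro g
    obtain ⟨s, rfl⟩ := hψs g
    exact ⟨π s, hφ' s⟩
  · intro q q'
    obtain ⟨s, rfl⟩ := hπs q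
    obtain ⟨s', rfl⟩ := hπs q'
    rw [← star_map hk hp hSC hQC π, hφ', hφ', hφ', hψm]

end ext
end Laz


namespace Laz
open Finset

lemma unitsLt_zmod {p : ℕ} (hpp : p.Prime) (N : ℕ) : UnitsLt (ZMod (p ^ N)) p := by
  intro m h0 h1
  rw [ZMod.isUnit_iff_coprime]
  exact Nat.Coprime.pow_right _ (Nat.Coprime.symm ((Nat.Prime.coprime_iff_not_dvd hpp).2 (Nat.not_dvd_of_pos_of_lt h0 h1)))

lemma zmod_nat_surj {p : ℕ} (hpp : p.Prime) (N : ℕ) : Function.Surjective (Nat.cast : ℕ → ZMod (p ^ N)) := by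
  have : NeZero (p ^ N) := ⟨pow_ne_zero _ hpp.ne_zero⟩
  exact ZMod.natCast_zmod_surjective

theorem has_laz {p : ℕ} (hpp : p.Prime) (N m : ℕ) (hmN : m ≤ N) (hmp : m ≤ p) (P : Type) [Group P]
    (hP : Nat.card P = p ^ m) : HasLaz (ZMod (p ^ N)) p P := by
  induction m generalizing P with
  | zero =>
    rw [pow_zero] at hP
    have hsub := (Nat.card_eq_one_iff_unique.1 hP).1
    letI : LieRing PUnit.{1} :=
      { bracket := fun _ _ => PUnit.unit
        add_lie := fun _ _ _ => rfl
        lie_add := fun _ _ _ => rfl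
        lie_self := fun _ => rfl
        leibniz_lie := fun _ _ _ => rfl }
    letI : LieAlgebra (ZMod (p ^ N)) PUnit.{1} := { lie_smul := fun _ _ _ => rfl }
    refine ⟨PUnit, inferInstance, inferInstance, Subsingleton.elim _ _, fun _ => 1, ⟨?_, ?_⟩, ?_⟩
    · intro a b _; rfl
    · intro g; exact ⟨PUnit.unit, Subsingleton.elim _ _⟩
    · intro a b; simp
  | succ m ih =>
    have hp2 : 2 ≤ p := hpp.two_le
    have : Fact p.Prime := ⟨hpp⟩
    have hk := unitsLt_zmod hpp N
    have hs := zmod_nat_surj hpp N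
    have hsi : Function.Surjective (Int.cast : ℤ → ZMod (p ^ N)) := ZMod.intCast_surjective
    have : Finite P := Nat.finite_of_card_ne_zero (by rw [hP]; exact pow_ne_zero _ hpp.ne_zero)
    obtain ⟨H, hH⟩ := Sylow.exists_subgroup_card_pow_prime (G := P) p (n := m) (by
      rw [hP]; exact pow_dvd_pow _ (by omega))
    have hidx : H.index = p := by
      have := H.card_mul_index
      rw [hH, hP, pow_succ] at this
      exact Nat.eq_of_mul_eq_mul_left (pow_pos hpp.pos m) this
    have hnorm : H.Normal := by
      apply Subgroup.normal_of_index_eq_minFac_card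
      rw [hidx, hP, hpp.pow_minFac (by omega)]
    obtain ⟨K, _, _, hC, φ, hφb, hφ⟩ := ih (by omega) (by omega) H hH
    have hK : Nat.card K = p ^ m := by rw [← hH]; exact Nat.card_congr (Equiv.ofBijective φ hφb)
    have hact : ∀ g : P, ∃ F : K →ₗ⁅ZMod (p ^ N)⁆ K, ∀ a, φ (F a) = MulAut.conjNormal g (φ a) := by
      intro g
      obtain ⟨f, hf⟩ : ∃ f : K → K, ∀ a, φ (f a) = MulAut.conjNormal g (φ a) :=
        ⟨fun a => Function.surjInv hφb.2 (MulAut.conjNormal g (φ a)), fun a => Function.surjInv_eq _ _⟩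
      obtain ⟨F, hF⟩ := full_hom hk hp2 hs hC hC f (fun x y => by
        apply hφb.1
        rw [hf, hφ, hφ, hf, hf, map_mul])
      exact ⟨F, fun a => by rw [hF, hf]⟩
    choose act hact using hact
    have hactc : ∀ g a, (φ (act g a) : P) = g * φ a * g⁻¹ := by
      intro g a; rw [hact, MulAut.conjNormal_apply]
    have hone : ∀ a, act 1 a = a := fun a => hφb.1 (by rw [hact, map_one]; rfl)
    have hmul : ∀ g h a, act (g * h) a = act g (act h a) := fun g h a => hφb.1 (by
      rw [hact, hact, hact, map_mul]; rfl)
    have hinn : ∀ a, ∃ g : P, ∀ b, act g b = star (ZMod (p ^ N)) p (star (ZMod (p ^ N)) p a b) (-a) := by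
      intro a
      refine ⟨φ a, fun b => hφb.1 (Subtype.ext ?_)⟩
      rw [hactc, hφ, hφ, sh_neg hk hp2 hC hφ]; rfl
    have hAb := Af_bot hone hmul hpp hK hP hsi
    have hx : ∃ x : P, x ∉ H := by
      by_contra hcon
      push Not at hcon
      have : H = ⊤ := eq_top_iff.2 fun x _ => hcon x
      rw [this, Subgroup.index_top] at hidx
      omega
    obtain ⟨x, hx⟩ := hx
    have hx1 : (QuotientGroup.mk x : P ⧸ H) ≠ 1 := fun h => hx ((QuotientGroup.eq_one_iff x).1 h)
    have hcq : Nat.card (P ⧸ H) = p := by rw [← Subgroup.index_eq_card, hidx]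
    have hxp : x ^ p ∈ H := by
      rw [← QuotientGroup.eq_one_iff, QuotientGroup.mk_pow]
      conv_lhs => rw [← hcq]
      exact pow_card_eq_one'
    have hord : orderOf (QuotientGroup.mk x : P ⧸ H) = p := by
      refine orderOf_eq_prime ?_ hx1
      rw [← QuotientGroup.mk_pow]; exact (QuotientGroup.eq_one_iff _).2 hxp
    obtain ⟨u, hu⟩ := hφb.2 ⟨x ^ p, hxp⟩
    refine ext_laz hk hp2 hs (A := Af act) (fun h => Af_anti h) rfl ?_
      (fun ha hb => Af_br hone hmul hk hp2 hC hinn _ ha hb) hC (fun a => (φ a : P))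
      (Subtype.val_injective.comp hφb.1) (fun a b => by rw [hφ]; rfl) x (act x)
      (fun i a ha => Af_step x ha) (hactc x) u (by rw [hu]) ?_ ?_ ?_
    · exact eq_bot_iff.2 (hAb ▸ Af_anti (by omega))
    · intro g
      obtain ⟨i, hi⟩ := mem_powers_of_prime_card hcq hx1 (g' := (QuotientGroup.mk g : P ⧸ H))
      have hm : g * (x ^ i)⁻¹ ∈ H := by
        rw [← QuotientGroup.eq_one_iff, QuotientGroup.mk_mul, QuotientGroup.mk_inv, QuotientGroup.mk_pow]
        simp only at hi
        rw [hi, mul_inv_cancel]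
      obtain ⟨a, ha⟩ := hφb.2 ⟨_, hm⟩
      exact ⟨a, i, by rw [ha]; simp⟩
    · intro i a hi
      rw [← hord, orderOf_dvd_iff_pow_eq_one, ← QuotientGroup.mk_pow, QuotientGroup.eq_one_iff, hi]
      exact (φ a).2
    · intro i j hij
      rw [ZMod.natCast_eq_natCast_iff] at hij
      rw [pow_eq_pow_iff_modEq]
      refine hij.of_dvd ?_
      have := orderOf_dvd_natCard x
      rw [hP] at this
      exact this.trans (pow_dvd_pow _ hmN)

end Laz


namespace Laz
open Finset

section d3
variable {k : Type*} [CommRing k] {p : ℕ} (hk : UnitsLt k p) (hp : 2 ≤ p) {L : Type*} [LieRing L] [LieAlgebra k L]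
  (hC : Cs k L (p - 1) = ⊥)
  {P : Type*} [Group P] {φ : L → P} (hφb : Function.Bijective φ) (hφ : ∀ a b, φ (star k p a b) = φ a * φ b)

open scoped commutatorElement in
include hk hp hC hφ in
lemma sh_comm (a b : L) : φ (star k p (star k p a b) (-(star k p b a))) = ⁅φ a, φ b⁆ := by
  rw [hφ, sh_neg hk hp hC hφ, hφ, hφ, commutatorElement_def]; group

open scoped commutatorElement in
include hk hp hC hφ hφb in
lemma comm_exp_iff : (∀ x y : P, ⁅x, y⁆ ^ p = 1) ↔ ∀ a b : L, (p : k) • ⁅a, b⁆ = 0 := by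
  constructor
  · intro h a b
    let I : LieIdeal k L :=
      { LinearMap.ker (LinearMap.lsmul k L (p : k)) with
        lie_mem := by
          intro x m hm
          have hm' : (p : k) • m = 0 := hm
          change (p : k) • ⁅x, m⁆ = 0
          rw [← lie_smul, hm', lie_zero] }
    let π : L →ₗ⁅k⁆ (L ⧸ I) :=
      { (LieSubmodule.Quotient.mk' I : L →ₗ⁅k, L⁆ L ⧸ I).toLinearMap with
        map_lie' := fun {a b} => rfl }
    have hπs : Function.Surjective π := LieSubmodule.Quotient.surjective_mk' I
    have hπ0 : ∀ x, π x = 0 ↔ (p : k) • x = 0 := fun x => Submodule.Quotient.mk_eq_zero _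
    have hQ : Cs k (L ⧸ I) (p - 1) = ⊥ := Cs_bot_surj π hπs hC
    have hst := star_map hk hp hC hQ π
    rw [← hπ0, LieHom.map_lie]
    apply star_commute hk hp hQ
    have h0 : π (star k p (star k p a b) (-(star k p b a))) = 0 := by
      rw [hπ0]
      apply hφb.1
      rw [sh_nat hk hp hC hφ, sh_comm hk hp hC hφ, h, sh_zero hk hp hC hφ]
    rw [hst, map_neg] at h0
    have := star_eq_zero hk hp hQ h0
    rw [← hst, ← hst]
    exact (neg_injective this).symm
  · intro h x y
    obtain ⟨a, rfl⟩ := hφb.2 x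
    obtain ⟨b, rfl⟩ := hφb.2 y
    have hk1 : ∀ z ∈ Cs k L 1, (p : k) • z = 0 := by
      intro z hz
      rw [Cs] at hz
      induction hz using Submodule.span_induction with
      | zero => simp
      | add x y _ _ hx hy => rw [smul_add, hx, hy, add_zero]
      | smul c x _ hx => rw [smul_comm, hx, smul_zero]
      | mem x hx => obtain ⟨a, b, _, rfl⟩ := hx; exact h a b
    rw [← sh_comm hk hp hC hφ, ← sh_nat hk hp hC hφ, hk1, sh_zero hk hp hC hφ]
    have h1 := star_sub_mem hk hp hC a b
    have h2 := star_sub_mem hk hp hC b a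
    have h3 := star_sub_mem hk hp hC (star k p a b) (-(star k p b a))
    have h4 := Submodule.add_mem _ h3 (Submodule.sub_mem _ h1 h2)
    convert h4 using 1
    abel

end d3

section nil

/-- iterated operation -/
def it {M : Type*} (f : M → M → M) (a : ℕ → M) (b : M) : ℕ → M
  | 0 => b
  | i + 1 => f (a i) (it f a b i)

/-- vanishing of iterated operation -/
def NilE {M : Type*} [Zero M] (f : M → M → M) : Prop := ∃ N, ∀ a b, it f a b N = 0

lemma it_map {M M' : Type*} {f : M → M → M} {f' : M' → M' → M'} (g : M → M') (h : ∀ x y, g (f x y) = f' (g x) (g y))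
    (a : ℕ → M) (b : M) (i : ℕ) : g (it f a b i) = it f' (fun j => g (a j)) (g b) i := by
  induction i with
  | zero => rfl
  | succ i ih => rw [it, it, h, ih]

lemma it_congr {M : Type*} (f : M → M → M) {a a' : ℕ → M} (b : M) (i : ℕ) (h : ∀ j < i, a j = a' j) :
    it f a b i = it f a' b i := by
  induction i with
  | zero => rfl
  | succ i ih => rw [it, it, h i (by omega), ih fun j hj => h j (by omega)]

variable {k : Type*} [CommRing k] {L : Type*} [LieRing L] [LieAlgebra k L]

variable (k L) in
lemma Cs_it (i : ℕ) : Cs k L i = Submodule.span k {x | ∃ a b, it (fun x y : L => ⁅x, y⁆) a b i = x} := by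
  apply le_antisymm
  · refine Cs_le_of (Q := fun i => Submodule.span k {x | ∃ a b, it (fun x y : L => ⁅x, y⁆) a b i = x}) ?_ ?_ i
    · rw [eq_top_iff]; intro x _
      exact Submodule.subset_span ⟨fun _ => 0, x, rfl⟩
    · intro i x m hm
      induction hm using Submodule.span_induction with
      | zero => simp
      | add y z _ _ hy hz => rw [lie_add]; exact Submodule.add_mem _ hy hz
      | smul c y _ hy => rw [lie_smul]; exact Submodule.smul_mem _ _ hy
      | mem y hy =>
        obtain ⟨a, b, rfl⟩ := hy
        refine Submodule.subset_span ⟨Function.update a i x, b, ?_⟩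
        rw [it, Function.update_self]
        congr 1
        exact it_congr _ _ _ fun j hj => Function.update_of_ne (by omega) _ _
  · rw [Submodule.span_le]
    rintro _ ⟨a, b, rfl⟩
    induction i with
    | zero => trivial
    | succ i ih => exact Cs_br_step ih

variable (k L) in
lemma nilE_iff_Cs : NilE (fun x y : L => ⁅x, y⁆) ↔ ∃ N, Cs k L N = ⊥ := by
  refine exists_congr fun N => ?_
  rw [Cs_it, Submodule.span_eq_bot]
  constructor
  · rintro h _ ⟨a, b, rfl⟩; exact h a b
  · intro h a b; exact h _ ⟨a, b, rfl⟩

variable (L) in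
lemma nilE_iff : LieRing.IsNilpotent L ↔ NilE (fun x y : L => ⁅x, y⁆) := by
  rw [nilE_iff_Cs ℤ L]
  have h : ∀ i, (LieModule.lowerCentralSeries ℤ L L i).toSubmodule = Cs ℤ L i := by
    intro i
    induction i with
    | zero => simp [Cs]
    | succ i ih =>
      rw [LieModule.lowerCentralSeries_succ, LieSubmodule.lieIdeal_oper_eq_linear_span', Cs, ← ih]
      congr 1
      ext x; simp
  have : LieRing.IsNilpotent L ↔ ∃ N, LieModule.lowerCentralSeries ℤ L L N = ⊥ := LieModule.isNilpotent_iff ℤ L L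
  rw [this]
  refine exists_congr fun N => ?_
  rw [← h, LieSubmodule.toSubmodule_eq_bot]

end nil
end Laz


namespace Laz
open Finset

/-- a discrete valuation-like datum with residue field of order p -/
structure SR (S : Type) [CommRing S] (p : ℕ) where
  π : S
  ne : π ≠ 0
  red : S →+* ZMod p
  surj : Function.Surjective red
  ker : ∀ r, red r = 0 ↔ π ∣ r

section ml
variable {S : Type} [CommRing S] [IsDomain S] {p : ℕ} (D : SR S p) {ι : Type} (l : ι → ℕ)

/-- product of cyclic modules -/
def ML : Type := ∀ j, S ⧸ Ideal.span {D.π ^ (l j)}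

noncomputable instance : AddCommGroup (ML D l) := inferInstanceAs (AddCommGroup (∀ j, S ⧸ Ideal.span {D.π ^ (l j)}))
noncomputable instance : Module S (ML D l) := inferInstanceAs (Module S (∀ j, S ⧸ Ideal.span {D.π ^ (l j)}))

/-- class of a vector -/
noncomputable def mkL : (ι → S) →ₗ[S] ML D l where
  toFun r := fun j => Ideal.Quotient.mk _ (r j)
  map_add' _ _ := rfl
  map_smul' _ _ := rfl

lemma mkL_surj : Function.Surjective (mkL D l) := by
  intro x
  choose r hr using fun j => Ideal.Quotient.mk_surjective (x j)
  exact ⟨r, funext hr⟩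

lemma mkL_eq {r r' : ι → S} : mkL D l r = mkL D l r' ↔ ∀ j, D.π ^ (l j) ∣ r j - r' j := by
  constructor
  · intro h j
    have := congrFun h j
    exact Ideal.mem_span_singleton.1 ((Ideal.Quotient.eq).1 this)
  · intro h
    exact funext fun j => Ideal.Quotient.eq.2 (Ideal.mem_span_singleton.2 (h j))

lemma mkL_zero {r : ι → S} : mkL D l r = 0 ↔ ∀ j, D.π ^ (l j) ∣ r j := by
  rw [← map_zero (mkL D l), mkL_eq]; simp

lemma red_eq {r r' : S} : D.red r = D.red r' ↔ D.π ∣ r - r' := by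
  rw [← D.ker, map_sub, sub_eq_zero]

/-- reduction -/
noncomputable def vL (x : ML D l) : ι → ZMod p := fun j => D.red (Function.surjInv (mkL_surj D l) x j)

/-- socle -/
noncomputable def sL (w : ι → ZMod p) : ML D l := mkL D l fun j => D.π ^ (l j - 1) * Function.surjInv D.surj (w j)

variable {l} (hl : ∀ j, 1 ≤ l j)
include hl

lemma vL_mk (r : ι → S) : vL D l (mkL D l r) = fun j => D.red (r j) := by
  funext j
  have h := Function.surjInv_eq (mkL_surj D l) (mkL D l r)
  rw [mkL_eq] at h
  rw [vL, red_eq]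
  exact (dvd_pow_self _ (by have := hl j; omega)).trans (h j)

lemma sL_red (r : ι → S) : sL D l (fun j => D.red (r j)) = mkL D l fun j => D.π ^ (l j - 1) * r j := by
  rw [sL, mkL_eq]
  intro j
  have := Function.surjInv_eq D.surj (D.red (r j))
  rw [red_eq] at this
  rw [← mul_sub]
  conv_lhs => rw [← Nat.sub_add_cancel (hl j), pow_succ]
  exact mul_dvd_mul_left _ this

omit hl in
lemma red_lift (w : ι → ZMod p) : ∃ r : ι → S, w = fun j => D.red (r j) :=
  ⟨fun j => Function.surjInv D.surj (w j), funext fun _ => (Function.surjInv_eq _ _).symm⟩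

lemma vL_add (x y : ML D l) : vL D l (x + y) = vL D l x + vL D l y := by
  obtain ⟨r, rfl⟩ := mkL_surj D l x
  obtain ⟨r', rfl⟩ := mkL_surj D l y
  rw [← map_add, vL_mk D hl, vL_mk D hl, vL_mk D hl]
  funext j; simp

lemma vL_smul (c : S) (x : ML D l) : vL D l (c • x) = D.red c • vL D l x := by
  obtain ⟨r, rfl⟩ := mkL_surj D l x
  rw [← map_smul, vL_mk D hl, vL_mk D hl]
  funext j; simp

lemma vL_zero : vL D l 0 = 0 := by
  have := vL_smul D hl 0 0
  simpa using this

lemma vL_surj : Function.Surjective (vL D l) := by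
  intro w
  obtain ⟨r, rfl⟩ := red_lift D w
  exact ⟨_, vL_mk D hl r⟩

lemma vL_ker {x : ML D l} (h : vL D l x = 0) : ∃ y, x = D.π • y := by
  obtain ⟨r, rfl⟩ := mkL_surj D l x
  rw [vL_mk D hl] at h
  have : ∀ j, D.π ∣ r j := fun j => (D.ker _).1 (congrFun h j)
  choose t ht using this
  refine ⟨mkL D l t, ?_⟩
  rw [← map_smul]
  congr 1
  exact funext ht

lemma vL_pi (x : ML D l) : vL D l (D.π • x) = 0 := by
  rw [vL_smul D hl, (D.ker _).2 dvd_rfl, zero_smul]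

lemma sL_add (w w' : ι → ZMod p) : sL D l (w + w') = sL D l w + sL D l w' := by
  obtain ⟨r, rfl⟩ := red_lift D w
  obtain ⟨r', rfl⟩ := red_lift D w'
  have : (fun j => D.red (r j)) + (fun j => D.red (r' j)) = fun j => D.red ((r + r') j) := by
    funext j; simp
  rw [this, sL_red D hl, sL_red D hl, sL_red D hl, ← map_add]
  congr 1; funext j; simp [mul_add]

lemma sL_smul (c : S) (w : ι → ZMod p) : sL D l (D.red c • w) = c • sL D l w := by
  obtain ⟨r, rfl⟩ := red_lift D w
  have : D.red c • (fun j => D.red (r j)) = fun j => D.red ((c • r) j) := by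
    funext j; simp
  rw [this, sL_red D hl, sL_red D hl, ← map_smul]
  congr 1; funext j; simp; ring

lemma sL_zero : sL D l 0 = 0 := by
  have := sL_smul D hl 0 0
  simpa using this

lemma sL_inj : Function.Injective (sL D l) := by
  intro w w' h
  obtain ⟨r, rfl⟩ := red_lift D w
  obtain ⟨r', rfl⟩ := red_lift D w'
  rw [sL_red D hl, sL_red D hl, mkL_eq] at h
  funext j
  rw [red_eq]
  have := h j
  rw [← mul_sub] at this
  conv_lhs at this => rw [← Nat.sub_add_cancel (hl j), pow_succ]
  exact (mul_dvd_mul_iff_left (pow_ne_zero _ D.ne)).1 this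

lemma sL_pi (w : ι → ZMod p) : D.π • sL D l w = 0 := by
  rw [← sL_smul D hl, (D.ker _).2 dvd_rfl, zero_smul, sL_zero D hl]

lemma sL_range {x : ML D l} (h : D.π • x = 0) : ∃ w, x = sL D l w := by
  obtain ⟨r, rfl⟩ := mkL_surj D l x
  rw [← map_smul, mkL_zero] at h
  have : ∀ j, D.π ^ (l j - 1) ∣ r j := by
    intro j
    have := h j
    conv_lhs at this => rw [← Nat.sub_add_cancel (hl j), pow_succ']
    exact (mul_dvd_mul_iff_left D.ne).1 this
  choose t ht using this
  refine ⟨fun j => D.red (t j), ?_⟩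
  rw [sL_red D hl]
  congr 1
  exact funext ht

/-- projection to exponent one part -/
def io {p : ℕ} {ι : Type} (l : ι → ℕ) (w : ι → ZMod p) : ι → ZMod p := fun j => if l j = 1 then w j else 0

lemma vL_sL (w : ι → ZMod p) : vL D l (sL D l w) = io l w := by
  obtain ⟨r, rfl⟩ := red_lift D w
  rw [sL_red D hl, vL_mk D hl]
  funext j
  simp only [io]
  split_ifs with h
  · simp [h]
  · rw [D.ker]
    exact (dvd_pow_self _ (by have := hl j; omega)).mul_right _

end ml
end Laz


namespace Laz
open Finset

/-- combinatorial description of a Lie algebra -/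
structure Code (p n : ℕ) : Type 1 where
  ι : Type
  fin : Fintype ι
  dec : DecidableEq ι
  l : ι → ℕ
  hl : ∀ j, 1 ≤ l j
  sum : ∑ j, l j = n
  c : (ι → ZMod p) → (ι → ZMod p) → (ι → ZMod p)
  add_left : ∀ a b e, c (a + b) e = c a e + c b e
  add_right : ∀ a b e, c a (b + e) = c a b + c a e
  alt : ∀ a, c a a = 0
  leib : ∀ a b e, c a (io l (c b e)) = c (io l (c a b)) e + c b (io l (c a e))
  nil : NilE fun a b => io l (c a b)

attribute [instance] Code.fin Code.dec

section card
variable {S : Type} [CommRing S] [IsDomain S] [IsPrincipalIdealRing S] {p : ℕ} (D : SR S p)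

include D in
lemma card_cyc (hpp : p.Prime) (i : ℕ) : Nat.card (S ⧸ Ideal.span {D.π ^ i}) = p ^ i := by
  have hker : RingHom.ker D.red = Ideal.span {D.π} := by
    ext r; rw [RingHom.mem_ker, D.ker, Ideal.mem_span_singleton]
  have : Fact p.Prime := ⟨hpp⟩
  have hprime : (Ideal.span {D.π}).IsPrime := by rw [← hker]; exact RingHom.ker_isPrime _
  have h1 : Nat.card (S ⧸ Ideal.span {D.π}) = p := by
    rw [← hker, Nat.card_congr (RingHom.quotientKerEquivOfSurjective D.surj).toEquiv, Nat.card_zmod]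
  have h2 := cardQuot_pow_of_prime (P := Ideal.span {D.π}) (i := i) (by
    rw [Ne, Ideal.span_singleton_eq_bot]; exact D.ne)
  rw [Ideal.span_singleton_pow] at h2
  have e : ∀ I : Ideal S, Submodule.cardQuot I = Nat.card (S ⧸ I) := fun I => Submodule.cardQuot_apply I
  rw [e, e, h1] at h2
  exact h2

lemma card_ML (hpp : p.Prime) {ι : Type} [Fintype ι] (l : ι → ℕ) : Nat.card (ML D l) = p ^ ∑ j, l j := by
  rw [ML, Nat.card_pi, ← Finset.prod_pow_eq_pow_sum]
  exact Finset.prod_congr rfl fun j _ => card_cyc D hpp _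

end card

section lx
variable {S : Type} [CommRing S] [IsDomain S] {p n : ℕ} (D : SR S p)

/-- the Lie algebra of a code -/
def LX (X : Code p n) : Type := ML D X.l

variable (X : Code p n)

noncomputable instance : AddCommGroup (LX D X) := inferInstanceAs (AddCommGroup (ML D X.l))
noncomputable instance : Module S (LX D X) := inferInstanceAs (Module S (ML D X.l))

/-- reduction -/
noncomputable def vX (x : LX D X) : X.ι → ZMod p := vL D X.l x

/-- socle -/
noncomputable def sX (w : X.ι → ZMod p) : LX D X := sL D X.l w

noncomputable instance : Bracket (LX D X) (LX D X) := ⟨fun x y => sX D X (X.c (vX D X x) (vX D X y))⟩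

variable {X}
lemma LX_br (x y : LX D X) : ⁅x, y⁆ = sX D X (X.c (vX D X x) (vX D X y)) := rfl

lemma LX_vadd (x y : LX D X) : vX D X (x + y) = vX D X x + vX D X y := vL_add D X.hl x y
lemma LX_vsmul (r : S) (x : LX D X) : vX D X (r • x) = D.red r • vX D X x := vL_smul D X.hl r x
lemma LX_sadd (w w' : X.ι → ZMod p) : sX D X (w + w') = sX D X w + sX D X w' := sL_add D X.hl w w'
lemma LX_ssmul (r : S) (w : X.ι → ZMod p) : sX D X (D.red r • w) = r • sX D X w := sL_smul D X.hl r w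
lemma LX_vbr (x y : LX D X) : vX D X ⁅x, y⁆ = io X.l (X.c (vX D X x) (vX D X y)) := vL_sL D X.hl _

lemma LX_vker {x : LX D X} (h : vX D X x = 0) : ∃ y : LX D X, x = D.π • y := vL_ker D X.hl h
lemma LX_vsurj : Function.Surjective (vX D X) := vL_surj D X.hl
lemma LX_sinj : Function.Injective (sX D X) := sL_inj D X.hl

lemma Code.smul_right (X : Code p n) (r : ZMod p) (a b : X.ι → ZMod p) : X.c a (r • b) = r • X.c a b :=
  ZMod.map_smul (AddMonoidHom.mk' (X.c a) (X.add_right a)) r b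

noncomputable instance : LieRing (LX D X) where
  add_lie x y z := by rw [LX_br, LX_br, LX_br, LX_vadd, X.add_left, LX_sadd]
  lie_add x y z := by rw [LX_br, LX_br, LX_br, LX_vadd, X.add_right, LX_sadd]
  lie_self x := by rw [LX_br, X.alt]; exact sL_zero D X.hl
  leibniz_lie x y z := by
    rw [LX_br, LX_vbr, LX_br D ⁅x, y⁆, LX_br D y, LX_vbr, LX_vbr, X.leib, LX_sadd]

noncomputable instance : LieAlgebra S (LX D X) where
  lie_smul r x y := by rw [LX_br, LX_br, LX_vsmul, X.smul_right, LX_ssmul]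

lemma LX_pi (x y : LX D X) : D.π • ⁅x, y⁆ = 0 := sL_pi D X.hl _

lemma LX_nil : NilE (fun x y : LX D X => ⁅x, y⁆) := by
  obtain ⟨N, hN⟩ := X.nil
  refine ⟨N + 1, fun a b => ?_⟩
  rw [it]
  have h := it_map (f := fun x y : LX D X => ⁅x, y⁆) (f' := fun a b => io X.l (X.c a b)) (vX D X) (LX_vbr D) a b N
  rw [hN] at h
  obtain ⟨y, hy⟩ := LX_vker D h
  rw [hy, lie_smul, LX_pi]

lemma LX_card [IsPrincipalIdealRing S] (hpp : p.Prime) : Nat.card (LX D X) = p ^ n := by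
  rw [LX, card_ML D hpp, X.sum]

lemma LX_tors (x : LX D X) : D.π ^ n • x = 0 := by
  obtain ⟨r, hr⟩ := mkL_surj D X.l x
  subst hr
  have h : D.π ^ n • mkL D X.l r = 0 := by
    rw [← map_smul, mkL_zero]
    intro j
    rw [Pi.smul_apply, smul_eq_mul]
    refine (pow_dvd_pow _ ?_).mul_right _
    refine le_of_le_of_eq ?_ X.sum
    exact Finset.single_le_sum (f := X.l) (fun _ _ => Nat.zero_le _) (Finset.mem_univ j)
  exact h

end lx
end Laz


namespace Laz
open Finset

/-- apply a matrix -/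
def ap {p : ℕ} {ι κ : Type} [Fintype ι] (A : κ → ι → ZMod p) (a : ι → ZMod p) : κ → ZMod p := fun i => ∑ j, A i j * a j

/-- isomorphism of codes -/
def codeRel {p n : ℕ} (X Y : Code p n) : Prop :=
  ∃ A B : Y.ι → X.ι → ZMod p, (∀ i j, X.l j < Y.l i → A i j = 0) ∧ (∀ i j, Y.l i < X.l j → B i j = 0) ∧
    (∀ i j, Y.l i = X.l j → A i j = B i j) ∧ Function.Surjective (ap A) ∧
    ∀ a b, ap B (X.c a b) = Y.c (ap A a) (ap A b)

section lin
variable {S : Type} [CommRing S] [IsDomain S] {p : ℕ} (D : SR S p) {ι κ : Type} [Fintype ι] [DecidableEq ι]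
  {l : ι → ℕ} {l' : κ → ℕ}

lemma lin_v (hl : ∀ j, 1 ≤ l j) (hl' : ∀ j, 1 ≤ l' j) (h : ML D l →ₗ[S] ML D l') (r : κ → ι → S)
    (hr : ∀ t, h (mkL D l t) = mkL D l' fun i => ∑ j, r i j * t j) (x : ML D l) :
    vL D l' (h x) = ap (fun i j => D.red (r i j)) (vL D l x) := by
  obtain ⟨t, rfl⟩ := mkL_surj D l x
  rw [hr, vL_mk D hl, vL_mk D hl']
  funext i; simp [ap]

lemma lin_s (hl : ∀ j, 1 ≤ l j) (hl' : ∀ j, 1 ≤ l' j) (h : ML D l →ₗ[S] ML D l') (r b : κ → ι → S)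
    (hr : ∀ t, h (mkL D l t) = mkL D l' fun i => ∑ j, r i j * t j)
    (hb : ∀ i j, D.π ^ (l j - 1) * r i j = D.π ^ (l' i - 1) * b i j) (w : ι → ZMod p) :
    h (sL D l w) = sL D l' (ap (fun i j => D.red (b i j)) w) := by
  obtain ⟨t, rfl⟩ := red_lift D w
  have : ap (fun i j => D.red (b i j)) (fun j => D.red (t j)) = fun i => D.red (∑ j, b i j * t j) := by
    funext i; simp [ap]
  rw [this, sL_red D hl, sL_red D hl', hr]
  congr 1; funext i
  rw [Finset.mul_sum]
  refine Finset.sum_congr rfl fun j _ => ?_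
  rw [← mul_assoc, ← mul_assoc, ← hb]; ring

lemma lin_mat (h : ML D l →ₗ[S] ML D l') : ∃ r : κ → ι → S,
    (∀ t, h (mkL D l t) = mkL D l' fun i => ∑ j, r i j * t j) ∧ ∀ i j, D.π ^ (l' i) ∣ D.π ^ (l j) * r i j := by
  choose r hr using fun j => mkL_surj D l' (h (mkL D l fun j' => if j = j' then 1 else 0))
  refine ⟨fun i j => r j i, fun t => ?_, fun i j => ?_⟩
  · have := LinearMap.pi_apply_eq_sum_univ (h.comp (mkL D l)) t
    simp only [LinearMap.comp_apply, ← hr] at this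
    rw [this]
    simp only [← map_smul, ← map_sum]
    congr 1; funext i
    rw [Finset.sum_apply]
    refine Finset.sum_congr rfl fun j _ => ?_
    rw [Pi.smul_apply, smul_eq_mul, mul_comm]
  · have h1 : D.π ^ (l j) • (mkL D l fun j' => if j = j' then 1 else 0) = 0 := by
      rw [← map_smul, mkL_zero]
      intro j'
      rw [Pi.smul_apply, smul_eq_mul]
      split_ifs with hj
      · subst hj; simp
      · simp
    have h2 := congrArg h h1
    rw [map_smul, ← hr, map_zero, ← map_smul, mkL_zero] at h2
    exact h2 i

lemma lin_of_mat (r : κ → ι → S) (hr : ∀ i j, D.π ^ (l' i) ∣ D.π ^ (l j) * r i j) :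
    ∃ h : ML D l →ₗ[S] ML D l', ∀ t, h (mkL D l t) = mkL D l' fun i => ∑ j, r i j * t j := by
  let g : (ι → S) →ₗ[S] ML D l' := (mkL D l').comp
    ({
      toFun := fun t i => ∑ j, r i j * t j
      map_add' := fun t t' => by funext i; simp [mul_add, Finset.sum_add_distrib]
      map_smul' := fun c t => by
        funext i; simp only [Pi.smul_apply, smul_eq_mul, Finset.mul_sum, RingHom.id_apply]
        exact Finset.sum_congr rfl fun j _ => by ring } : (ι → S) →ₗ[S] (κ → S))
  have hle : LinearMap.ker (mkL D l) ≤ LinearMap.ker g := by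
    intro t ht
    rw [LinearMap.mem_ker, mkL_zero] at ht
    rw [LinearMap.mem_ker]
    change mkL D l' _ = 0
    rw [mkL_zero]
    intro i
    refine Finset.dvd_sum fun j _ => ?_
    obtain ⟨u, hu⟩ := ht j
    rw [hu]
    have := (hr i j).mul_right u
    convert this using 1; ring
  refine ⟨(Submodule.liftQ _ g hle).comp
    ((mkL D l).quotKerEquivOfSurjective (mkL_surj D l)).symm.toLinearMap, fun t => ?_⟩
  have : ((mkL D l).quotKerEquivOfSurjective (mkL_surj D l)).symm (mkL D l t) = Submodule.Quotient.mk t := by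
    rw [LinearEquiv.symm_apply_eq]; rfl
  rw [LinearMap.comp_apply, LinearEquiv.coe_coe, this, Submodule.liftQ_apply]; rfl

end lin

section e3
variable {S : Type} [CommRing S] [IsDomain S] [IsPrincipalIdealRing S] {p n : ℕ} (D : SR S p) (hpp : p.Prime)

lemma codeRel_of_iso {X Y : Code p n} (e : LX D X ≃ₗ⁅S⁆ LX D Y) : codeRel X Y := by
  let h : ML D X.l →ₗ[S] ML D Y.l := e.toLieHom.toLinearMap
  obtain ⟨r, hr, hd⟩ := lin_mat D h
  have hb : ∀ i j, ∃ b, D.π ^ (X.l j - 1) * r i j = D.π ^ (Y.l i - 1) * b := by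
    intro i j
    have := hd i j
    conv_lhs at this => rw [← Nat.sub_add_cancel (Y.hl i), pow_succ']
    conv_rhs at this => rw [← Nat.sub_add_cancel (X.hl j), pow_succ', mul_assoc]
    exact (mul_dvd_mul_iff_left D.ne).1 this
  choose b hb using hb
  have hv : ∀ x : LX D X, vX D Y (e x) = ap (fun i j => D.red (r i j)) (vX D X x) := lin_v D X.hl Y.hl h r hr
  have hs : ∀ w, e (sX D X w) = sX D Y (ap (fun i j => D.red (b i j)) w) := lin_s D X.hl Y.hl h r b hr hb
  refine ⟨fun i j => D.red (r i j), fun i j => D.red (b i j), ?_, ?_, ?_, ?_, ?_⟩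
  · intro i j hij
    rw [D.ker]
    have := hd i j
    rw [← Nat.sub_add_cancel hij.le, Nat.add_comm, pow_add] at this
    exact (dvd_pow_self _ (by omega)).trans ((mul_dvd_mul_iff_left (pow_ne_zero _ D.ne)).1 this)
  · intro i j hij
    rw [D.ker]
    have := hb i j
    have hle := Y.hl i
    rw [show X.l j - 1 = (Y.l i - 1) + (X.l j - Y.l i) by omega, pow_add, mul_assoc] at this
    rw [← mul_left_cancel₀ (pow_ne_zero _ D.ne) this]
    exact (dvd_pow_self _ (by omega)).mul_right _
  · intro i j hij
    have := hb i j
    rw [hij] at this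
    show D.red (r i j) = D.red (b i j)
    rw [mul_left_cancel₀ (pow_ne_zero _ D.ne) this]
  · intro w
    obtain ⟨y, rfl⟩ := LX_vsurj D w
    obtain ⟨x, rfl⟩ := e.surjective y
    exact ⟨_, (hv x).symm⟩
  · intro a a'
    obtain ⟨x, rfl⟩ := LX_vsurj D a
    obtain ⟨x', rfl⟩ := LX_vsurj D a'
    apply LX_sinj D
    rw [← hs, ← hv, ← hv, ← LX_br, ← LX_br]
    exact e.toLieHom.map_lie x x'

include hpp in
lemma iso_of_codeRel {X Y : Code p n} (hXY : codeRel X Y) : Nonempty (LX D X ≃ₗ⁅S⁆ LX D Y) := by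
  obtain ⟨A, B, hA, hB, hAB, hAs, hc⟩ := hXY
  choose α hα using fun i j => D.surj (A i j)
  choose β hβ using fun i j => D.surj (B i j)
  let r : Y.ι → X.ι → S := fun i j => if Y.l i ≤ X.l j then α i j else D.π ^ (Y.l i - X.l j) * β i j
  let b : Y.ι → X.ι → S := fun i j => if Y.l i ≤ X.l j then D.π ^ (X.l j - Y.l i) * α i j else β i j
  have hd : ∀ i j, D.π ^ (Y.l i) ∣ D.π ^ (X.l j) * r i j := by
    intro i j
    simp only [r]
    split_ifs with hij
    · exact (pow_dvd_pow _ hij).mul_right _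
    · rw [← mul_assoc, ← pow_add, show X.l j + (Y.l i - X.l j) = Y.l i by omega]
      exact dvd_mul_right _ _
  obtain ⟨h, hr⟩ := lin_of_mat D r hd
  have hb : ∀ i j, D.π ^ (X.l j - 1) * r i j = D.π ^ (Y.l i - 1) * b i j := by
    intro i j
    have h1 := X.hl j
    have h2 := Y.hl i
    simp only [r, b]
    split_ifs with hij
    · rw [← mul_assoc, ← pow_add]; congr 2; omega
    · rw [← mul_assoc, ← pow_add]; congr 2; omega
  have hrA : (fun i j => D.red (r i j)) = A := by
    funext i j
    simp only [r]
    split_ifs with hij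
    · exact hα i j
    · rw [hA i j (by omega), D.ker]
      exact (dvd_pow_self _ (by omega)).mul_right _
  have hbB : (fun i j => D.red (b i j)) = B := by
    funext i j
    simp only [b]
    split_ifs with hij
    · rcases hij.lt_or_eq with hlt | heq
      · rw [hB i j hlt, D.ker]
        exact (dvd_pow_self _ (by omega)).mul_right _
      · rw [← hAB i j heq, heq]; simp [hα]
    · exact hβ i j
  let e : LX D X →ₗ[S] LX D Y := h
  have hv : ∀ x : LX D X, vX D Y (e x) = ap A (vX D X x) := by
    rw [← hrA]; exact lin_v D X.hl Y.hl h r hr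
  have hs : ∀ w, e (sX D X w) = sX D Y (ap B w) := by
    rw [← hbB]; exact lin_s D X.hl Y.hl h r b hr hb
  have hsur : Function.Surjective e := by
    have key : ∀ (N : ℕ) (y : LX D Y), ∃ x z, y = e x + D.π ^ N • z := by
      intro N
      induction N with
      | zero => intro y; exact ⟨0, y, by simp⟩
      | succ N ih =>
        intro y
        obtain ⟨x, z, hz⟩ := ih y
        obtain ⟨a, ha⟩ := hAs (vX D Y z)
        obtain ⟨x', rfl⟩ := LX_vsurj D a
        have h0 : vX D Y (z + (-1 : S) • e x') = 0 := by
          rw [LX_vadd, LX_vsmul, hv, ha]; simp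
        obtain ⟨z', hz'⟩ := LX_vker D h0
        refine ⟨x + D.π ^ N • x', z', ?_⟩
        have : z = e x' + D.π • z' := by rw [← hz']; simp
        rw [hz, this, map_add, map_smul, smul_add, smul_smul, pow_succ, add_assoc]
    intro y
    obtain ⟨x, z, hz⟩ := key n y
    rw [LX_tors, add_zero] at hz
    exact ⟨x, hz.symm⟩
  have hbij : Function.Bijective e := by
    have hcX := LX_card (X := X) D hpp
    have hcY := LX_card (X := Y) D hpp
    have : Finite (LX D X) := Nat.finite_of_card_ne_zero (by rw [hcX]; exact pow_ne_zero _ hpp.ne_zero)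
    have : Finite (LX D Y) := Nat.finite_of_card_ne_zero (by rw [hcY]; exact pow_ne_zero _ hpp.ne_zero)
    exact Function.Surjective.bijective_of_nat_card_le hsur (by rw [hcX, hcY])
  have hlie : ∀ x y : LX D X, e ⁅x, y⁆ = ⁅e x, e y⁆ := by
    intro x y
    rw [LX_br, LX_br, hs, hv, hv, hc]
  let E : LX D X →ₗ⁅S⁆ LX D Y := { e with map_lie' := fun {x y} => hlie x y }
  exact ⟨LieEquiv.ofBijective E hbij⟩

end e3
end Laz


namespace Laz
open Finset

section e2
variable {S : Type} [CommRing S] [IsDomain S] [IsPrincipalIdealRing S] {p n : ℕ} (D : SR S p) (hpp : p.Prime)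

include hpp in
lemma pi_irr : Irreducible D.π := by
  have hker : RingHom.ker D.red = Ideal.span {D.π} := by
    ext r; rw [RingHom.mem_ker, D.ker, Ideal.mem_span_singleton]
  have : Fact p.Prime := ⟨hpp⟩
  have hprime : (Ideal.span {D.π}).IsPrime := by rw [← hker]; exact RingHom.ker_isPrime _
  exact ((Ideal.span_singleton_prime D.ne).1 hprime).irreducible

include hpp in
lemma decomp (M : Type) [AddCommGroup M] [Module S M] (hc : Nat.card M = p ^ n) (ht : ∀ x : M, D.π ^ n • x = 0) :
    ∃ (ι : Type) (_ : Fintype ι) (_ : DecidableEq ι) (l : ι → ℕ), (∀ j, 1 ≤ l j) ∧ ∑ j, l j = n ∧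
      Nonempty (M ≃ₗ[S] ML D l) := by
  have : Finite M := Nat.finite_of_card_ne_zero (by rw [hc]; exact pow_ne_zero _ hpp.ne_zero)
  have hM : Module.IsTorsion' M (Submonoid.powers D.π) := by
    intro x
    exact ⟨⟨D.π ^ n, n, rfl⟩, ht x⟩
  obtain ⟨d, k, ⟨e⟩⟩ := Module.torsion_by_prime_power_decomposition (pi_irr D hpp) hM
  let e1 : M ≃ₗ[S] ML D k := e.trans (DirectSum.linearEquivFunOnFintype S (Fin d) _)
  let ι := {i : Fin d // k i ≠ 0}
  let l : ι → ℕ := fun i => k i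
  let g : ML D k →ₗ[S] ML D l :=
    { toFun := fun x i => x i.1
      map_add' := fun _ _ => rfl
      map_smul' := fun _ _ => rfl }
  have hg : Function.Bijective g := by
    constructor
    · intro x y hxy
      funext i
      by_cases hi : k i = 0
      · have : Subsingleton (S ⧸ Ideal.span {D.π ^ (k i)}) := by
          rw [Ideal.Quotient.subsingleton_iff, hi, pow_zero, Ideal.span_singleton_one]
        exact Subsingleton.elim _ _
      · exact congrFun hxy ⟨i, hi⟩
    · intro y
      refine ⟨fun i => if hi : k i ≠ 0 then y ⟨i, hi⟩ else 0, ?_⟩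
      funext i
      exact dif_pos i.2
  let e2 : M ≃ₗ[S] ML D l := e1.trans (LinearEquiv.ofBijective g hg)
  refine ⟨ι, inferInstance, inferInstance, l, fun j => Nat.one_le_iff_ne_zero.2 j.2, ?_, ⟨e2⟩⟩
  have h1 := card_ML D hpp l
  rw [← Nat.card_congr e2.toEquiv, hc] at h1
  exact (Nat.pow_right_injective hpp.two_le h1).symm

include hpp in
lemma exists_code (L : Type) [LieRing L] [LieAlgebra S L] (hc : Nat.card L = p ^ n) (ht : ∀ x : L, D.π ^ n • x = 0)
    (hnil : NilE (fun x y : L => ⁅x, y⁆)) (hpi : ∀ a b : L, D.π • ⁅a, b⁆ = 0) :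
    ∃ X : Code p n, Nonempty (LX D X ≃ₗ⁅S⁆ L) := by
  obtain ⟨ι, _, _, l, hl, hsum, ⟨e⟩⟩ := decomp D hpp L hc ht
  let v : L → ι → ZMod p := fun x => vL D l (e x)
  let s : (ι → ZMod p) → L := fun w => e.symm (sL D l w)
  have vadd : ∀ x y, v (x + y) = v x + v y := fun x y => by simp only [v, map_add, vL_add D hl]
  have vsm : ∀ (r : S) x, v (r • x) = D.red r • v x := fun r x => by simp only [v, map_smul, vL_smul D hl]
  have vs : ∀ w, v (s w) = io l w := fun w => by simp only [v, s, LinearEquiv.apply_symm_apply, vL_sL D hl]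
  have sadd : ∀ w w', s (w + w') = s w + s w' := fun x y => by simp only [s, map_add, sL_add D hl]
  have szero : s 0 = 0 := by simp only [s, sL_zero D hl, map_zero]
  have sinj : Function.Injective s := e.symm.injective.comp (sL_inj D hl)
  have vsurj : Function.Surjective v := (vL_surj D hl).comp e.surjective
  have vker : ∀ x, v x = 0 → ∃ y, x = D.π • y := by
    intro x hx
    obtain ⟨y, hy⟩ := vL_ker D hl hx
    refine ⟨e.symm y, ?_⟩
    rw [← map_smul, ← hy, LinearEquiv.symm_apply_apply]
  have srange : ∀ x, D.π • x = 0 → ∃ w, x = s w := by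
    intro x hx
    have : D.π • e x = 0 := by rw [← map_smul, hx, map_zero]
    obtain ⟨w, hw⟩ := sL_range D hl this
    exact ⟨w, by simp only [s, ← hw, LinearEquiv.symm_apply_apply]⟩
  have hv0 : ∀ x y, v x = v y → ∃ z, x = y + D.π • z := by
    intro x y h
    obtain ⟨z, hz⟩ := vker (x + (-1 : S) • y) (by rw [vadd, vsm, h]; simp)
    exact ⟨z, by rw [← hz]; simp⟩
  have hdep : ∀ x x' y y', v x = v x' → v y = v y' → ⁅x, y⁆ = ⁅x', y'⁆ := by
    intro x x' y y' h h'
    obtain ⟨z, rfl⟩ := hv0 _ _ h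
    obtain ⟨z', rfl⟩ := hv0 _ _ h'
    simp only [add_lie, lie_add, smul_lie, lie_smul, hpi, smul_zero, add_zero]
  choose t hts using vsurj
  choose c hcs using fun a b => srange _ (hpi (t a) (t b))
  have hbr : ∀ x y, ⁅x, y⁆ = s (c (v x) (v y)) := by
    intro x y
    rw [← hcs]
    exact hdep _ _ _ _ (hts _).symm (hts _).symm
  have hvbr : ∀ x y, v ⁅x, y⁆ = io l (c (v x) (v y)) := fun x y => by rw [hbr, vs]
  let X : Code p n :=
    { ι := ι, fin := inferInstance, dec := inferInstance, l := l, hl := hl, sum := hsum, c := c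
      add_left := fun a b d => by
        apply sinj
        rw [← hts a, ← hts b, ← hts d, sadd, ← vadd, ← hbr, ← hbr, ← hbr, add_lie]
      add_right := fun a b d => by
        apply sinj
        rw [← hts a, ← hts b, ← hts d, sadd, ← vadd, ← hbr, ← hbr, ← hbr, lie_add]
      alt := fun a => by
        apply sinj
        rw [← hts a, ← hbr, lie_self, szero]
      leib := fun a b d => by
        apply sinj
        rw [← hts a, ← hts b, ← hts d, sadd, ← hvbr, ← hvbr, ← hvbr, ← hbr, ← hbr, ← hbr, leibniz_lie]
      nil := by
        obtain ⟨N, hN⟩ := hnil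
        refine ⟨N, fun a b => ?_⟩
        have := it_map (f := fun x y : L => ⁅x, y⁆) (f' := fun a b => io l (c a b)) v hvbr (fun j => t (a j)) (t b) N
        rw [hN] at this
        simp only [hts] at this
        rw [← this]
        simp only [v, map_zero, vL_zero D hl] }
  let E : LX D X →ₗ[S] L := e.symm.toLinearMap
  have hE : ∀ x y : LX D X, E ⁅x, y⁆ = ⁅E x, E y⁆ := by
    intro x y
    rw [hbr]
    have h1 : ∀ z : LX D X, v (E z) = vX D X z := fun z => by
      simp only [v]
      exact congrArg _ (e.apply_symm_apply z)
    rw [h1, h1]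
    rfl
  let E' : LX D X →ₗ⁅S⁆ L := { E with map_lie' := fun {x y} => hE x y }
  exact ⟨X, ⟨LieEquiv.ofBijective E' e.symm.bijective⟩⟩

end e2

lemma quot_equiv {A B : Type*} (r : A → A → Prop) (s : B → B → Prop) (hs : Equivalence s) (F : A → B)
    (h : ∀ a a', r a a' ↔ s (F a) (F a')) (hF : ∀ b, ∃ a, s (F a) b) : Nonempty (Quot r ≃ Quot s) := by
  refine ⟨Equiv.ofBijective (Quot.map F fun a a' => (h a a').1) ⟨?_, ?_⟩⟩
  · rintro ⟨a⟩ ⟨a'⟩ hab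
    have : Quot.mk s (F a) = Quot.mk s (F a') := hab
    apply Quot.sound
    rw [h]
    rw [Quot.eq, hs.eqvGen_iff] at this
    exact this
  · rintro ⟨b⟩
    obtain ⟨a, ha⟩ := hF b
    exact ⟨Quot.mk _ a, Quot.sound ha⟩

end Laz


namespace Laz
open Finset

/-- the datum for the integers -/
noncomputable def DZ {p : ℕ} (hpp : p.Prime) : SR ℤ p where
  π := (p : ℕ)
  ne := by exact_mod_cast hpp.ne_zero
  red := Int.castRingHom (ZMod p)
  surj := ZMod.intCast_surjective
  ker r := by simpa using ZMod.intCast_zmod_eq_zero_iff_dvd r p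

/-- the datum for polynomials -/
noncomputable def DP {p : ℕ} (hpp : p.Prime) : SR (ZMod p)[X] p where
  π := X
  ne := by
    have : Fact p.Prime := ⟨hpp⟩
    exact X_ne_zero
  red := constantCoeff
  surj := constantCoeff_surjective
  ker r := by rw [X_dvd_iff]; rfl

/-- Lie rings killed by `m` are algebras over integers modulo `m` -/
@[reducible] noncomputable def zmodLie {L : Type} [LieRing L] (m : ℕ) (h : ∀ x : L, m • x = 0) : LieAlgebra (ZMod m) L :=
  letI := AddCommGroup.zmodModule h
  { lie_smul := fun c x y => ZMod.map_smul (AddMonoidHom.mk' (fun y : L => ⁅x, y⁆) (lie_add x)) c y }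

/-- isomorphism of Lie rings -/
def LRI (L L' : Type) [LieRing L] [LieRing L'] : Prop :=
  ∃ f : L → L', Function.Bijective f ∧ (∀ x y, f (x + y) = f x + f y) ∧ ∀ x y, f ⁅x, y⁆ = ⁅f x, f y⁆

lemma lri_of_equiv {R L L' : Type} [CommRing R] [LieRing L] [LieRing L'] [LieAlgebra R L] [LieAlgebra R L']
    (e : L ≃ₗ⁅R⁆ L') : LRI L L' :=
  ⟨e, e.bijective, fun x y => map_add e.toLinearEquiv x y, fun x y => e.toLieHom.map_lie x y⟩

lemma equiv_of_lri {R L L' : Type} [CommRing R] [LieRing L] [LieRing L'] [LieAlgebra R L] [LieAlgebra R L']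
    (hs : Function.Surjective (Int.cast : ℤ → R)) (h : LRI L L') : ∃ e : L →ₗ⁅R⁆ L', Function.Bijective e := by
  obtain ⟨f, hf, ha, hl⟩ := h
  refine ⟨{ toFun := f, map_add' := ha, map_smul' := ?_, map_lie' := hl _ _ }, hf⟩
  intro r x
  obtain ⟨r, rfl⟩ := hs r
  rw [Int.cast_smul_eq_zsmul, RingHom.id_apply, Int.cast_smul_eq_zsmul]
  exact map_zsmul (AddMonoidHom.mk' f ha) r x

lemma nat_sm {R M : Type} [CommRing R] [A : AddCommGroup M] [I : Module R M] (m : ℕ) (x : M) (h : (m : R) • x = 0) :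
    m • x = 0 := by
  rwa [Nat.cast_smul_eq_nsmul] at h

section grp
variable {p n : ℕ} (hpp : p.Prime) (hn : n ≤ p)

lemma LXZ_tors (X : Code p n) (x : LX (DZ hpp) X) : (p ^ n) • x = 0 := by
  have h := LX_tors (DZ hpp) x
  have h2 : (DZ hpp).π ^ n = ((p ^ n : ℕ) : ℤ) := by simp [DZ]
  rw [h2] at h
  exact nat_sm (I := instModuleLX (DZ hpp) X) (p ^ n) x h

/-- algebra structure -/
@[reducible] noncomputable def LXZ (X : Code p n) : LieAlgebra (ZMod (p ^ n)) (LX (DZ hpp) X) :=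
  zmodLie (p ^ n) (LXZ_tors hpp X)

include hn in
lemma LXZ_Cs (X : Code p n) : letI := LXZ hpp X; Cs (ZMod (p ^ n)) (LX (DZ hpp) X) (p - 1) = ⊥ := by
  letI := LXZ hpp X
  exact nilp_class hpp hn (LX_card (DZ hpp) hpp) ((nilE_iff_Cs _ _).1 (LX_nil (DZ hpp))) ZMod.intCast_surjective

/-- group of a code -/
noncomputable def grpOf (X : Code p n) : GoodGroup p n :=
  letI := LXZ hpp X
  ⟨⟨LX (DZ hpp) X, starGroup (unitsLt_zmod hpp n) hpp.two_le (LXZ_Cs hpp hn X)⟩, LX_card (DZ hpp) hpp, by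
    letI := starGroup (unitsLt_zmod hpp n) hpp.two_le (LXZ_Cs hpp hn X)
    refine (comm_exp_iff (unitsLt_zmod hpp n) hpp.two_le (LXZ_Cs hpp hn X) (φ := id) (P := LX (DZ hpp) X)
      Function.bijective_id (fun _ _ => rfl)).2 fun a b => ?_
    have h := LX_pi (DZ hpp) a b
    have h2 : (DZ hpp).π = ((p : ℕ) : ℤ) := rfl
    rw [h2] at h
    rw [Nat.cast_smul_eq_nsmul]
    exact nat_sm (I := instModuleLX (DZ hpp) X) p _ h⟩

lemma grp_iff (X Y : Code p n) : codeRel X Y ↔ groupIsoRel p n (grpOf hpp hn X) (grpOf hpp hn Y) := by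
  letI := LXZ hpp X
  letI := LXZ hpp Y
  have hk := unitsLt_zmod hpp n
  have hX := LXZ_Cs hpp hn X
  have hY := LXZ_Cs hpp hn Y
  constructor
  · intro h
    obtain ⟨e⟩ := iso_of_codeRel (DZ hpp) hpp h
    obtain ⟨f, hf⟩ := equiv_of_lri (R := ZMod (p ^ n)) ZMod.intCast_surjective (lri_of_equiv e)
    letI := starGroup hk hpp.two_le hX
    letI := starGroup hk hpp.two_le hY
    let E : LX (DZ hpp) X ≃* LX (DZ hpp) Y := { Equiv.ofBijective f hf with map_mul' := star_map hk hpp.two_le hX hY f }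
    exact ⟨E⟩
  · intro h
    letI i1 : Group (LX (DZ hpp) X) := starGroup hk hpp.two_le hX
    letI i2 : Group (LX (DZ hpp) Y) := starGroup hk hpp.two_le hY
    obtain ⟨e⟩ : Nonempty (LX (DZ hpp) X ≃* LX (DZ hpp) Y) := h
    obtain ⟨F, hF⟩ := full_hom hk hpp.two_le (zmod_nat_surj hpp n) hX hY e (fun x y => map_mul e x y)
    have hFb : Function.Bijective F := by
      have : (F : LX (DZ hpp) X → LX (DZ hpp) Y) = e := funext hF
      rw [this]; exact e.bijective
    obtain ⟨E, hE⟩ := equiv_of_lri (R := ℤ) (fun z => ⟨z, rfl⟩) (lri_of_equiv (LieEquiv.ofBijective F hFb))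
    exact codeRel_of_iso (DZ hpp) (LieEquiv.ofBijective E hE)

lemma grp_surj (q : GoodGroup p n) : ∃ X, groupIsoRel p n (grpOf hpp hn X) q := by
  obtain ⟨⟨P, hG⟩, hcard, hexp⟩ := q
  have hk := unitsLt_zmod hpp n
  obtain ⟨L, i1, i2, hC, φ, hφb, hφ⟩ := has_laz hpp n n le_rfl hn P hcard
  have hpi := (comm_exp_iff hk hpp.two_le hC hφb hφ).1 hexp
  have hcL : Nat.card L = p ^ n := by rw [Nat.card_eq_of_bijective φ hφb]; exact hcard
  obtain ⟨X, ⟨e⟩⟩ := exists_code (n := n) (DZ hpp) hpp L hcL (fun x => by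
      have h2 : (DZ hpp).π ^ n = ((p ^ n : ℕ) : ℤ) := by simp [DZ]
      rw [h2, Nat.cast_smul_eq_nsmul, ← hcL]
      exact card_nsmul_eq_zero') ((nilE_iff_Cs (ZMod (p ^ n)) L).2 ⟨_, hC⟩) (fun a b => by
      have h2 : (DZ hpp).π = ((p : ℕ) : ℤ) := rfl
      rw [h2, Nat.cast_smul_eq_nsmul, ← Nat.cast_smul_eq_nsmul (ZMod (p ^ n))]
      exact hpi a b)
  letI := LXZ hpp X
  have hX := LXZ_Cs hpp hn X
  obtain ⟨f, hf⟩ := equiv_of_lri (R := ZMod (p ^ n)) ZMod.intCast_surjective (lri_of_equiv e)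
  letI := starGroup hk hpp.two_le hX
  have hm : ∀ x y : LX (DZ hpp) X, φ (f (star (ZMod (p ^ n)) p x y)) = φ (f x) * φ (f y) := fun x y => by
    rw [star_map hk hpp.two_le hX hC f x y, hφ]
  let E : LX (DZ hpp) X ≃* P := { Equiv.ofBijective (φ ∘ f) (hφb.comp hf) with map_mul' := hm }
  exact ⟨X, ⟨E⟩⟩

lemma group_equivalence : Equivalence (groupIsoRel p n) := by
  refine ⟨fun q => ?_, fun {q q'} h => ?_, fun {q q' q''} h h' => ?_⟩
  · letI := q.1.2; exact ⟨MulEquiv.refl _⟩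
  · letI := q.1.2; letI := q'.1.2
    obtain ⟨e⟩ := h; exact ⟨e.symm⟩
  · letI := q.1.2; letI := q'.1.2; letI := q''.1.2
    obtain ⟨e⟩ := h; obtain ⟨e'⟩ := h'; exact ⟨e.trans e'⟩

include hpp hn in
lemma quot_grp : Nonempty (Quot (codeRel (p := p) (n := n)) ≃ Quot (groupIsoRel p n)) :=
  quot_equiv _ _ group_equivalence (grpOf hpp hn) (grp_iff hpp hn) (grp_surj hpp hn)

end grp

section lie
variable {p n : ℕ} [Fact p.Prime] (hpp : p.Prime)

lemma LXP_tors (X : Code p n) : Module.IsTorsionBySet (ZMod p)[X] (LX (DP hpp) X) (Ideal.span {(Polynomial.X : (ZMod p)[X]) ^ n} : Ideal (ZMod p)[X]) := by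
  rw [Module.isTorsionBySet_span_singleton_iff]
  intro x
  exact LX_tors (DP hpp) x

/-- algebra structure -/
@[reducible] noncomputable def LXP (X : Code p n) : LieAlgebra (Rn p n) (LX (DP hpp) X) :=
  letI : Module (Rn p n) (LX (DP hpp) X) := (LXP_tors hpp X).module
  { lie_smul := fun r x y => by
      obtain ⟨r, rfl⟩ := Ideal.Quotient.mk_surjective r
      exact lie_smul r x y }

/-- Lie algebra of a code -/
noncomputable def lieOf (X : Code p n) : GoodLie p n :=
  ⟨⟨LX (DP hpp) X, inferInstance, LXP hpp X⟩,
    LX_card (DP hpp) hpp, (nilE_iff _).2 (LX_nil (DP hpp)), fun a b => LX_pi (DP hpp) a b⟩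

lemma lie_iff (X Y : Code p n) : codeRel X Y ↔ lieIsoRel p n (lieOf hpp X) (lieOf hpp Y) := by
  letI := LXP hpp X
  letI := LXP hpp Y
  constructor
  · intro h
    obtain ⟨e⟩ := iso_of_codeRel (DP hpp) hpp h
    let f : LX (DP hpp) X →ₗ⁅Rn p n⁆ LX (DP hpp) Y :=
      { toFun := e
        map_add' := fun x y => map_add e.toLinearEquiv x y
        map_smul' := fun r x => by
          obtain ⟨r, rfl⟩ := Ideal.Quotient.mk_surjective r
          exact map_smul e.toLinearEquiv r x
        map_lie' := fun {x y} => e.toLieHom.map_lie x y }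
    let E : LX (DP hpp) X ≃ₗ⁅Rn p n⁆ LX (DP hpp) Y := LieEquiv.ofBijective f e.bijective
    exact ⟨E⟩
  · intro h
    obtain ⟨e⟩ : Nonempty (LX (DP hpp) X ≃ₗ⁅Rn p n⁆ LX (DP hpp) Y) := h
    let f : LX (DP hpp) X →ₗ⁅(ZMod p)[X]⁆ LX (DP hpp) Y :=
      { toFun := e
        map_add' := fun x y => map_add e.toLinearEquiv x y
        map_smul' := fun r x => map_smul e.toLinearEquiv (Ideal.Quotient.mk _ r : Rn p n) x
        map_lie' := fun {x y} => e.toLieHom.map_lie x y }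
    exact codeRel_of_iso (DP hpp) (LieEquiv.ofBijective f e.bijective)

lemma lie_surj (q : GoodLie p n) : ∃ X, lieIsoRel p n (lieOf hpp X) q := by
  obtain ⟨⟨L, i1, i2⟩, hcard, hnil, hT⟩ := q
  letI : Module (ZMod p)[X] L := Module.compHom L (Ideal.Quotient.mk (Ideal.span {(Polynomial.X : (ZMod p)[X]) ^ n}))
  have hsm : ∀ (r : (ZMod p)[X]) (x : L), r • x = (Ideal.Quotient.mk _ r : Rn p n) • x := fun _ _ => rfl
  letI : LieAlgebra (ZMod p)[X] L := { lie_smul := fun r x y => by rw [hsm, hsm, lie_smul] }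
  obtain ⟨X, ⟨e⟩⟩ := exists_code (n := n) (DP hpp) hpp L hcard (fun x => by
      rw [hsm]
      have : (Ideal.Quotient.mk _ ((DP hpp).π ^ n) : Rn p n) = 0 :=
        Ideal.Quotient.eq_zero_iff_mem.2 (Ideal.mem_span_singleton_self _)
      rw [this]; exact zero_smul (Rn p n) x) ((nilE_iff L).1 hnil) (fun a b => hT a b)
  letI := LXP hpp X
  let f : LX (DP hpp) X →ₗ⁅Rn p n⁆ L :=
      { toFun := e
        map_add' := fun x y => map_add e.toLinearEquiv x y
        map_smul' := fun r x => by
          obtain ⟨r, rfl⟩ := Ideal.Quotient.mk_surjective r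
          exact map_smul e.toLinearEquiv r x
        map_lie' := fun {x y} => e.toLieHom.map_lie x y }
  let E : LX (DP hpp) X ≃ₗ⁅Rn p n⁆ L := LieEquiv.ofBijective f e.bijective
  exact ⟨X, ⟨E⟩⟩

lemma lie_equivalence : Equivalence (lieIsoRel p n) := by
  refine ⟨fun q => ?_, fun {q q'} h => ?_, fun {q q' q''} h h' => ?_⟩
  · letI := q.1.2.1; letI := q.1.2.2; exact ⟨LieEquiv.refl⟩
  · letI := q.1.2.1; letI := q.1.2.2; letI := q'.1.2.1; letI := q'.1.2.2
    obtain ⟨e⟩ := h; exact ⟨e.symm⟩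
  · letI := q.1.2.1; letI := q.1.2.2; letI := q'.1.2.1; letI := q'.1.2.2
    letI := q''.1.2.1; letI := q''.1.2.2
    obtain ⟨e⟩ := h; obtain ⟨e'⟩ := h'; exact ⟨e.trans e'⟩

include hpp in
lemma quot_lie : Nonempty (Quot (codeRel (p := p) (n := n)) ≃ Quot (lieIsoRel p n)) :=
  quot_equiv _ _ lie_equivalence (lieOf hpp) (lie_iff hpp) (lie_surj hpp)

end lie
end Laz

/-- For `p ≥ n`, there is a one-to-one correspondence between isomorphism classes of groups of
order `p ^ n` whose derived subgroup has exponent dividing `p`, and isomorphism classes of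
nilpotent `(ℤ/pℤ)[X]/(Xⁿ)`-Lie algebras with `p ^ n` elements satisfying `T • ⁅L, L⁆ = 0`. -/
theorem main_correspondence (p n : ℕ) (hp : p.Prime) (hn : 1 ≤ n) (hpn : n ≤ p) :
    Nonempty (Quot (groupIsoRel p n) ≃ Quot (lieIsoRel p n)) := by
  obtain ⟨e⟩ := Laz.quot_grp (n := n) hp hpn
  have : Fact p.Prime := ⟨hp⟩
  obtain ⟨e'⟩ := Laz.quot_lie (n := n) hp
  exact ⟨e.symm.trans e'⟩
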